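/- Let K be a number field that is Galois over ℚ and let I be a nonzero ideal of the ring of integers O_K. Then the ideal class of I in the ideal class group of K contains infinitely many ideals whose absolute norm is a prime number; that is, the set of nonzero ideals J of O_K such that J is in the same class as I and the absolute norm of J is prime is infinite. -/

import Mathlib

section P1sec
open MeasureTheory Module Set

section LatticeSum

set_option linter.unusedSectionVars false

variable {V : Type*} [NormedAddCommGroup V] [NormedSpace ℝ V] [FiniteDimensional ℝ V]
  {ι : Type*} [Fintype ι] (b : Basis ι ℝ V)

theorem PN_fd_convex : Convex ℝ (ZSpan.fundamentalDomain b) := by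
  intro x hx y hy p q hp hq hpq i
  have h1 := hx i
  have h2 := hy i
  simp only [map_add, map_smul, Finsupp.add_apply, Finsupp.smul_apply, smul_eq_mul]
  refine ⟨by have := h1.1; have := h2.1; positivity, ?_⟩
  rcases hp.eq_or_lt with h | h
  · subst h
    have : q = 1 := by linarith
    subst this
    simpa using h2.2
  · calc p * (b.repr x) i + q * (b.repr y) i < p * 1 + q * 1 := by
          have := h1.2
          have h3 : p * (b.repr x) i < p * 1 := by gcongr
          have h4 : q * (b.repr y) i ≤ q * 1 := by gcongr; exact h2.2.le
          linarith
      _ = 1 := by linarith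

/-- Only few lattice points contribute. -/
theorem PN_lattice_count (R : ℝ) (hR : 0 ≤ R) : ∃ c : ℝ, 0 < c ∧ ∀ t ∈ Ioc (0 : ℝ) 1,
    ∃ S : Finset (Submodule.span ℤ (Set.range b)), (S.card : ℝ) ≤ (c / t) ^ (finrank ℝ V) ∧
      ∀ x ∈ ZSpan.fundamentalDomain b, ∀ l ∉ S, R < ‖t • (x + (l : V))‖ := by
  classical
  obtain ⟨M, hM⟩ := (ZSpan.fundamentalDomain_isBounded b).exists_norm_le
  let B := b.restrictScalars ℤ
  have hd : finrank ℝ V = Fintype.card ι := finrank_eq_card_basis b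
  set c₀ := (ZLattice.normBound B)⁻¹ with hc₀
  have hc₀pos : 0 < c₀ := inv_pos.2 (ZLattice.normBound_pos B)
  have hM0 : 0 ≤ M := by
    have := hM 0 (fun i => by simp)
    exact (norm_nonneg _).trans this
  refine ⟨2 * (c₀ * (R + M)) + 3, by positivity, fun t ht => ?_⟩
  obtain ⟨ht0, ht1⟩ := ht
  set N : ℕ := ⌈c₀ * ((R + M) / t)⌉₊ with hN
  let S : Finset (Submodule.span ℤ (Set.range b)) :=
    (Fintype.piFinset fun _ : ι => Finset.Icc (-N : ℤ) N).map B.equivFun.symm.toEquiv.toEmbedding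
  refine ⟨S, ?_, ?_⟩
  · rw [Finset.card_map, Fintype.card_piFinset, hd]
    simp only [Int.card_Icc, Finset.prod_const, Finset.card_univ]
    push_cast
    have h1 : ((N : ℤ) + 1 - -N).toNat = 2 * N + 1 := by omega
    rw [h1]
    push_cast
    gcongr
    have h2 : (N : ℝ) ≤ c₀ * ((R + M) / t) + 1 := (Nat.ceil_lt_add_one (by positivity)).le
    have h3 : 1 ≤ 1 / t := by rw [le_div_iff₀ ht0]; linarith
    calc 2 * (N : ℝ) + 1 ≤ 2 * (c₀ * ((R + M) / t)) + 3 * 1 := by linarith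
      _ ≤ 2 * (c₀ * ((R + M) / t)) + 3 * (1 / t) := by gcongr
      _ = _ := by field_simp
  · intro x hx l hl
    by_contra! hcon
    apply hl
    rw [Finset.mem_map]
    refine ⟨B.equivFun l, ?_, by simp⟩
    rw [Fintype.mem_piFinset]
    intro i
    rw [Finset.mem_Icc, ← abs_le]
    have h1 : ‖(l : V)‖ ≤ (R + M) / t := by
      rw [norm_smul, Real.norm_of_nonneg ht0.le] at hcon
      have h2 : ‖x + (l : V)‖ ≤ R / t := by rw [le_div_iff₀ ht0]; linarith
      have h3 : ‖(l : V)‖ ≤ ‖x + (l : V)‖ + ‖x‖ := by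
        have := norm_sub_le (x + (l : V)) x
        simpa using this
      have h4 : M ≤ M / t := by rw [le_div_iff₀ ht0]; nlinarith
      calc ‖(l : V)‖ ≤ R / t + M / t := by linarith [hM x hx]
        _ = _ := by ring
    have h2 := ZLattice.abs_repr_le B l i
    have h3 : ((|B.repr l i| : ℤ) : ℝ) ≤ (N : ℝ) := by
      refine h2.trans ((mul_le_mul_of_nonneg_left h1 hc₀pos.le).trans (Nat.le_ceil _))
    exact_mod_cast h3

variable [MeasurableSpace V] [BorelSpace V] (μ : Measure V) [μ.IsAddHaarMeasure]

theorem PN_integral_fderiv_zero (H : V → ℝ) (hH : ContDiff ℝ (⊤ : ℕ∞) H) (hc : HasCompactSupport H)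
    (v : V) : ∫ x, fderiv ℝ H x v ∂μ = 0 := by
  have hcont : Continuous (fun x => fderiv ℝ H x v) :=
    (hH.continuous_fderiv (by simp)).clm_apply continuous_const
  have := integral_bilinear_fderiv_right_eq_neg_left_of_integrable (μ := μ)
    (f := fun _ : V => (1 : ℝ)) (g := H) (v := v) (B := ContinuousLinearMap.mul ℝ ℝ)
    (by simp) (by
      simp
      exact hcont.integrable_of_hasCompactSupport (hc.fderiv_apply ℝ v))
    (by simpa using hH.continuous.integrable_of_hasCompactSupport hc)
    (by fun_prop) (fun x _ => hH.differentiable (by simp) x)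
  simpa using this

theorem PN_lattice_sum (k : ℕ) : ∀ (H : V → ℝ), ContDiff ℝ (⊤ : ℕ∞) H → HasCompactSupport H →
    ∃ C : ℝ, 0 ≤ C ∧ ∀ t ∈ Ioc (0 : ℝ) 1, ∀ x ∈ ZSpan.fundamentalDomain b,
      |μ.real (ZSpan.fundamentalDomain b) * (t ^ (finrank ℝ V) *
        ∑' l : Submodule.span ℤ (Set.range b), H (t • (x + (l : V)))) - ∫ x, H x ∂μ| ≤ C * t ^ k := by
  classical
  set D := ZSpan.fundamentalDomain b with hD
  set d := finrank ℝ V with hd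
  have hDb : Bornology.IsBounded D := ZSpan.fundamentalDomain_isBounded b
  have hDfin : μ D < ⊤ := hDb.measure_lt_top
  have hDpos : 0 < μ.real D := by
    rw [measureReal_def]
    exact ENNReal.toReal_pos (ZSpan.measure_fundamentalDomain_ne_zero b) hDfin.ne
  induction k with
  | zero =>
    intro H hH hc
    obtain ⟨R, hR⟩ := hc.isCompact.isBounded.exists_norm_le
    obtain ⟨c, hc0, hcS⟩ := PN_lattice_count b (max R 0) (le_max_right _ _)
    obtain ⟨A, hA⟩ := hH.continuous.bounded_above_of_compact_support hc
    have hA0 : 0 ≤ A := (norm_nonneg _).trans (hA 0)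
    refine ⟨μ.real D * (c ^ d * A) + |∫ x, H x ∂μ|, by positivity, fun t ht x hx => ?_⟩
    obtain ⟨S, hS1, hS2⟩ := hcS t ht
    have hz : ∀ l ∉ S, H (t • (x + (l : V))) = 0 := by
      intro l hl
      have h1 := hS2 x hx l hl
      by_contra hne
      have := hR _ (subset_tsupport H hne)
      exact absurd (h1.trans_le this) (not_lt.2 (le_max_left _ _))
    rw [tsum_eq_sum hz]
    have h1 : |∑ l ∈ S, H (t • (x + (l : V)))| ≤ (c / t) ^ d * A := by
      calc _ ≤ ∑ l ∈ S, |H (t • (x + (l : V)))| := Finset.abs_sum_le_sum_abs _ _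
        _ ≤ ∑ l ∈ S, A := Finset.sum_le_sum fun l _ => hA _
        _ = S.card * A := by simp
        _ ≤ _ := by gcongr
    have ht0 := ht.1
    calc _ ≤ |μ.real D * (t ^ d * ∑ l ∈ S, H (t • (x + (l : V))))| + |∫ x, H x ∂μ| := abs_sub _ _
      _ = μ.real D * (t ^ d * |∑ l ∈ S, H (t • (x + (l : V)))|) + |∫ x, H x ∂μ| := by
          rw [abs_mul, abs_mul, abs_of_pos hDpos, abs_of_pos (by positivity : 0 < t ^ d)]
      _ ≤ μ.real D * (t ^ d * ((c / t) ^ d * A)) + |∫ x, H x ∂μ| := by gcongr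
      _ = _ := by
          rw [div_pow]
          field_simp
  | succ k ih =>
    intro H hH hc
    obtain ⟨R, hR⟩ := hc.isCompact.isBounded.exists_norm_le
    obtain ⟨c, hc0, hcS⟩ := PN_lattice_count b (max R 0) (le_max_right _ _)
    obtain ⟨A, hA0, hA⟩ := b.exists_opNorm_le (F := ℝ)
    obtain ⟨M, hM⟩ := hDb.exists_norm_le
    have hM0 : 0 ≤ M := by
      have := hM 0 (fun i => by simp)
      exact (norm_nonneg _).trans this
    have hder : ∀ i, ContDiff ℝ (⊤ : ℕ∞) (fun x => fderiv ℝ H x (b i)) := fun i =>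
      (hH.fderiv_right (m := ((⊤ : ℕ∞) : WithTop ℕ∞)) (by simp)).clm_apply contDiff_const
    have ih' := fun i => ih _ (hder i) (hc.fderiv_apply ℝ (b i))
    choose C hC0 hC using ih'
    set C' := ∑ i, C i with hC'
    have hC'0 : 0 ≤ C' := Finset.sum_nonneg fun i _ => hC0 i
    refine ⟨A * C' * (2 * M), by positivity, fun t ht x hx => ?_⟩
    obtain ⟨S, hS1, hS2⟩ := hcS t ht
    have ht0 := ht.1
    have hz0 : ∀ x ∈ D, ∀ l ∉ S, t • (x + (l : V)) ∉ tsupport H := by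
      intro x hx l hl hmem
      have h1 := hS2 x hx l hl
      have := hR _ hmem
      exact absurd (h1.trans_le this) (not_lt.2 (le_max_left _ _))
    have hz : ∀ x ∈ D, ∀ l ∉ S, H (t • (x + (l : V))) = 0 := fun x hx l hl =>
      image_eq_zero_of_notMem_tsupport (hz0 x hx l hl)
    have hz' : ∀ i, ∀ x ∈ D, ∀ l ∉ S, fderiv ℝ H (t • (x + (l : V))) (b i) = 0 := by
      intro i x hx l hl
      have : fderiv ℝ H (t • (x + (l : V))) = 0 := by
        by_contra hne
        exact hz0 x hx l hl (support_fderiv_subset ℝ hne)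
      rw [this, ContinuousLinearMap.zero_apply]
    set q : V → ℝ := fun y => μ.real D * (t ^ d * ∑ l ∈ S, H (t • (y + (l : V)))) with hq
    have hqx : ∀ y ∈ D, μ.real D * (t ^ d *
        ∑' l : Submodule.span ℤ (Set.range b), H (t • (y + (l : V)))) = q y := by
      intro y hy
      rw [tsum_eq_sum (hz y hy)]
    rw [hqx x hx]
    -- derivative of q
    have hqd : ∀ y, HasFDerivAt q (μ.real D • (t ^ d • ∑ l ∈ S, t • fderiv ℝ H (t • (y + (l : V))))) y := by
      intro y
      refine HasFDerivAt.const_mul (HasFDerivAt.const_mul (HasFDerivAt.fun_sum fun l _ => ?_) _) _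
      have h1 : HasFDerivAt H (fderiv ℝ H (t • (y + (l : V)))) (t • (y + (l : V))) :=
        (hH.differentiable (by simp) _).hasFDerivAt
      have h2 : HasFDerivAt (fun y : V => t • (y + (l : V))) (t • ContinuousLinearMap.id ℝ V) y :=
        ((hasFDerivAt_id y).add_const _).const_smul t
      have h3 := h1.comp y h2
      rw [ContinuousLinearMap.comp_smul, ContinuousLinearMap.comp_id] at h3
      exact h3
    have hbound : ∀ y ∈ D, ‖(μ.real D • (t ^ d • ∑ l ∈ S, t • fderiv ℝ H (t • (y + (l : V)))))‖
        ≤ A * (C' * t ^ (k + 1)) := by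
      intro y hy
      refine hA (by positivity) fun i => ?_
      have h1 := hC i t ht y hy
      rw [PN_integral_fderiv_zero μ H hH hc, sub_zero, tsum_eq_sum (hz' i y hy)] at h1
      have h2 : (μ.real D • (t ^ d • ∑ l ∈ S, t • fderiv ℝ H (t • (y + (l : V))))) (b i)
          = t * (μ.real D * (t ^ d * ∑ l ∈ S, fderiv ℝ H (t • (y + (l : V))) (b i))) := by
        simp only [ContinuousLinearMap.smul_apply, ContinuousLinearMap.sum_apply, smul_eq_mul,
          ← Finset.mul_sum]
        ring
      rw [h2, norm_mul, Real.norm_of_nonneg ht0.le, Real.norm_eq_abs]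
      calc _ ≤ t * (C i * t ^ k) := by gcongr
        _ ≤ t * (C' * t ^ k) := by
            gcongr
            exact Finset.single_le_sum (fun i _ => hC0 i) (Finset.mem_univ i)
        _ = _ := by ring
    have hlip : ∀ y ∈ D, ‖q x - q y‖ ≤ A * C' * (2 * M) * t ^ (k + 1) := by
      intro y hy
      have h1 := (PN_fd_convex b).norm_image_sub_le_of_norm_hasFDerivWithin_le
        (fun z _ => (hqd z).hasFDerivWithinAt) hbound hy hx
      have h2 : ‖x - y‖ ≤ 2 * M := by linarith [norm_sub_le x y, hM x hx, hM y hy]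
      calc _ ≤ _ := h1
        _ ≤ A * (C' * t ^ (k + 1)) * (2 * M) := by gcongr
        _ = _ := by ring
    have hmean : ∫ y in D, q y ∂μ = μ.real D * ∫ y, H y ∂μ := by
      have hIntg : Integrable (fun y => H (t • y)) μ := by
        exact (hH.continuous.integrable_of_hasCompactSupport hc).comp_smul ht0.ne'
      haveI : Countable (Submodule.span ℤ (Set.range b)).toAddSubgroup :=
        inferInstanceAs (Countable (Submodule.span ℤ (Set.range b)))
      have h1 := (ZSpan.isAddFundamentalDomain' b μ).integral_eq_tsum'' _ hIntg
      have h2 : ∑' l : Submodule.span ℤ (Set.range b), ∫ y in D, H (t • (l +ᵥ y)) ∂μ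
          = ∑ l ∈ S, ∫ y in D, H (t • (y + (l : V))) ∂μ := by
        rw [tsum_eq_sum (s := S)]
        · refine Finset.sum_congr rfl fun l _ => ?_
          simp_rw [Submodule.vadd_def, vadd_eq_add, add_comm]
        · intro l hl
          rw [setIntegral_congr_fun (g := fun _ => (0 : ℝ)) (ZSpan.fundamentalDomain_measurableSet b)]
          · simp
          · intro y hy
            simp only [Submodule.vadd_def, vadd_eq_add]
            rw [add_comm]
            exact hz y hy l hl
      have h1' : ∫ y, H (t • y) ∂μ = ∑' l : Submodule.span ℤ (Set.range b),
          ∫ y in D, H (t • (l +ᵥ y)) ∂μ := h1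
      rw [h2, Measure.integral_comp_smul_of_nonneg μ _ _ (hR := ht0.le)] at h1'
      simp only [hq]
      rw [integral_const_mul, integral_const_mul, integral_finset_sum, ← h1', smul_eq_mul, ← hd]
      · field_simp
      · intro l _
        have : Continuous fun y => H (t • (y + (l : V))) := by
          have := hH.continuous
          fun_prop
        have h5 : IntegrableOn (fun y => H (t • (y + (l : V)))) (closure D) μ :=
          this.continuousOn.integrableOn_compact hDb.isCompact_closure
        exact h5.mono_set subset_closure
    have hIntg : IntegrableOn q D μ := by
      have : Continuous q := by
        have h3 : Differentiable ℝ q := fun y => (hqd y).differentiableAt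
        exact h3.continuous
      exact (this.continuousOn.integrableOn_compact hDb.isCompact_closure).mono_set subset_closure
    have hfin : μ.real D * (q x - ∫ y, H y ∂μ) = ∫ y in D, (q x - q y) ∂μ := by
      have hcst : IntegrableOn (fun _ : V => q x) D μ := integrableOn_const hDfin.ne (by simp)
      rw [integral_sub hcst hIntg, hmean, setIntegral_const, smul_eq_mul, mul_sub]
    have hle := norm_setIntegral_le_of_norm_le_const hDfin hlip
    rw [← hfin, norm_mul, Real.norm_of_nonneg hDpos.le, mul_comm] at hle
    rw [← Real.norm_eq_abs]
    exact le_of_mul_le_mul_right hle hDpos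

end LatticeSum

end P1sec

section P2sec
open MeasureTheory Module Set

section Rho

noncomputable def PN_rho (x : ℝ) : ℝ := Real.smoothTransition (x + 1) - Real.smoothTransition x

theorem PN_rho_nonneg (x : ℝ) : 0 ≤ PN_rho x :=
  sub_nonneg.2 (Real.smoothTransition.monotone (by linarith))

theorem PN_rho_zero : PN_rho 0 = 1 := by
  unfold PN_rho
  rw [Real.smoothTransition.one_of_one_le (by norm_num), Real.smoothTransition.zero_of_nonpos le_rfl]
  norm_num

theorem PN_rho_contDiff : ContDiff ℝ (⊤ : ℕ∞) PN_rho := by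
  unfold PN_rho
  have h : ContDiff ℝ (⊤ : ℕ∞) Real.smoothTransition := Real.smoothTransition.contDiff
  exact (h.comp (contDiff_id.add contDiff_const)).sub h

theorem PN_rho_eq_zero {x : ℝ} (hx : 1 ≤ |x|) : PN_rho x = 0 := by
  unfold PN_rho
  rcases le_abs.1 hx with h | h
  · rw [Real.smoothTransition.one_of_one_le h, Real.smoothTransition.one_of_one_le (by linarith)]
    norm_num
  · rw [Real.smoothTransition.zero_of_nonpos (by linarith),
      Real.smoothTransition.zero_of_nonpos (by linarith)]
    norm_num

theorem PN_rho_sum (a : ℝ) :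
    (∀ m : ℤ, m ∉ ({-⌊a⌋, -⌊a⌋ - 1} : Finset ℤ) → PN_rho (a + m) = 0) ∧
    ∑ m ∈ ({-⌊a⌋, -⌊a⌋ - 1} : Finset ℤ), PN_rho (a + m) = 1 := by
  have h1 := Int.floor_le a
  have h2 := Int.lt_floor_add_one a
  constructor
  · intro m hm
    simp only [Finset.mem_insert, Finset.mem_singleton, not_or] at hm
    apply PN_rho_eq_zero
    rcases lt_or_gt_of_ne hm.1 with h | h
    · have : m ≤ -⌊a⌋ - 2 := by omega
      have : (m : ℝ) ≤ -⌊a⌋ - 2 := by exact_mod_cast this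
      rw [le_abs]; right; linarith
    · have : -⌊a⌋ + 1 ≤ m := by omega
      have : -(⌊a⌋ : ℝ) + 1 ≤ m := by exact_mod_cast this
      rw [le_abs]; left; linarith
  · rw [Finset.sum_pair (by omega)]
    unfold PN_rho
    push_cast
    rw [Real.smoothTransition.one_of_one_le (show 1 ≤ a + -(⌊a⌋ : ℝ) + 1 by linarith),
      Real.smoothTransition.zero_of_nonpos (show a + (-(⌊a⌋ : ℝ) - 1) ≤ 0 by linarith),
      show a + (-(⌊a⌋ : ℝ) - 1) + 1 = a + -⌊a⌋ by ring]
    ring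

end Rho

section TestFun

open NumberField NumberField.mixedEmbedding NumberField.Units NumberField.Units.dirichletUnitTheorem
open scoped Classical
noncomputable def PN_F (K : Type*) [Field K] [NumberField K] (g : ℝ → ℝ) (x : mixedSpace K) : ℝ :=
  g (mixedEmbedding.norm x) *
    ∏ i, PN_rho (((basisUnitLattice K).ofZLatticeBasis ℝ _).repr (logMap x) i)

variable {K : Type*} [Field K] [NumberField K] {g : ℝ → ℝ} {B : ℝ}

theorem PN_F_nonneg (gnn : ∀ v, 0 ≤ g v) (x : mixedSpace K) : 0 ≤ PN_F K g x :=
  mul_nonneg (gnn _) (Finset.prod_nonneg fun _ _ => PN_rho_nonneg _)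

theorem PN_normAtPlace_contDiffAt (w : InfinitePlace K) (x : mixedSpace K)
    (hx : normAtPlace w x ≠ 0) : ContDiffAt ℝ (⊤ : ℕ∞) (fun y => normAtPlace w y) x := by
  rcases w.isReal_or_isComplex with hw | hw
  · simp only [normAtPlace_apply_of_isReal hw] at hx ⊢
    have : ContDiffAt ℝ (⊤ : ℕ∞) (fun y : mixedSpace K => y.1 ⟨w, hw⟩) x := by
      fun_prop
    exact this.norm ℝ (norm_ne_zero_iff.1 hx)
  · simp only [normAtPlace_apply_of_isComplex hw] at hx ⊢
    have : ContDiffAt ℝ (⊤ : ℕ∞) (fun y : mixedSpace K => y.2 ⟨w, hw⟩) x := by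
      fun_prop
    exact this.norm ℝ (norm_ne_zero_iff.1 hx)

theorem PN_F_contDiff (hg : ContDiff ℝ (⊤ : ℕ∞) g) (g0 : ∀ v ≤ 1 / 4, g v = 0) :
    ContDiff ℝ (⊤ : ℕ∞) (PN_F K g) := by
  rw [contDiff_iff_contDiffAt]
  intro x
  by_cases hx : mixedEmbedding.norm x = 0
  · have : PN_F K g =ᶠ[nhds x] fun _ => 0 := by
      have := (mixedEmbedding.continuous_norm K).continuousAt (x := x)
      have h2 := this.eventually (gt_mem_nhds (show mixedEmbedding.norm x < 1 / 4 by rw [hx]; norm_num))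
      filter_upwards [h2] with y hy
      rw [PN_F, g0 _ hy.le, zero_mul]
    exact contDiffAt_const.congr_of_eventuallyEq this
  · have hw := mixedEmbedding.norm_ne_zero_iff.1 hx
    have hN : ContDiffAt ℝ (⊤ : ℕ∞) (fun y : mixedSpace K => mixedEmbedding.norm y) x := by
      simp only [mixedEmbedding.norm_apply]
      exact contDiffAt_prod fun w _ => (PN_normAtPlace_contDiffAt w x (hw w)).pow _
    have hl : ContDiffAt ℝ (⊤ : ℕ∞) (fun y : mixedSpace K => logMap y) x := by
      rw [contDiffAt_pi]
      intro w
      simp only [logMap_apply]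
      exact contDiffAt_const.mul (((PN_normAtPlace_contDiffAt w.1 x (hw w)).log (hw w)).sub
        ((hN.log hx).mul contDiffAt_const))
    unfold PN_F
    refine (hg.contDiffAt.comp x hN).mul (contDiffAt_prod fun i _ => ?_)
    refine PN_rho_contDiff.contDiffAt.comp x ?_
    have hL := (LinearMap.toContinuousLinearMap
      ((((basisUnitLattice K).ofZLatticeBasis ℝ _).coord i))).contDiff (n := (⊤ : ℕ∞))
    exact hL.contDiffAt.comp x hl

set_option maxHeartbeats 1000000 in
theorem PN_F_compact (g0 : ∀ v ≤ 1 / 4, g v = 0) (gB : ∀ v, B ≤ v → g v = 0) :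
    HasCompactSupport (PN_F K g) := by
  set b := (basisUnitLattice K).ofZLatticeBasis ℝ _ with hb
  set R := ∑ i, ‖b i‖ with hR
  set n : ℝ := (finrank ℚ K : ℝ)⁻¹
  have hn : 0 ≤ n := by positivity
  set Q := |Real.log (1/4)| + |Real.log B| with hQ
  set T := R + Q * n with hT
  set U := Q + (∑ w : InfinitePlace K, (w.mult : ℝ)) * T with hU
  have hT0 : 0 ≤ T := by positivity
  have hsum0 : 0 ≤ ∑ w : InfinitePlace K, (w.mult : ℝ) := by positivity
  apply HasCompactSupport.of_support_subset_isCompact (isCompact_closedBall 0 (Real.exp (T + U)))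
  intro x hx
  rw [Function.mem_support] at hx
  have hx1 : g (mixedEmbedding.norm x) ≠ 0 := left_ne_zero_of_mul hx
  have hx2 := right_ne_zero_of_mul hx
  rw [Finset.prod_ne_zero_iff] at hx2
  have hN1 : 1 / 4 < mixedEmbedding.norm x := by
    by_contra h
    exact hx1 (g0 _ (not_lt.1 h))
  have hN2 : mixedEmbedding.norm x < B := by
    by_contra h
    exact hx1 (gB _ (not_lt.1 h))
  have hN0 : mixedEmbedding.norm x ≠ 0 := by linarith
  have hw := mixedEmbedding.norm_ne_zero_iff.1 hN0
  have hlogN : |Real.log (mixedEmbedding.norm x)| ≤ Q := by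
    have h1 := Real.log_le_log (by norm_num) hN1.le
    have h2 := Real.log_le_log (by linarith) hN2.le
    rw [abs_le]
    constructor
    · have := neg_abs_le (Real.log (1/4)); have := abs_nonneg (Real.log B); linarith
    · have := le_abs_self (Real.log B); have := abs_nonneg (Real.log (1/4)); linarith
  have hlm : ‖logMap x‖ ≤ R := by
    rw [← b.sum_repr (logMap x)]
    refine (norm_sum_le _ _).trans (Finset.sum_le_sum fun i _ => ?_)
    rw [_root_.norm_smul]
    have : ‖b.repr (logMap x) i‖ ≤ 1 := by
      by_contra h
      exact hx2 i (Finset.mem_univ _) (PN_rho_eq_zero (not_le.1 h).le)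
    nlinarith [norm_nonneg (b i)]
  have hw1 : ∀ w : InfinitePlace K, w ≠ w₀ → |Real.log (normAtPlace w x)| ≤ T := by
    intro w hww
    have h1 : ‖logMap x ⟨w, hww⟩‖ ≤ R := (norm_le_pi_norm (logMap x) ⟨w, hww⟩).trans hlm
    rw [logMap_apply, norm_mul, Real.norm_eq_abs, Real.norm_eq_abs] at h1
    have hm : (1 : ℝ) ≤ |(w.mult : ℝ)| := by
      rw [abs_of_nonneg (by positivity)]
      exact_mod_cast w.one_le_mult
    have h2 : |Real.log (normAtPlace w x) - Real.log (mixedEmbedding.norm x) * n| ≤ R :=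
      le_trans (le_mul_of_one_le_left (abs_nonneg _) hm) h1
    have h3 : |Real.log (mixedEmbedding.norm x) * n| ≤ Q * n := by
      rw [abs_mul, abs_of_nonneg hn]
      exact mul_le_mul_of_nonneg_right hlogN hn
    calc _ = |(Real.log (normAtPlace w x) - Real.log (mixedEmbedding.norm x) * n) + Real.log (mixedEmbedding.norm x) * n| := by ring_nf
      _ ≤ _ := (abs_add_le _ _).trans (add_le_add h2 h3)
  have hprod : Real.log (mixedEmbedding.norm x) = ∑ w : InfinitePlace K, (w.mult : ℝ) * Real.log (normAtPlace w x) := by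
    rw [mixedEmbedding.norm_apply, Real.log_prod (fun w _ => pow_ne_zero _ (hw w))]
    simp [Real.log_pow]
  have hw0 : Real.log (normAtPlace (w₀ : InfinitePlace K) x) ≤ U := by
    rw [← Finset.add_sum_erase _ _ (Finset.mem_univ (w₀ : InfinitePlace K))] at hprod
    have h4 : -∑ w ∈ Finset.univ.erase (w₀ : InfinitePlace K), (w.mult : ℝ) * Real.log (normAtPlace w x) ≤ (∑ w : InfinitePlace K, (w.mult : ℝ)) * T := by
      rw [← Finset.sum_neg_distrib, Finset.sum_mul]
      refine (Finset.sum_le_sum (g := fun w : InfinitePlace K => (w.mult : ℝ) * T) fun w hwe => ?_).trans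
        (Finset.sum_le_sum_of_subset_of_nonneg (Finset.subset_univ _) (fun w _ _ => by positivity))
      have := (abs_le.1 (hw1 w (Finset.ne_of_mem_erase hwe))).1
      have hm : (0 : ℝ) ≤ w.mult := by positivity
      nlinarith
    have h5 := (abs_le.1 hlogN).2
    have h6 : (InfinitePlace.mult (w₀ : InfinitePlace K) : ℝ) * Real.log (normAtPlace (w₀ : InfinitePlace K) x) ≤ U := by
      linarith
    have hm : (1 : ℝ) ≤ (InfinitePlace.mult (w₀ : InfinitePlace K) : ℝ) := by
      exact_mod_cast InfinitePlace.one_le_mult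
    by_cases hneg : Real.log (normAtPlace (w₀ : InfinitePlace K) x) ≤ 0
    · have : 0 ≤ U := by positivity
      linarith
    · nlinarith
  rw [mem_closedBall_zero_iff, norm_eq_sup'_normAtPlace]
  refine Finset.sup'_le _ _ fun w _ => ?_
  have hpos : 0 < normAtPlace w x := lt_of_le_of_ne (normAtPlace_nonneg _ _) (hw w).symm
  rw [← Real.log_le_iff_le_exp hpos]
  have hU0 : 0 ≤ U := by positivity
  by_cases hww : w = w₀
  · rw [hww]; linarith
  · have := (abs_le.1 (hw1 w hww)).2
    linarith

theorem PN_F_unit_sum {x : mixedSpace K} (hx : mixedEmbedding.norm x ≠ 0) :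
    HasSum (fun u : (𝓞 K)ˣ => PN_F K g (u • x)) (torsionOrder K * g (mixedEmbedding.norm x)) := by
  set b := (basisUnitLattice K).ofZLatticeBasis ℝ _ with hb
  let f : torsion K × (Fin (rank K) → ℤ) → (𝓞 K)ˣ :=
    fun p => p.1 * ∏ i, (fundSystem K i) ^ (p.2 i)
  have hf : Function.Bijective f := by
    rw [Function.bijective_iff_existsUnique]
    intro y
    obtain ⟨p, hp, hp2⟩ := exist_unique_eq_mul_prod K y
    exact ⟨p, hp.symm, fun q hq => hp2 q hq.symm⟩
  let e := Equiv.ofBijective f hf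
  rw [← e.hasSum_iff]
  have hval : ∀ p, (fun u : (𝓞 K)ˣ => PN_F K g (u • x)) (e p) =
      g (mixedEmbedding.norm x) * ∏ i, PN_rho (b.repr (logMap x) i + p.2 i) := by
    intro p
    simp only [PN_F, norm_unit_smul, logMap_unit_smul _ hx]
    congr 1
    refine Finset.prod_congr rfl fun i _ => ?_
    congr 1
    have : logEmbedding K (Additive.ofMul (e p)) = ∑ i, (p.2 i : ℝ) • b i := by
      have h1 : e p = p.1 * ∏ i, (fundSystem K i) ^ (p.2 i) := rfl
      rw [h1, ofMul_mul, map_add, (logEmbedding_eq_zero_iff).2 p.1.2, zero_add, ofMul_prod, map_sum]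
      refine Finset.sum_congr rfl fun i _ => ?_
      rw [ofMul_zpow, map_zsmul, logEmbedding_fundSystem, hb, Basis.ofZLatticeBasis_apply]
      rw [Int.cast_smul_eq_zsmul]
    rw [this, map_add, Finsupp.add_apply, ← hb, b.repr_sum_self, add_comm]
  rw [show ((fun u : (𝓞 K)ˣ => PN_F K g (u • x)) ∘ e) = fun p => g (mixedEmbedding.norm x) * ∏ i, PN_rho (b.repr (logMap x) i + p.2 i) from funext hval]
  set a := fun i => b.repr (logMap x) i
  haveI : Fintype (torsion K) := Fintype.ofFinite _
  let s : Fin (rank K) → Finset ℤ := fun i => {-⌊a i⌋, -⌊a i⌋ - 1}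
  have h1 : HasSum (fun p : torsion K × (Fin (rank K) → ℤ) => g (mixedEmbedding.norm x) * ∏ i, PN_rho (a i + p.2 i))
      (∑ p ∈ (Finset.univ : Finset (torsion K)) ×ˢ Fintype.piFinset s, g (mixedEmbedding.norm x) * ∏ i, PN_rho (a i + p.2 i)) := by
    apply hasSum_sum_of_ne_finset_zero
    intro p hp
    simp only [Finset.mem_product, Finset.mem_univ, true_and, Fintype.mem_piFinset, not_forall] at hp
    obtain ⟨i, hi⟩ := hp
    rw [Finset.prod_eq_zero (Finset.mem_univ i) ((PN_rho_sum (a i)).1 _ hi), mul_zero]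
  convert h1 using 1
  rw [Finset.sum_product]
  simp only [← Finset.mul_sum, Finset.sum_const]
  rw [← Finset.prod_univ_sum s (fun i m => PN_rho (a i + (m : ℤ)))]
  simp only [s, (PN_rho_sum _).2, Finset.prod_const_one, mul_one, nsmul_eq_mul]
  rw [torsionOrder, Finset.card_univ, Nat.card_eq_fintype_card, mul_comm]

theorem PN_F_integral_pos (hg : ContDiff ℝ (⊤ : ℕ∞) g) (g0 : ∀ v ≤ 1 / 4, g v = 0)
    (gB : ∀ v, B ≤ v → g v = 0) (gnn : ∀ v, 0 ≤ g v) (g1 : g 1 ≠ 0)  :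
    0 < ∫ x, PN_F K g x := by
  apply Continuous.integral_pos_of_hasCompactSupport_nonneg_nonzero
    (PN_F_contDiff hg g0).continuous (PN_F_compact g0 gB) (PN_F_nonneg gnn) (x := 1)
  simp [PN_F, PN_rho_zero, g1]

end TestFun

end P2sec

section P3sec
section ClassCount

open MeasureTheory Module Set
open NumberField NumberField.mixedEmbedding NumberField.Units NumberField.Units.dirichletUnitTheorem
open scoped Classical nonZeroDivisors

variable {K : Type*} [Field K] [NumberField K]

theorem PN_gen (b : (Ideal (𝓞 K))⁰) (J : {J : (Ideal (𝓞 K))⁰ // ClassGroup.mk0 J = (ClassGroup.mk0 b)⁻¹}) :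
    ∃ a : 𝓞 K, Ideal.span {a} = (J.1 : Ideal (𝓞 K)) * b := by
  have h : ClassGroup.mk0 (J.1 * b) = 1 := by rw [map_mul, J.2, inv_mul_cancel]
  have h2 := (ClassGroup.mk0_eq_one_iff (J.1 * b).2).1 h
  obtain ⟨a, ha⟩ := h2
  exact ⟨a, by simpa using ha.symm⟩

theorem PN_equiv (b : (Ideal (𝓞 K))⁰) :
    ∃ α : {J : (Ideal (𝓞 K))⁰ // ClassGroup.mk0 J = (ClassGroup.mk0 b)⁻¹} → 𝓞 K,
    (∀ J, Ideal.span {α J} = (J.1 : Ideal (𝓞 K)) * b) ∧ (∀ J, α J ≠ 0) ∧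
    (Function.Injective (fun p : {J : (Ideal (𝓞 K))⁰ // ClassGroup.mk0 J = (ClassGroup.mk0 b)⁻¹} × (𝓞 K)ˣ =>
      (p.2 : 𝓞 K) * α p.1)) ∧
    (∀ a ∈ (b : Ideal (𝓞 K)), a ≠ 0 → ∃ p : {J : (Ideal (𝓞 K))⁰ // ClassGroup.mk0 J = (ClassGroup.mk0 b)⁻¹} × (𝓞 K)ˣ,
      (p.2 : 𝓞 K) * α p.1 = a) := by
  choose α hα using PN_gen b
  have hb0 : (b : Ideal (𝓞 K)) ≠ 0 := nonZeroDivisors.coe_ne_zero b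
  have h0 : ∀ J, α J ≠ 0 := by
    intro J h
    have := hα J
    rw [h, Ideal.span_singleton_eq_bot.2 rfl] at this
    exact mul_ne_zero (nonZeroDivisors.coe_ne_zero J.1) hb0 this.symm
  refine ⟨α, hα, h0, ?_, ?_⟩
  · rintro ⟨J, u⟩ ⟨J', u'⟩ h
    simp only at h
    have hs : Ideal.span {α J} = Ideal.span {α J'} := by
      rw [Ideal.span_singleton_eq_span_singleton]
      refine ⟨u * u'⁻¹, ?_⟩
      rw [Units.val_mul, ← mul_assoc, mul_comm (α J), h, mul_comm, ← mul_assoc, Units.inv_mul, one_mul]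
    rw [hα, hα] at hs
    have hJ : J = J' := Subtype.ext (Subtype.ext (mul_right_cancel₀ hb0 hs))
    subst hJ
    have := mul_right_cancel₀ (h0 J) h
    rw [Units.ext this]
  · intro a ha ha0
    obtain ⟨J, hJ⟩ := Ideal.dvd_span_singleton.2 ha
    have hs0 : Ideal.span {a} ≠ 0 := by
      rwa [Ne, Submodule.zero_eq_bot, Ideal.span_singleton_eq_bot]
    have hJ0 : J ≠ 0 := by
      rintro rfl
      rw [mul_zero] at hJ
      exact hs0 hJ
    let J' : (Ideal (𝓞 K))⁰ := ⟨J, mem_nonZeroDivisors_of_ne_zero hJ0⟩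
    have hc : ClassGroup.mk0 J' = (ClassGroup.mk0 b)⁻¹ := by
      rw [eq_inv_iff_mul_eq_one, ← map_mul]
      have : J' * b = ⟨Ideal.span {a}, mem_nonZeroDivisors_of_ne_zero hs0⟩ := by
        apply Subtype.ext
        simp [J', hJ, mul_comm]
      rw [this, ClassGroup.mk0_eq_one_iff]
      exact ⟨a, rfl⟩
    have h1 : Ideal.span {α ⟨J', hc⟩} = Ideal.span {a} := by
      rw [hα, hJ, mul_comm]
    rw [Ideal.span_singleton_eq_span_singleton] at h1
    obtain ⟨u, hu⟩ := h1
    exact ⟨(⟨J', hc⟩, u), by rw [← hu, mul_comm]⟩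

theorem PN_mem_lattice (b : (Ideal (𝓞 K))⁰) (x : mixedSpace K) :
    x ∈ Submodule.span ℤ (Set.range (fractionalIdealLatticeBasis K (FractionalIdeal.mk0 K b))) ↔
      ∃ a ∈ (b : Ideal (𝓞 K)), mixedEmbedding K (a : K) = x := by
  rw [mem_span_fractionalIdealLatticeBasis]
  constructor
  · rintro ⟨y, hy, rfl⟩
    rw [FractionalIdeal.coe_mk0, SetLike.mem_coe, FractionalIdeal.mem_coeIdeal] at hy
    obtain ⟨a, ha, rfl⟩ := hy
    exact ⟨a, ha, rfl⟩
  · rintro ⟨a, ha, rfl⟩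
    refine ⟨_, ?_, rfl⟩
    rw [FractionalIdeal.coe_mk0, SetLike.mem_coe, FractionalIdeal.mem_coeIdeal]
    exact ⟨a, ha, rfl⟩

set_option maxHeartbeats 1000000 in
theorem PN_class_count {g : ℝ → ℝ} {B : ℝ} (hg : ContDiff ℝ (⊤ : ℕ∞) g) (g0 : ∀ v ≤ 1 / 4, g v = 0)
    (gB : ∀ v, B ≤ v → g v = 0) (gnn : ∀ v, 0 ≤ g v) (g1 : g 1 ≠ 0) :
    ∃ c : ℝ, 0 < c ∧ ∀ C : ClassGroup (𝓞 K), ∃ M : ℝ, ∀ t ∈ Ioc (0 : ℝ) 1,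
      |∑' J : {J : (Ideal (𝓞 K))⁰ // ClassGroup.mk0 J = C}, g (t * Ideal.absNorm (J.1 : Ideal (𝓞 K))) - c / t| ≤ M := by
  set D := (volume : Measure (mixedSpace K)).real (ZSpan.fundamentalDomain (latticeBasis K)) with hD
  have hDpos : 0 < D := by
    refine ENNReal.toReal_pos (ZSpan.measure_fundamentalDomain_ne_zero _)
      (ZSpan.fundamentalDomain_isBounded _).measure_lt_top.ne
  set w : ℝ := ((torsionOrder K : ℕ) : ℝ) with hw
  have hwpos : 0 < w := by rw [hw]; exact_mod_cast torsionOrder_pos K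
  set If := ∫ x, PN_F K g x with hIf
  have hIpos : 0 < If := PN_F_integral_pos hg g0 gB gnn g1
  refine ⟨If / (D * w), by positivity, fun C => ?_⟩
  obtain ⟨b, hb⟩ := ClassGroup.mk0_surjective C⁻¹
  have hC : C = (ClassGroup.mk0 b)⁻¹ := by rw [hb, inv_inv]
  subst hC
  obtain ⟨α, hα, hα0, hinj, hsurj⟩ := PN_equiv b
  have hαb : ∀ J, α J ∈ (b : Ideal (𝓞 K)) := by
    intro J
    have : Ideal.span {α J} ≤ (b : Ideal (𝓞 K)) := by
      rw [hα]
      exact Ideal.le_of_dvd (Dvd.intro_left _ rfl)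
    exact this (Ideal.mem_span_singleton_self _)
  let b' : (FractionalIdeal (𝓞 K)⁰ K)ˣ := FractionalIdeal.mk0 K b
  set bas := fractionalIdealLatticeBasis K b' with hbas
  set n := finrank ℚ K with hn
  have hn0 : n ≠ 0 := finrank_pos.ne'
  have hdim : finrank ℝ (mixedSpace K) = n := mixedEmbedding.finrank K
  set Nb : ℝ := ((Ideal.absNorm (b : Ideal (𝓞 K)) : ℕ) : ℝ) with hNb
  have hNb1 : 1 ≤ Nb := by
    have : Ideal.absNorm (b : Ideal (𝓞 K)) ≠ 0 := by
      rw [Ne, Ideal.absNorm_eq_zero_iff]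
      exact nonZeroDivisors.coe_ne_zero b
    rw [hNb]; exact_mod_cast Nat.one_le_iff_ne_zero.2 this
  have hvol : (volume : Measure (mixedSpace K)).real (ZSpan.fundamentalDomain bas) = Nb * D := by
    rw [hbas, Measure.real, volume_fundamentalDomain_fractionalIdealLatticeBasis, ENNReal.toReal_mul,
      ENNReal.toReal_ofReal (by exact_mod_cast FractionalIdeal.absNorm_nonneg _)]
    simp only [b', FractionalIdeal.coe_mk0, FractionalIdeal.coeIdeal_absNorm, hNb, hD, Measure.real, Rat.cast_natCast]
  have hF := PN_F_contDiff (K := K) hg g0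
  have hFc := PN_F_compact (K := K) g0 gB
  obtain ⟨A, hA0, hA⟩ := PN_lattice_sum bas volume n (PN_F K g) hF hFc
  -- the sum over the lattice
  have key : ∀ r ∈ Ioc (0 : ℝ) 1, ∑' l : Submodule.span ℤ (Set.range bas), PN_F K g (r • ((0 : mixedSpace K) + l)) =
      w * ∑' J : {J : (Ideal (𝓞 K))⁰ // ClassGroup.mk0 J = (ClassGroup.mk0 b)⁻¹},
        g (r ^ n * Nb * Ideal.absNorm (J.1 : Ideal (𝓞 K))) := by
    intro r hr
    obtain ⟨R, hR⟩ := hFc.isCompact.isBounded.exists_norm_le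
    obtain ⟨c, hc, hcount⟩ := PN_lattice_count bas (max R 0) (le_max_right _ _)
    obtain ⟨S, -, hS⟩ := hcount r hr
    have hz : ∀ l ∉ S, PN_F K g (r • ((0 : mixedSpace K) + l)) = 0 := by
      intro l hl
      by_contra hne
      have h1 := hS 0 (by intro i; simp) l hl
      have h2 := hR _ (subset_tsupport _ hne)
      exact absurd h2 (not_le.2 ((le_max_left _ _).trans_lt h1))
    have hmem : ∀ p : {J : (Ideal (𝓞 K))⁰ // ClassGroup.mk0 J = (ClassGroup.mk0 b)⁻¹} × (𝓞 K)ˣ,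
        mixedEmbedding K ((p.2 : 𝓞 K) * α p.1 : 𝓞 K) ∈ Submodule.span ℤ (Set.range bas) := by
      intro p
      rw [hbas, PN_mem_lattice]
      exact ⟨(p.2 : 𝓞 K) * α p.1, Ideal.mul_mem_left _ _ (hαb p.1), rfl⟩
    let Ψ : {J : (Ideal (𝓞 K))⁰ // ClassGroup.mk0 J = (ClassGroup.mk0 b)⁻¹} × (𝓞 K)ˣ →
        Submodule.span ℤ (Set.range bas) := fun p => ⟨_, hmem p⟩
    have hΨ : Function.Injective Ψ := by
      intro p q hpq
      have h1 := congrArg Subtype.val hpq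
      have h2 := mixedEmbedding_injective K h1
      exact hinj (RingOfIntegers.ext h2)
    have hsupp : Function.support (fun l : Submodule.span ℤ (Set.range bas) => PN_F K g (r • ((0 : mixedSpace K) + l))) ⊆ Set.range Ψ := by
      intro l hl
      obtain ⟨a, ha, hyl⟩ := (PN_mem_lattice b _).1 l.2
      have ha0 : a ≠ 0 := by
        rintro rfl
        rw [show ((0 : 𝓞 K) : K) = 0 from rfl, map_zero] at hyl
        apply hl
        simp only [← hyl]
        simp [PN_F, g0 0 (by norm_num)]
      obtain ⟨p, hp⟩ := hsurj a ha ha0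
      refine ⟨p, Subtype.ext ?_⟩
      simp only [Ψ]
      rw [hp, ← hyl]
    have hs1 : HasSum (fun l : Submodule.span ℤ (Set.range bas) => PN_F K g (r • ((0 : mixedSpace K) + l)))
        (∑' l : Submodule.span ℤ (Set.range bas), PN_F K g (r • ((0 : mixedSpace K) + l))) :=
      (summable_of_ne_finset_zero hz).hasSum
    rw [← hΨ.hasSum_iff (fun l hl => by_contra fun h => hl (hsupp h))] at hs1
    have hs2 := hs1.prod_fiberwise (g := fun J => w * g (r ^ n * Nb * Ideal.absNorm (J.1 : Ideal (𝓞 K)))) (by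
      intro J
      have hnorm : mixedEmbedding.norm (r • mixedEmbedding K (α J)) = r ^ n * Nb * Ideal.absNorm (J.1 : Ideal (𝓞 K)) := by
        rw [mixedEmbedding.norm_smul, abs_of_pos hr.1, mul_assoc, hNb, ← Nat.cast_mul, ← map_mul, mul_comm (b : Ideal (𝓞 K)), ← hα,
          Ideal.absNorm_span_singleton, mixedEmbedding.norm_eq_norm]
        congr 1
        rw [← Algebra.coe_norm_int]
        simp [Nat.cast_natAbs]
      have hne : mixedEmbedding.norm (r • mixedEmbedding K (α J)) ≠ 0 := by
        rw [mixedEmbedding.norm_smul]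
        refine mul_ne_zero (pow_ne_zero _ (abs_ne_zero.2 hr.1.ne')) ?_
        rw [Ne, norm_eq_zero_iff' ⟨_, rfl⟩, map_eq_zero]
        exact_mod_cast hα0 J
      have := PN_F_unit_sum (g := g) hne
      rw [hnorm] at this
      convert this using 2 with u
      simp only [Function.comp, Ψ, zero_add]
      congr 1
      rw [unitSMul_smul, mul_smul_comm, ← map_mul]
      simp)
    rw [← hs2.tsum_eq, tsum_mul_left]
  refine ⟨A / (Nb * D * w), fun t ht => ?_⟩
  set r := (t / Nb) ^ ((n : ℝ)⁻¹) with hr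
  have htpos := ht.1
  have hrn : r ^ n = t / Nb := Real.rpow_inv_natCast_pow (by positivity) hn0
  have hr0 : 0 < r := by positivity
  have hr1 : r ≤ 1 := by
    apply Real.rpow_le_one (by positivity) _ (by positivity)
    rw [div_le_one (by positivity)]
    exact ht.2.trans hNb1
  have h1 := hA r ⟨hr0, hr1⟩ 0 (by intro i; simp)
  rw [key r ⟨hr0, hr1⟩, hdim, hvol, hrn, div_mul_cancel₀ _ (by positivity : Nb ≠ 0), ← hIf] at h1
  set Z := ∑' J : {J : (Ideal (𝓞 K))⁰ // ClassGroup.mk0 J = (ClassGroup.mk0 b)⁻¹}, g (t * Ideal.absNorm (J.1 : Ideal (𝓞 K)))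
  have h2 : Nb * D * (t / Nb * (w * Z)) - If = (D * w * t) * (Z - If / (D * w) / t) := by
    field_simp
  rw [h2, abs_mul, abs_of_pos (by positivity)] at h1
  rw [← mul_le_mul_iff_right₀ (by positivity : 0 < D * w * t)]
  refine h1.trans (le_of_eq ?_)
  field_simp

end ClassCount

end P3sec

section P4sec
section AbstractMellin

open MeasureTheory Set Filter Topology Complex

theorem PN_summable_of_card {ι : Type*} (N : ι → ℕ) (hN : ∀ i, 1 ≤ N i)
    (hfin : ∀ X : ℕ, {i | N i ≤ X}.Finite)
    (hO : (fun n : ℕ => ((hfin n).toFinset.card : ℝ)) =O[atTop] fun n : ℕ => (n : ℝ)) {σ : ℝ} (hσ : 1 < σ) :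
    Summable fun i => (N i : ℝ) ^ (-σ) := by
  classical
  have hfin' : ∀ m : ℕ, Finite {i // N i = m} := fun m =>
    ((hfin m).subset (fun i hi => le_of_eq hi)).to_subtype
  let f : ℕ → ℝ := fun m => Nat.card {i // N i = m}
  have hS : LSeriesSummable (fun m => (f m : ℂ)) (σ : ℂ) := by
    apply LSeriesSummable_of_sum_norm_bigO_and_nonneg (r := 1) _ (fun n => by positivity) zero_le_one (by simpa using hσ)
    simp only [Real.rpow_one]
    refine hO.congr_left fun n => ?_
    rw [Finset.card_eq_sum_card_fiberwise (f := N) (t := Finset.Icc 1 n)]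
    · push_cast
      refine Finset.sum_congr rfl fun k hk => ?_
      simp only [f]
      congr 1
      rw [Nat.subtype_card]
      intro i
      simp only [Finset.mem_filter, Finite.mem_toFinset, mem_setOf_eq]
      have := (Finset.mem_Icc.1 hk).2
      constructor
      · exact fun h => h.2
      · exact fun h => ⟨h ▸ this, h⟩
    · intro i hi
      simp only [Finite.coe_toFinset, mem_setOf_eq] at hi
      simpa using ⟨hN i, hi⟩
  rw [← (Equiv.sigmaFiberEquiv N).summable_iff]
  rw [summable_sigma_of_nonneg (fun _ => by simp only [Function.comp]; positivity)]
  refine ⟨fun m => Summable.of_finite, ?_⟩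
  have h2 := hS.norm
  refine h2.congr fun m => ?_
  haveI := Fintype.ofFinite {i // N i = m}
  rw [LSeries.norm_term_eq, tsum_fintype]
  have h3 : ∀ x : {i // N i = m}, ((fun i => (N i : ℝ) ^ (-σ)) ∘ (Equiv.sigmaFiberEquiv N)) ⟨m, x⟩ = (m : ℝ) ^ (-σ) := by
    intro x
    simp only [Function.comp, Equiv.sigmaFiberEquiv_apply, x.2]
  rw [Finset.sum_congr rfl (fun x _ => h3 x), Finset.sum_const, Finset.card_univ, nsmul_eq_mul]
  split_ifs with hm
  · have : IsEmpty {i // N i = m} := ⟨fun x => by have := hN x; have := x.2; omega⟩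
    simp
  · simp only [f, Nat.card_eq_fintype_card, Real.rpow_neg (Nat.cast_nonneg m)]
    simp [div_eq_mul_inv]

noncomputable def PN_T {ι : Type*} (N : ι → ℕ) (g : ℝ → ℝ) (a : ι → ℂ) (t : ℝ) : ℂ :=
  ∑' i, a i * ((g (t * N i) : ℝ) : ℂ)

variable {ι : Type*} {N : ι → ℕ} {g : ℝ → ℝ} {B : ℝ}

theorem PN_T_term_zero (hB : 0 < B) (gB : ∀ v, B ≤ v → g v = 0) {ε t : ℝ} (hε : 0 < ε) (ht : ε ≤ t)
    {i : ι} (hi : ⌈B / ε⌉₊ < N i) : g (t * N i) = 0 := by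
  apply gB
  have h1 : B / ε ≤ N i := (Nat.le_ceil _).trans (by exact_mod_cast hi.le)
  rw [div_le_iff₀ hε] at h1
  have : (0 : ℝ) ≤ N i := by positivity
  nlinarith

theorem PN_T_eq_sum (hfin : ∀ X : ℕ, {i | N i ≤ X}.Finite) (hB : 0 < B) (gB : ∀ v, B ≤ v → g v = 0)
    (a : ι → ℂ) {ε t : ℝ} (hε : 0 < ε) (ht : ε ≤ t) :
    PN_T N g a t = ∑ i ∈ (hfin ⌈B / ε⌉₊).toFinset, a i * ((g (t * N i) : ℝ) : ℂ) := by
  apply tsum_eq_sum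
  intro i hi
  simp only [Finite.mem_toFinset, mem_setOf_eq, not_le] at hi
  rw [PN_T_term_zero hB gB hε ht hi]
  simp

theorem PN_T_hasSum (hfin : ∀ X : ℕ, {i | N i ≤ X}.Finite) (hB : 0 < B) (gB : ∀ v, B ≤ v → g v = 0)
    (a : ι → ℂ) {t : ℝ} (ht : 0 < t) :
    HasSum (fun i => a i * ((g (t * N i) : ℝ) : ℂ)) (PN_T N g a t) := by
  apply Summable.hasSum
  apply summable_of_ne_finset_zero (s := (hfin ⌈B / t⌉₊).toFinset)
  intro i hi
  simp only [Finite.mem_toFinset, mem_setOf_eq, not_le] at hi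
  rw [PN_T_term_zero hB gB ht le_rfl hi]
  simp

theorem PN_T_zero (hN : ∀ i, 1 ≤ N i) (hB : 0 < B) (gB : ∀ v, B ≤ v → g v = 0) (a : ι → ℂ) {t : ℝ} (ht : B ≤ t) :
    PN_T N g a t = 0 := by
  unfold PN_T
  have : ∀ i, a i * ((g (t * N i) : ℝ) : ℂ) = 0 := by
    intro i
    rw [gB]
    · simp
    · have : (1 : ℝ) ≤ N i := by exact_mod_cast hN i
      nlinarith
  simp [this]

theorem PN_T_continuousOn (hfin : ∀ X : ℕ, {i | N i ≤ X}.Finite) (hB : 0 < B)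
    (gc : Continuous g) (gB : ∀ v, B ≤ v → g v = 0) (a : ι → ℂ) :
    ContinuousOn (PN_T N g a) (Ioi 0) := by
  intro t ht
  apply ContinuousAt.continuousWithinAt
  have ht' : 0 < t := ht
  have h1 : PN_T N g a =ᶠ[𝓝 t] fun y => ∑ i ∈ (hfin ⌈B / (t/2)⌉₊).toFinset, a i * ((g (y * N i) : ℝ) : ℂ) := by
    filter_upwards [lt_mem_nhds (show t / 2 < t by linarith)] with y hy
    exact PN_T_eq_sum hfin hB gB a (by linarith) hy.le
  refine ContinuousAt.congr (Continuous.continuousAt ?_) h1.symm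
  fun_prop

theorem PN_g_mellinConv (gc : Continuous g) (g0 : ∀ v ≤ 1 / 4, g v = 0) (gB : ∀ v, B ≤ v → g v = 0) (s : ℂ) :
    MellinConvergent (fun t => (g t : ℂ)) s := by
  apply mellinConvergent_of_isBigO_rpow (a := s.re + 1) (b := s.re - 1) _ _ (by linarith) _ (by linarith)
  · exact (Continuous.locallyIntegrable (by fun_prop)).locallyIntegrableOn _
  · apply (Asymptotics.isBigO_zero _ _).congr' _ EventuallyEq.rfl
    filter_upwards [eventually_ge_atTop B] with t ht
    simp [gB t ht]
  · apply (Asymptotics.isBigO_zero _ _).congr' _ EventuallyEq.rfl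
    filter_upwards [nhdsWithin_le_nhds (ge_mem_nhds (show (0:ℝ) < 1/4 by norm_num))] with t ht
    simp [g0 t ht]

theorem PN_g_mellin_diff (gc : Continuous g) (g0 : ∀ v ≤ 1 / 4, g v = 0) (gB : ∀ v, B ≤ v → g v = 0) (s : ℂ) :
    DifferentiableAt ℂ (mellin (fun t => (g t : ℂ))) s := by
  apply mellin_differentiableAt_of_isBigO_rpow (a := s.re + 1) (b := s.re - 1) _ _ (by linarith) _ (by linarith)
  · exact (Continuous.locallyIntegrable (by fun_prop)).locallyIntegrableOn _
  · apply (Asymptotics.isBigO_zero _ _).congr' _ EventuallyEq.rfl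
    filter_upwards [eventually_ge_atTop B] with t ht
    simp [gB t ht]
  · apply (Asymptotics.isBigO_zero _ _).congr' _ EventuallyEq.rfl
    filter_upwards [nhdsWithin_le_nhds (ge_mem_nhds (show (0:ℝ) < 1/4 by norm_num))] with t ht
    simp [g0 t ht]

theorem PN_g_mellin_ne (gc : Continuous g) (g0 : ∀ v ≤ 1 / 4, g v = 0) (gB : ∀ v, B ≤ v → g v = 0)
    (gnn : ∀ v, 0 ≤ g v) (g1 : g 1 ≠ 0) (s : ℝ) :
    mellin (fun t => (g t : ℂ)) s ≠ 0 := by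
  have h1 : mellin (fun t => (g t : ℂ)) s = ((∫ t in Ioi (0:ℝ), t ^ (s - 1) * g t : ℝ) : ℂ) := by
    rw [mellin, ← integral_complex_ofReal]
    refine setIntegral_congr_fun measurableSet_Ioi fun t ht => ?_
    simp only [smul_eq_mul, ofReal_mul]
    rw [ofReal_cpow (le_of_lt ht)]
    simp
  rw [h1, Ne, ofReal_eq_zero]
  apply ne_of_gt
  have hIntg : IntegrableOn (fun t : ℝ => t ^ (s - 1) * g t) (Ioi 0) := by
    have := (PN_g_mellinConv gc g0 gB (s : ℂ)).norm
    refine this.congr ((ae_restrict_iff' measurableSet_Ioi).2 (ae_of_all _ fun t ht => ?_))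
    simp only [smul_eq_mul, norm_mul, norm_real, Real.norm_eq_abs, abs_of_nonneg (gnn t)]
    rw [norm_cpow_eq_rpow_re_of_pos ht]
    simp
  rw [setIntegral_pos_iff_support_of_nonneg_ae _ hIntg]
  · have hcont : ContinuousAt g 1 := gc.continuousAt
    have hev : ∀ᶠ t in 𝓝 (1:ℝ), g t ≠ 0 := hcont.eventually_ne g1
    obtain ⟨U, hU, hUo, hU1⟩ := eventually_nhds_iff.1 hev
    have hsub : U ∩ Ioi 0 ⊆ Function.support (fun t : ℝ => t ^ (s - 1) * g t) ∩ Ioi 0 := by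
      rintro t ⟨htU, ht⟩
      refine ⟨?_, ht⟩
      have ht' : 0 < t := ht
      exact mul_ne_zero (by positivity) (hU t htU)
    refine lt_of_lt_of_le ?_ (measure_mono hsub)
    exact (hUo.inter isOpen_Ioi).measure_pos _ ⟨1, hU1, by simp⟩
  · refine (ae_restrict_iff' measurableSet_Ioi).2 (ae_of_all _ fun t ht => ?_)
    have ht' : 0 < t := ht
    have := gnn t
    simp only [Pi.zero_apply]
    positivity

theorem PN_T_mellin [Countable ι] (hN : ∀ i, 1 ≤ N i)
    (hsum : ∀ σ : ℝ, 1 < σ → Summable fun i => (N i : ℝ) ^ (-σ))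
    (gc : Continuous g) (g0 : ∀ v ≤ 1 / 4, g v = 0) (gB : ∀ v, B ≤ v → g v = 0)
    (a : ι → ℂ) (ha : ∀ i, ‖a i‖ ≤ 1) {s : ℂ} (hs : 1 < s.re) :
    mellin (PN_T N g a) s = mellin (fun t => (g t : ℂ)) s * ∑' i, a i * (N i : ℂ) ^ (-s) := by
  let F : ι → ℝ → ℂ := fun i t => (t : ℂ) ^ (s - 1) • (a i * ((g (t * N i) : ℝ) : ℂ))
  have hNpos : ∀ i, (0 : ℝ) < N i := fun i => by exact_mod_cast hN i
  have hconv := PN_g_mellinConv gc g0 gB s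
  have hIntg : ∀ i, Integrable (F i) (volume.restrict (Ioi 0)) := by
    intro i
    have h1 := (MellinConvergent.comp_mul_left (f := fun t => (g t : ℂ)) (s := s) (hNpos i)).2 hconv
    have h2 := h1.const_smul (a i)
    refine h2.congr (ae_of_all _ fun t => ?_)
    simp only [F, smul_eq_mul, mul_comm t]
  have hval : ∀ i, ∫ t in Ioi (0:ℝ), F i t = mellin (fun t => (g t : ℂ)) s * (a i * (N i : ℂ) ^ (-s)) := by
    intro i
    have h1 := mellin_comp_mul_right (fun t => (g t : ℂ)) s (hNpos i)
    have h2 : ∫ t in Ioi (0:ℝ), F i t = a i * mellin (fun t => (g (t * N i) : ℂ)) s := by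
      rw [mellin, ← integral_const_mul]
      congr 1
      ext t
      simp only [F, smul_eq_mul]
      ring
    rw [h2, h1, smul_eq_mul]
    push_cast
    ring
  set I := ∫ t in Ioi (0:ℝ), ‖(t : ℂ) ^ (s - 1) • (g t : ℂ)‖ with hI
  have hnorm : ∀ i, ∫ t in Ioi (0:ℝ), ‖F i t‖ = ‖a i‖ * ((N i : ℝ) ^ (-s.re) * I) := by
    intro i
    have h3 := integral_comp_mul_right_Ioi (fun t : ℝ => ‖(t : ℂ) ^ (s - 1) • (g t : ℂ)‖) 0 (hNpos i)
    rw [zero_mul, ← hI] at h3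
    have h4 : ∀ t ∈ Ioi (0:ℝ), ‖F i t‖ = ‖a i‖ * (N i : ℝ) ^ (1 - s.re) * ‖((t * N i : ℝ) : ℂ) ^ (s - 1) • (g (t * N i) : ℂ)‖ := by
      intro t ht
      have ht' : 0 < t := ht
      simp only [F, norm_smul, norm_mul]
      rw [norm_cpow_eq_rpow_re_of_pos ht', norm_cpow_eq_rpow_re_of_pos (mul_pos ht' (hNpos i)),
        Real.mul_rpow ht'.le (hNpos i).le]
      simp only [sub_re, one_re]
      have : (N i : ℝ) ^ (1 - s.re) * (N i : ℝ) ^ (s.re - 1) = 1 := by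
        rw [← Real.rpow_add (hNpos i)]; simp
      linear_combination (-(‖a i‖ * t ^ (s.re - 1) * ‖((g (t * N i) : ℝ) : ℂ)‖)) * this
    rw [setIntegral_congr_fun measurableSet_Ioi h4, integral_const_mul, h3, smul_eq_mul]
    rw [mul_assoc, ← mul_assoc _ _ I]
    congr 2
    rw [← Real.rpow_neg_one, ← Real.rpow_add (hNpos i)]
    congr 1; ring
  have hsm : Summable fun i => ∫ t in Ioi (0:ℝ), ‖F i t‖ := by
    simp only [hnorm]
    have hI0 : 0 ≤ I := integral_nonneg fun _ => norm_nonneg _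
    refine Summable.of_nonneg_of_le (fun i => by positivity) (fun i => ?_) ((hsum s.re hs).mul_right I)
    exact mul_le_of_le_one_left (by positivity) (ha i)
  have hS := hasSum_integral_of_summable_integral_norm hIntg hsm
  have h5 : ∫ t in Ioi (0:ℝ), ∑' i, F i t = mellin (PN_T N g a) s := by
    rw [mellin]
    congr 1
    ext t
    simp only [F, PN_T, smul_eq_mul, tsum_mul_left]
  rw [← h5, ← hS.tsum_eq]
  simp only [hval, tsum_mul_left]

end AbstractMellin

end P4sec

section P5asec
section IdealSetup

open MeasureTheory Set Filter Topology Complex NumberField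
open scoped Classical nonZeroDivisors

variable {K : Type*} [Field K] [NumberField K]

/-- absolute norm on nonzero ideals -/
noncomputable def PN_N (J : (Ideal (𝓞 K))⁰) : ℕ := Ideal.absNorm (J : Ideal (𝓞 K))

theorem PN_N_mul (I J : (Ideal (𝓞 K))⁰) : PN_N (I * J) = PN_N I * PN_N J := by
  simp [PN_N]

theorem PN_N_one : PN_N (1 : (Ideal (𝓞 K))⁰) = 1 := by
  simp [PN_N]

theorem PN_N_pow (I : (Ideal (𝓞 K))⁰) (k : ℕ) : PN_N (I ^ k) = PN_N I ^ k := by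
  simp [PN_N]

theorem PN_N_ge (J : (Ideal (𝓞 K))⁰) : 1 ≤ PN_N J := by
  have : PN_N J ≠ 0 := by
    rw [PN_N, Ne, Ideal.absNorm_eq_zero_iff]
    exact nonZeroDivisors.ne_zero J.2
  omega

theorem PN_N_eq_one {J : (Ideal (𝓞 K))⁰} : PN_N J = 1 ↔ J = 1 := by
  rw [PN_N, Ideal.absNorm_eq_one_iff, ← Ideal.one_eq_top, Subtype.ext_iff, Submonoid.coe_one]

theorem PN_hfin (X : ℕ) : {J : (Ideal (𝓞 K))⁰ | PN_N J ≤ X}.Finite :=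
  Ideal.finite_setOfPred_absNorm_le₀ X

instance PN_countable : Countable (Ideal (𝓞 K))⁰ := by
  have : (⋃ X : ℕ, {J : (Ideal (𝓞 K))⁰ | PN_N J ≤ X}) = univ := by
    ext J
    simp only [mem_iUnion, mem_setOf_eq, mem_univ, iff_true]
    exact ⟨_, le_rfl⟩
  rw [← countable_univ_iff, ← this]
  exact countable_iUnion fun X => (PN_hfin X).countable

theorem PN_hsum (σ : ℝ) (hσ : 1 < σ) : Summable fun J : (Ideal (𝓞 K))⁰ => (PN_N J : ℝ) ^ (-σ) := by
  refine PN_summable_of_card PN_N PN_N_ge PN_hfin ?_ hσ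
  have h := (NumberField.Ideal.tendsto_norm_le_div_atTop₀ K).comp tendsto_natCast_atTop_atTop
  have h2 := h.isBigO_one ℝ
  have h3 := h2.mul (Asymptotics.isBigO_refl (fun n : ℕ => (n : ℝ)) atTop)
  refine (Asymptotics.IsBigO.congr' h3 ?_ ?_)
  · filter_upwards [eventually_gt_atTop 0] with n hn
    have hn' : (n : ℝ) ≠ 0 := by positivity
    simp only [Function.comp]
    rw [div_mul_cancel₀ _ hn']
    norm_cast
    rw [← Nat.card_eq_card_finite_toFinset]
    rfl
  · filter_upwards with n
    simp

theorem PN_N_pos (J : (Ideal (𝓞 K))⁰) : (0 : ℝ) < PN_N J := by exact_mod_cast PN_N_ge J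

theorem PN_norm_cpow (J : (Ideal (𝓞 K))⁰) (s : ℂ) : ‖(PN_N J : ℂ) ^ (-s)‖ = (PN_N J : ℝ) ^ (-s.re) := by
  rw [← ofReal_natCast, norm_cpow_eq_rpow_re_of_pos (PN_N_pos J)]
  simp

/-- The log-weight on primes -/
noncomputable def PN_w (P : (Ideal (𝓞 K))⁰) : ℝ :=
  if Prime (P : Ideal (𝓞 K)) then Real.log (PN_N P) else 0

theorem PN_w_nonneg (P : (Ideal (𝓞 K))⁰) : 0 ≤ PN_w P := by
  unfold PN_w
  split_ifs
  · exact Real.log_nonneg (by exact_mod_cast PN_N_ge P)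
  · rfl

theorem PN_w_le (P : (Ideal (𝓞 K))⁰) : PN_w P ≤ Real.log (PN_N P) := by
  unfold PN_w
  split_ifs
  · rfl
  · exact Real.log_nonneg (by exact_mod_cast PN_N_ge P)

theorem PN_w_ne {P : (Ideal (𝓞 K))⁰} (h : PN_w P ≠ 0) : Prime (P : Ideal (𝓞 K)) ∧ 2 ≤ PN_N P := by
  unfold PN_w at h
  split_ifs at h with h1
  · refine ⟨h1, ?_⟩
    have := PN_N_ge P
    by_contra h3
    have : PN_N P = 1 := by omega
    rw [this] at h
    simp at h
  · exact absurd rfl h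

theorem PN_multiset_log (m : Multiset (Ideal (𝓞 K))) (hm : ∀ p ∈ m, Prime p) :
    m.card ≤ Ideal.absNorm m.prod ∧
      (m.map (fun p => Real.log (Ideal.absNorm p))).sum = Real.log (Ideal.absNorm m.prod) := by
  suffices h : m.card + 1 ≤ Ideal.absNorm m.prod ∧
      (m.map (fun p => Real.log (Ideal.absNorm p))).sum = Real.log (Ideal.absNorm m.prod) from
    ⟨by omega, h.2⟩
  induction m using Multiset.induction_on with
  | empty => simp
  | cons a m ih =>
    obtain ⟨h1, h2⟩ := ih fun p hp => hm p (Multiset.mem_cons_of_mem hp)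
    have ha := hm a (Multiset.mem_cons_self a m)
    have ha0 : Ideal.absNorm a ≠ 0 := by
      rw [Ne, Ideal.absNorm_eq_zero_iff]; exact ha.ne_zero
    have ha1 : Ideal.absNorm a ≠ 1 := by
      rw [Ne, Ideal.absNorm_eq_one_iff, ← Ideal.isUnit_iff]; exact ha.not_unit
    have ha2 : 2 ≤ Ideal.absNorm a := by omega
    rw [Multiset.prod_cons, Multiset.card_cons, map_mul, Multiset.map_cons, Multiset.sum_cons, h2]
    refine ⟨by nlinarith, ?_⟩
    push_cast
    rw [Real.log_mul (by positivity) (by exact_mod_cast (by omega : Ideal.absNorm m.prod ≠ 0))]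

/-- sum over prime powers dividing `J` of the weight is `log N J` -/
theorem PN_log_eq (J : (Ideal (𝓞 K))⁰) :
    HasSum (fun q : {q : (Ideal (𝓞 K))⁰ × ℕ // q.1 ^ (q.2 + 1) ∣ J} => PN_w q.1.1) (Real.log (PN_N J)) := by
  have hJ0 : (J : Ideal (𝓞 K)) ≠ 0 := nonZeroDivisors.ne_zero J.2
  have hdvd : ∀ (A B : (Ideal (𝓞 K))⁰), A ∣ B ↔ (A : Ideal (𝓞 K)) ∣ B := by
    intro A B
    constructor
    · rintro ⟨C, rfl⟩; exact ⟨C, by simp⟩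
    · rintro ⟨C, hC⟩
      have : C ≠ 0 := by
        rintro rfl
        exact nonZeroDivisors.ne_zero B.2 (by simpa using hC)
      exact ⟨⟨C, mem_nonZeroDivisors_of_ne_zero this⟩, Subtype.ext hC⟩
  have key : HasSum (fun q : (Ideal (𝓞 K))⁰ × ℕ => if q.1 ^ (q.2 + 1) ∣ J then PN_w q.1 else 0)
      (Real.log (PN_N J)) := by
    set T := (PN_hfin (K := K) (PN_N J)).toFinset
    set nf := UniqueFactorizationMonoid.normalizedFactors (J : Ideal (𝓞 K)) with hnf
    have hpow : ∀ P : (Ideal (𝓞 K))⁰, Prime (P : Ideal (𝓞 K)) → ∀ k, P ^ (k + 1) ∣ J ↔ k < nf.count (P : Ideal (𝓞 K)) := by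
      intro P hP k
      rw [hdvd, SubmonoidClass.coe_pow, UniqueFactorizationMonoid.dvd_iff_normalizedFactors_le_normalizedFactors (pow_ne_zero _ hP.ne_zero) hJ0,
        UniqueFactorizationMonoid.normalizedFactors_pow, UniqueFactorizationMonoid.normalizedFactors_irreducible hP.irreducible,
        normalize_eq, Multiset.nsmul_singleton, ← Multiset.le_count_iff_replicate_le]
      rfl
    have hle : ∀ A B : (Ideal (𝓞 K))⁰, A ∣ B → PN_N A ≤ PN_N B := by
      rintro A B ⟨C, rfl⟩
      rw [PN_N_mul]
      exact Nat.le_mul_of_pos_right _ (PN_N_ge C)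
    have hcard : nf.card ≤ PN_N J ∧ (nf.map (fun p => Real.log (Ideal.absNorm p))).sum = Real.log (PN_N J) := by
      have hprod : nf.prod = (J : Ideal (𝓞 K)) :=
        associated_iff_eq.1 (UniqueFactorizationMonoid.prod_normalizedFactors hJ0)
      have := PN_multiset_log nf (fun p hp => UniqueFactorizationMonoid.prime_of_normalized_factor _ hp)
      rw [hprod] at this
      exact this
    have e : ∑ q ∈ T ×ˢ Finset.range (PN_N J), (if q.1 ^ (q.2 + 1) ∣ J then PN_w q.1 else 0) = Real.log (PN_N J) := by
      rw [Finset.sum_product]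
      have h1 : ∀ P ∈ T, ∑ k ∈ Finset.range (PN_N J), (if P ^ (k + 1) ∣ J then PN_w P else 0) =
          (nf.count (P : Ideal (𝓞 K))) * Real.log (Ideal.absNorm (P : Ideal (𝓞 K))) := by
        intro P _
        by_cases hP : Prime (P : Ideal (𝓞 K))
        · simp only [hpow P hP]
          rw [← Finset.sum_filter, Finset.sum_const]
          have : (Finset.range (PN_N J)).filter (fun k => k < nf.count (P : Ideal (𝓞 K))) = Finset.range (nf.count (P : Ideal (𝓞 K))) := by
            ext k
            have := (Multiset.count_le_card (P : Ideal (𝓞 K)) nf).trans hcard.1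
            simp only [Finset.mem_filter, Finset.mem_range]
            omega
          rw [this]
          simp [PN_w, hP, PN_N]
        · have h0 : nf.count (P : Ideal (𝓞 K)) = 0 := by
            rw [Multiset.count_eq_zero]
            intro h
            exact hP (UniqueFactorizationMonoid.prime_of_normalized_factor _ h)
          simp [h0, PN_w, hP]
      rw [Finset.sum_congr rfl h1, ← hcard.2, Finset.sum_multiset_map_count]
      simp only [nsmul_eq_mul]
      rw [← Finset.sum_image (s := T) (g := fun P : (Ideal (𝓞 K))⁰ => (P : Ideal (𝓞 K)))
        (f := fun p => (nf.count p : ℝ) * Real.log (Ideal.absNorm p)) (by intro a _ b _ h; exact Subtype.ext h)]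
      symm
      apply Finset.sum_subset
      · intro p hp
        rw [Multiset.mem_toFinset] at hp
        have hp' := UniqueFactorizationMonoid.prime_of_normalized_factor _ hp
        have hpd := UniqueFactorizationMonoid.dvd_of_mem_normalizedFactors hp
        rw [Finset.mem_image]
        refine ⟨⟨p, mem_nonZeroDivisors_of_ne_zero hp'.ne_zero⟩, ?_, rfl⟩
        simp only [T, Set.Finite.mem_toFinset, mem_setOf_eq]
        exact hle _ _ ((hdvd _ _).2 hpd)
      · intro p _ hp
        rw [Multiset.mem_toFinset] at hp
        simp [hp]
    rw [← e]
    apply hasSum_sum_of_ne_finset_zero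
    rintro ⟨P, k⟩ hq
    rw [ite_eq_right_iff]
    intro hd
    by_contra hw
    obtain ⟨hP, -⟩ := PN_w_ne hw
    apply hq
    rw [Finset.mem_product]
    refine ⟨?_, ?_⟩
    · simp only [T, Set.Finite.mem_toFinset, mem_setOf_eq]
      exact hle _ _ ((dvd_pow_self P (Nat.succ_ne_zero k)).trans hd)
    · rw [Finset.mem_range]
      exact ((hpow P hP k).1 hd).trans_le ((Multiset.count_le_card _ nf).trans hcard.1)
  have := (hasSum_subtype_iff_indicator (f := fun q : (Ideal (𝓞 K))⁰ × ℕ => PN_w q.1)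
    (s := {q | q.1 ^ (q.2 + 1) ∣ J}) (a := Real.log (PN_N J))).2 (by
      convert key using 1
      ext q
      simp [Set.indicator_apply])
  exact this

end IdealSetup

end P5asec

section P5bsec
section LogDeriv

open MeasureTheory Set Filter Topology Complex NumberField
open scoped Classical nonZeroDivisors

variable {K : Type*} [Field K] [NumberField K]

noncomputable def PN_L (a : (Ideal (𝓞 K))⁰ →* ℂ) (s : ℂ) : ℂ := ∑' J, a J * (PN_N J : ℂ) ^ (-s)

/-- the logarithmic derivative series -/
noncomputable def PN_S (a : (Ideal (𝓞 K))⁰ →* ℂ) (s : ℂ) : ℂ :=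
  ∑' q : (Ideal (𝓞 K))⁰ × ℕ, (PN_w q.1 : ℂ) * (a (q.1 ^ (q.2 + 1)) * (PN_N (q.1 ^ (q.2 + 1)) : ℂ) ^ (-s))

/-- `b_s(J) = a(J) N(J)^{-s}` is multiplicative -/
theorem PN_term_mul (a : (Ideal (𝓞 K))⁰ →* ℂ) (s : ℂ) (I J : (Ideal (𝓞 K))⁰) :
    a (I * J) * (PN_N (I * J) : ℂ) ^ (-s) =
      (a I * (PN_N I : ℂ) ^ (-s)) * (a J * (PN_N J : ℂ) ^ (-s)) := by
  rw [map_mul, PN_N_mul]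
  push_cast
  rw [Complex.natCast_mul_natCast_cpow]
  ring

theorem PN_term_norm_le (a : (Ideal (𝓞 K))⁰ →* ℂ) (ha : ∀ J, ‖a J‖ ≤ 1) (s : ℂ) (J : (Ideal (𝓞 K))⁰) :
    ‖a J * (PN_N J : ℂ) ^ (-s)‖ ≤ (PN_N J : ℝ) ^ (-s.re) := by
  rw [norm_mul, PN_norm_cpow]
  have : (0:ℝ) ≤ (PN_N J : ℝ) ^ (-s.re) := by positivity
  nlinarith [ha J]

theorem PN_logsum {σ : ℝ} (hσ : 1 < σ) :
    Summable fun J : (Ideal (𝓞 K))⁰ => Real.log (PN_N J) * (PN_N J : ℝ) ^ (-σ) := by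
  have hε : 0 < (σ - 1) / 2 := by linarith
  refine Summable.of_nonneg_of_le (fun J => ?_) (fun J => ?_)
    ((PN_hsum (K := K) ((σ + 1) / 2) (by linarith)).mul_left (1 / ((σ - 1) / 2)))
  · have := Real.log_nonneg (x := (PN_N J : ℝ)) (by exact_mod_cast PN_N_ge J)
    positivity
  · have h := Real.log_le_rpow_div (PN_N_pos J).le hε
    calc _ ≤ (PN_N J : ℝ) ^ ((σ - 1) / 2) / ((σ - 1) / 2) * (PN_N J : ℝ) ^ (-σ) := by gcongr
      _ = 1 / ((σ - 1) / 2) * ((PN_N J : ℝ) ^ ((σ - 1) / 2) * (PN_N J : ℝ) ^ (-σ)) := by ring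
      _ = _ := by
        rw [← Real.rpow_add (PN_N_pos J)]
        congr 2
        ring

theorem PN_S_term_le (P : (Ideal (𝓞 K))⁰) (k j : ℕ) (hj : j ≤ k) {σ : ℝ} (hσ : 1 ≤ σ) :
    PN_w P * (PN_N (P ^ (k + 1)) : ℝ) ^ (-σ) ≤
      (PN_w P * (PN_N P : ℝ) ^ (-((j + 1) * σ))) * (1 / 2 : ℝ) ^ (k - j) := by
  by_cases hw : PN_w P = 0
  · simp [hw]
  obtain ⟨-, h2⟩ := PN_w_ne hw
  have h2' : (2:ℝ) ≤ PN_N P := by exact_mod_cast h2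
  rw [mul_assoc]
  refine mul_le_mul_of_nonneg_left ?_ (PN_w_nonneg P)
  obtain ⟨d, rfl⟩ := Nat.exists_eq_add_of_le hj
  rw [PN_N_pow]
  push_cast
  rw [← Real.rpow_natCast, ← Real.rpow_mul (PN_N_pos P).le]
  have e : (((j + d + 1 : ℕ) : ℝ) * -σ) = -((j + 1) * σ) + (-σ) * (d : ℝ) := by push_cast; ring
  rw [e, Real.rpow_add (PN_N_pos P), Real.rpow_mul (PN_N_pos P).le, Real.rpow_natCast]
  have : (PN_N P : ℝ) ^ (-σ) ≤ 1 / 2 := by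
    calc (PN_N P : ℝ) ^ (-σ) ≤ (PN_N P : ℝ) ^ (-1 : ℝ) := by
          apply Real.rpow_le_rpow_of_exponent_le (by linarith); linarith
      _ = (PN_N P : ℝ)⁻¹ := Real.rpow_neg_one _
      _ ≤ 1 / 2 := by
        rw [one_div]
        exact inv_anti₀ (by norm_num) h2'
  have hd : j + d - j = d := by omega
  rw [hd]
  gcongr

theorem PN_S_summable {σ : ℝ} (hσ : 1 < σ) :
    Summable fun q : (Ideal (𝓞 K))⁰ × ℕ => PN_w q.1 * (PN_N (q.1 ^ (q.2 + 1)) : ℝ) ^ (-σ) := by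
  have h1 : Summable fun J : (Ideal (𝓞 K))⁰ => PN_w J * (PN_N J : ℝ) ^ (-σ) := by
    refine Summable.of_nonneg_of_le (fun J => ?_) (fun J => ?_) (PN_logsum (K := K) hσ)
    · have := PN_w_nonneg J; positivity
    · have := PN_w_le J; gcongr
  have h2 : Summable fun k : ℕ => (1 / 2 : ℝ) ^ k := summable_geometric_two
  refine Summable.of_nonneg_of_le (fun q => ?_) (fun q => ?_)
    (h1.mul_of_nonneg h2 (fun J => ?_) (fun k => by positivity))
  · have := PN_w_nonneg q.1; positivity
  · have := PN_S_term_le q.1 q.2 0 (Nat.zero_le _) hσ.le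
    simpa using this
  · have := PN_w_nonneg J
    simp only [Pi.zero_apply]
    positivity

theorem PN_S_norm_summable (a : (Ideal (𝓞 K))⁰ →* ℂ) (ha : ∀ J, ‖a J‖ ≤ 1) {s : ℂ} (hs : 1 < s.re) :
    Summable fun q : (Ideal (𝓞 K))⁰ × ℕ =>
      ‖(PN_w q.1 : ℂ) * (a (q.1 ^ (q.2 + 1)) * (PN_N (q.1 ^ (q.2 + 1)) : ℂ) ^ (-s))‖ := by
  refine Summable.of_nonneg_of_le (fun q => norm_nonneg _) (fun q => ?_) (PN_S_summable (K := K) hs)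
  rw [norm_mul, norm_real, Real.norm_of_nonneg (PN_w_nonneg _)]
  exact mul_le_mul_of_nonneg_left (PN_term_norm_le a ha s _) (PN_w_nonneg _)

theorem PN_L_norm_summable (a : (Ideal (𝓞 K))⁰ →* ℂ) (ha : ∀ J, ‖a J‖ ≤ 1) {s : ℂ} (hs : 1 < s.re) :
    Summable fun J : (Ideal (𝓞 K))⁰ => ‖a J * (PN_N J : ℂ) ^ (-s)‖ :=
  Summable.of_nonneg_of_le (fun q => norm_nonneg _) (fun J => PN_term_norm_le a ha s J) (PN_hsum (K := K) _ hs)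

theorem PN_sigma_equiv {M : Type*} [CommMonoid M] [IsCancelMul M] :
    ∃ e : (Σ J : M, {q : M × ℕ // q.1 ^ (q.2 + 1) ∣ J}) ≃ M × (M × ℕ),
      ∀ y, (e.symm y).1 = y.1 * y.2.1 ^ (y.2.2 + 1) ∧ (e.symm y).2.1 = y.2 := by
  refine ⟨(Equiv.ofBijective (fun x : M × (M × ℕ) => (⟨x.1 * x.2.1 ^ (x.2.2 + 1), ⟨x.2, Dvd.intro_left _ rfl⟩⟩ :
      Σ J : M, {q : M × ℕ // q.1 ^ (q.2 + 1) ∣ J})) ⟨?_, ?_⟩).symm, fun y => ⟨rfl, rfl⟩⟩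
  · rintro ⟨E, P, k⟩ ⟨E', P', k'⟩ h
    rw [Sigma.mk.injEq] at h
    obtain ⟨h1, h2⟩ := h
    have h3 : (P, k) = (P', k') :=
      (Subtype.heq_iff_coe_eq (by intro q; dsimp only at h1; rw [h1])).1 h2
    obtain ⟨rfl, rfl⟩ := Prod.mk.inj h3
    dsimp only at h1
    rw [mul_left_inj] at h1
    rw [h1]
  · rintro ⟨J, ⟨P, k⟩, hq⟩
    obtain ⟨E, hE⟩ := hq
    dsimp only at hE
    refine ⟨(E, P, k), ?_⟩
    subst hE
    rw [Sigma.mk.injEq]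
    refine ⟨mul_comm _ _, ?_⟩
    rw [Subtype.heq_iff_coe_eq (by intro q; dsimp only; rw [mul_comm])]

theorem PN_abs_mul {M : Type*} [CommMonoid M] [IsCancelMul M] (b : M → ℂ) (hbm : ∀ I J, b (I * J) = b I * b J)
    (w ℓ : M → ℝ) (hw : ∀ J, HasSum (fun q : {q : M × ℕ // q.1 ^ (q.2 + 1) ∣ J} => w q.1.1) (ℓ J))
    (hL : Summable fun J => ‖b J‖) (hS : Summable fun q : M × ℕ => ‖(w q.1 : ℂ) * b (q.1 ^ (q.2 + 1))‖) :
    (∑' J, b J) * (∑' q : M × ℕ, (w q.1 : ℂ) * b (q.1 ^ (q.2 + 1))) = ∑' J, (ℓ J : ℂ) * b J := by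
  have h1 := tsum_mul_tsum_of_summable_norm hL hS
  have hsm := summable_mul_of_summable_norm hL hS
  rw [h1]
  obtain ⟨e, hes⟩ := PN_sigma_equiv (M := M)
  have he : ∀ x, b (e x).1 * ((w (e x).2.1 : ℂ) * b ((e x).2.1 ^ ((e x).2.2 + 1))) = b x.1 * (w x.2.1.1 : ℂ) := by
    intro x
    obtain ⟨y, rfl⟩ := e.symm.surjective x
    rw [Equiv.apply_symm_apply, (hes y).2, (hes y).1, hbm]
    ring
  have hsm2 := (e.summable_iff).2 hsm
  simp only [Function.comp_def, he] at hsm2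
  rw [← e.tsum_eq]
  simp only [he]
  rw [Summable.tsum_sigma hsm2]
  refine tsum_congr fun J => ?_
  dsimp only
  rw [tsum_mul_left, mul_comm]
  congr 1
  exact ((hasSum_ofReal).2 (hw J)).tsum_eq

instance PN_cancel : IsCancelMul (Ideal (𝓞 K))⁰ where
  mul_left_cancel a b c h := by
    have h' : (a : Ideal (𝓞 K)) * b = a * c := congrArg Subtype.val h
    exact Subtype.ext (mul_left_cancel₀ (nonZeroDivisors.ne_zero a.2) h')
  mul_right_cancel a b c h := by
    have h' : (b : Ideal (𝓞 K)) * a = c * a := congrArg Subtype.val h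
    exact Subtype.ext (mul_right_cancel₀ (nonZeroDivisors.ne_zero a.2) h')

theorem PN_L_mul_S (a : (Ideal (𝓞 K))⁰ →* ℂ) (ha : ∀ J, ‖a J‖ ≤ 1) {s : ℂ} (hs : 1 < s.re) :
    PN_L a s * PN_S a s = ∑' J, (Real.log (PN_N J) : ℂ) * (a J * (PN_N J : ℂ) ^ (-s)) :=
  PN_abs_mul (fun J => a J * (PN_N J : ℂ) ^ (-s)) (PN_term_mul a s) PN_w (fun J => Real.log (PN_N J)) PN_log_eq
    (PN_L_norm_summable a ha hs) (PN_S_norm_summable a ha hs)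

theorem PN_L_hasDerivAt (a : (Ideal (𝓞 K))⁰ →* ℂ) (ha : ∀ J, ‖a J‖ ≤ 1) {s : ℂ} (hs : 1 < s.re) :
    HasDerivAt (PN_L a) (-(PN_L a s * PN_S a s)) s := by
  set U : Set ℂ := {z | (1 + s.re) / 2 < z.re} with hU
  have hUo : IsOpen U := isOpen_lt continuous_const continuous_re
  have hsU : s ∈ U := by simp only [hU, mem_setOf_eq]; linarith
  have hN0 : ∀ J : (Ideal (𝓞 K))⁰, (PN_N J : ℂ) ≠ 0 := fun J => by
    have := PN_N_ge J
    exact_mod_cast (by omega : PN_N J ≠ 0)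
  have hder : ∀ (J : (Ideal (𝓞 K))⁰) (z : ℂ), HasDerivAt (fun z => a J * (PN_N J : ℂ) ^ (-z))
      (-((Real.log (PN_N J) : ℂ) * (a J * (PN_N J : ℂ) ^ (-z)))) z := by
    intro J z
    have := ((hasDerivAt_neg z).const_cpow (c := (PN_N J : ℂ)) (Or.inl (hN0 J))).const_mul (a J)
    refine this.congr_deriv ?_
    rw [← ofReal_natCast, ofReal_log (PN_N_pos J).le]
    ring
  have hbd : ∀ (J : (Ideal (𝓞 K))⁰) (z : ℂ), z ∈ U → ‖a J * (PN_N J : ℂ) ^ (-z)‖ ≤ (PN_N J : ℝ) ^ (-((1 + s.re) / 2)) := by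
    intro J z hz
    refine (PN_term_norm_le a ha z J).trans ?_
    apply Real.rpow_le_rpow_of_exponent_le (by exact_mod_cast PN_N_ge J)
    have : (1 + s.re) / 2 < z.re := hz
    linarith
  have hsm := PN_hsum (K := K) ((1 + s.re) / 2) (by linarith)
  have h1 := Complex.hasSum_deriv_of_summable_norm hsm (fun J z hz => (hder J z).differentiableAt.differentiableWithinAt) hUo hbd hsU
  have h2 := Complex.differentiableOn_tsum_of_summable_norm hsm (fun J z hz => (hder J z).differentiableAt.differentiableWithinAt) hUo hbd
  have h3 := (h2.differentiableAt (hUo.mem_nhds hsU)).hasDerivAt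
  refine HasDerivAt.congr_deriv (f := PN_L a) h3 ?_
  rw [PN_L_mul_S a ha hs, ← tsum_neg, ← h1.tsum_eq]
  exact tsum_congr fun J => (hder J s).deriv

end LogDeriv

end P5bsec

section P5csec
section OrderLemma

open MeasureTheory Set Filter Topology Complex NumberField
open scoped Classical nonZeroDivisors

theorem PN_order {f : ℂ → ℂ} {z₀ : ℂ} (hf : AnalyticAt ℂ f z₀) (hne : ¬ ∀ᶠ z in 𝓝 z₀, f z = 0) :
    ∃ m : ℕ, (m = 0 ↔ f z₀ ≠ 0) ∧ (∀ᶠ z in 𝓝[≠] z₀, f z ≠ 0) ∧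
      Tendsto (fun z => (z - z₀) * (deriv f z / f z)) (𝓝[≠] z₀) (𝓝 m) := by
  obtain ⟨m, k, hk, hk0, hev⟩ := (hf.exists_eventuallyEq_pow_smul_nonzero_iff).2 hne
  refine ⟨m, ?_, ?_, ?_⟩
  · have := hev.self_of_nhds
    rw [this, sub_self, smul_eq_mul]
    rcases Nat.eq_zero_or_pos m with rfl | hm
    · simpa using hk0
    · rw [zero_pow hm.ne']; simp; omega
  · have h1 : ∀ᶠ z in 𝓝[≠] z₀, k z ≠ 0 := (hk.continuousAt.eventually_ne hk0).filter_mono nhdsWithin_le_nhds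
    filter_upwards [h1, hev.filter_mono nhdsWithin_le_nhds, self_mem_nhdsWithin] with z h1 h2 h3
    rw [h2, smul_eq_mul]
    exact mul_ne_zero (pow_ne_zero _ (sub_ne_zero.2 h3)) h1
  · have h1 : ∀ᶠ z in 𝓝[≠] z₀, k z ≠ 0 := (hk.continuousAt.eventually_ne hk0).filter_mono nhdsWithin_le_nhds
    have h4 : ∀ᶠ z in 𝓝[≠] z₀, (z - z₀) * (deriv f z / f z) = m + (z - z₀) * (deriv k z / k z) := by
      filter_upwards [h1, hev.eventually_nhds.filter_mono nhdsWithin_le_nhds, self_mem_nhdsWithin,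
        hk.eventually_analyticAt.filter_mono nhdsWithin_le_nhds] with z h1 h2 h3 h4
      have h3' : z - z₀ ≠ 0 := sub_ne_zero.2 h3
      have hd : HasDerivAt (fun z => (z - z₀) ^ m * k z)
          ((m * (z - z₀) ^ (m - 1) * 1) * k z + (z - z₀) ^ m * deriv k z) z :=
        (((hasDerivAt_id z).sub_const z₀).pow m).mul h4.differentiableAt.hasDerivAt
      have hfd : deriv f z = _ := (hd.congr_of_eventuallyEq h2).deriv
      rw [hfd, h2.self_of_nhds, smul_eq_mul]
      rcases Nat.eq_zero_or_pos m with rfl | hm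
      · simp
      · obtain ⟨j, rfl⟩ := Nat.exists_eq_succ_of_ne_zero hm.ne'
        simp only [Nat.succ_eq_add_one, Nat.add_sub_cancel]
        field_simp
        ring
    refine Tendsto.congr' (EventuallyEq.symm h4) ?_
    have h5 : ContinuousAt (fun z => (m : ℂ) + (z - z₀) * (deriv k z / k z)) z₀ := by
      have := hk.deriv.continuousAt
      have := hk.continuousAt
      fun_prop (disch := assumption)
    have := h5.tendsto
    simp only [sub_self, zero_mul, add_zero] at this
    exact this.mono_left nhdsWithin_le_nhds

end OrderLemma

end P5csec

section P5dsec
section LimitS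

open MeasureTheory Set Filter Topology Complex NumberField
open scoped Classical nonZeroDivisors

variable {K : Type*} [Field K] [NumberField K] {g : ℝ → ℝ} {B : ℝ}

theorem PN_L_tendsto_one (a : (Ideal (𝓞 K))⁰ →* ℂ) (ha : ∀ J, ‖a J‖ ≤ 1) :
    Tendsto (fun σ : ℝ => PN_L a σ) atTop (𝓝 1) := by
  have h : Tendsto (fun σ : ℝ => ∑' J, a J * (PN_N J : ℂ) ^ (-(σ : ℂ))) atTop
      (𝓝 (∑' J : (Ideal (𝓞 K))⁰, if J = 1 then 1 else 0)) := by
    refine tendsto_tsum_of_dominated_convergence (PN_hsum (K := K) 2 (by norm_num)) ?_ ?_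
    · intro J
      split_ifs with hJ
      · subst hJ
        simp [PN_N_one]
      · have h2 : PN_N J ≠ 1 := fun h => hJ (PN_N_eq_one.1 h)
        have h3 : 1 < (PN_N J : ℝ) := by
          have := PN_N_ge J
          exact_mod_cast (by omega : 1 < PN_N J)
        rw [tendsto_zero_iff_norm_tendsto_zero]
        refine squeeze_zero (fun _ => norm_nonneg _) (fun σ => PN_term_norm_le a ha σ J) ?_
        have := tendsto_rpow_atTop_of_base_lt_one ((PN_N J : ℝ)⁻¹) (by have := PN_N_pos J; have := inv_pos.2 this; linarith) (inv_lt_one_of_one_lt₀ h3)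
        refine this.congr fun σ => ?_
        rw [Real.inv_rpow (PN_N_pos J).le, ← Real.rpow_neg (PN_N_pos J).le, ofReal_re]
    · filter_upwards [eventually_ge_atTop 2] with σ hσ J
      refine (PN_term_norm_le a ha σ J).trans ?_
      apply Real.rpow_le_rpow_of_exponent_le (by exact_mod_cast PN_N_ge J)
      simp only [ofReal_re]
      linarith
  rw [tsum_ite_eq] at h
  exact h

/-- regularised Mellin transform -/
noncomputable def PN_H (g : ℝ → ℝ) (a : (Ideal (𝓞 K))⁰ →* ℂ) (c : ℂ) : ℂ → ℂ :=
  mellin (fun t => PN_T PN_N g a t - c * (Ioc (0:ℝ) 1).indicator (fun t => (t : ℂ) ^ (-1 : ℂ)) t)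

theorem PN_H_zero (a : (Ideal (𝓞 K))⁰ →* ℂ) : PN_H g a 0 = mellin (PN_T PN_N g a) := by
  simp [PN_H]

theorem PN_H_props (hB : 1 ≤ B) (gc : Continuous g) (gB : ∀ v, B ≤ v → g v = 0)
    (a : (Ideal (𝓞 K))⁰ →* ℂ) (c : ℂ)
    (hM : ∃ M : ℝ, ∀ t ∈ Ioc (0:ℝ) 1, ‖PN_T PN_N g a t - c / t‖ ≤ M) {s : ℂ} (hs : 0 < s.re) :
    DifferentiableAt ℂ (PN_H g a c) s ∧
    MellinConvergent (fun t => PN_T PN_N g a t - c * (Ioc (0:ℝ) 1).indicator (fun t => (t : ℂ) ^ (-1 : ℂ)) t) s := by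
  have hB0 : 0 < B := by linarith
  have h1 : LocallyIntegrableOn (fun t : ℝ => PN_T PN_N g a t - c * (Ioc (0:ℝ) 1).indicator (fun t : ℝ => (t : ℂ) ^ (-1 : ℂ)) t) (Ioi 0) := by
    refine LocallyIntegrableOn.sub ?_ ?_
    · exact (PN_T_continuousOn PN_hfin hB0 gc gB a).locallyIntegrableOn measurableSet_Ioi
    · have h2 : LocallyIntegrableOn (fun t : ℝ => (c : ℂ) * (t : ℂ) ^ (-1 : ℂ)) (Ioi 0) := by
        refine ContinuousOn.locallyIntegrableOn ?_ measurableSet_Ioi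
        refine continuousOn_const.mul ?_
        intro t ht
        have ht' : 0 < t := ht
        exact (continuousAt_ofReal_cpow_const _ _ (Or.inr ht'.ne')).continuousWithinAt
      intro x hx
      obtain ⟨S, hS, hi⟩ := h2 x hx
      refine ⟨S, hS, ?_⟩
      have h3 := Integrable.indicator hi (measurableSet_Ioc (a := (0:ℝ)) (b := 1))
      refine h3.congr (ae_of_all _ fun t => ?_)
      by_cases ht : t ∈ Ioc (0:ℝ) 1 <;> simp only [indicator_of_mem, indicator_of_notMem, ht, not_false_eq_true, mul_zero]
  have htop : (fun t : ℝ => PN_T PN_N g a t - c * (Ioc (0:ℝ) 1).indicator (fun t : ℝ => (t : ℂ) ^ (-1 : ℂ)) t) =O[atTop] fun t : ℝ => t ^ (-(s.re + 1)) := by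
    refine Asymptotics.IsBigO.of_bound 1 ?_
    filter_upwards [eventually_gt_atTop B] with t ht
    rw [PN_T_zero PN_N_ge hB0 gB a ht.le, indicator_of_notMem (by simp only [mem_Ioc, not_and, not_le]; intro _; linarith)]
    simp only [mul_zero, sub_zero, norm_zero]
    positivity
  have hbot : (fun t : ℝ => PN_T PN_N g a t - c * (Ioc (0:ℝ) 1).indicator (fun t : ℝ => (t : ℂ) ^ (-1 : ℂ)) t) =O[𝓝[>] 0] fun t : ℝ => t ^ (-(0:ℝ)) := by
    obtain ⟨M, hM⟩ := hM
    refine Asymptotics.IsBigO.of_bound M ?_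
    have : Ioc (0:ℝ) 1 ∈ 𝓝[>] (0:ℝ) := Ioc_mem_nhdsGT (by norm_num)
    filter_upwards [this] with t ht
    rw [indicator_of_mem ht, cpow_neg_one, ← div_eq_mul_inv]
    simpa using hM t ht
  exact ⟨mellin_differentiableAt_of_isBigO_rpow h1 htop (by linarith) hbot hs,
    mellinConvergent_of_isBigO_rpow h1 htop (by linarith) hbot hs⟩

theorem PN_H_eq (hB : 1 ≤ B) (gc : Continuous g) (g0 : ∀ v ≤ 1 / 4, g v = 0) (gB : ∀ v, B ≤ v → g v = 0)
    (a : (Ideal (𝓞 K))⁰ →* ℂ) (ha : ∀ J, ‖a J‖ ≤ 1) (c : ℂ)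
    (hM : ∃ M : ℝ, ∀ t ∈ Ioc (0:ℝ) 1, ‖PN_T PN_N g a t - c / t‖ ≤ M) {s : ℂ} (hs : 1 < s.re) :
    PN_H g a c s = mellin (fun t => (g t : ℂ)) s * PN_L a s - c / (s - 1) := by
  have h1 := (PN_H_props hB gc gB a c hM (s := s) (by linarith)).2
  have h2 := hasMellin_cpow_Ioc (-1) (s := s) (by simp; linarith)
  have h2' := hasMellin_const_smul h2.1 c
  have h3 := hasMellin_add h1 h2'.1
  have h4 := PN_T_mellin (ι := (Ideal (𝓞 K))⁰) (N := PN_N) PN_N_ge PN_hsum gc g0 gB a ha hs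
  have h5 : mellin (PN_T PN_N g a) s = PN_H g a c s + c / (s - 1) := by
    have := h3.2
    rw [h2'.2, h2.2] at this
    simp only [smul_eq_mul, sub_add_cancel] at this
    rw [this, PN_H, mul_one_div]
    rfl
  rw [PN_L, ← h4, h5]
  ring

theorem PN_S_limit (hB : 1 ≤ B) (gc : Continuous g) (g0 : ∀ v ≤ 1 / 4, g v = 0) (gB : ∀ v, B ≤ v → g v = 0)
    (gnn : ∀ v, 0 ≤ g v) (g1 : g 1 ≠ 0)
    (a : (Ideal (𝓞 K))⁰ →* ℂ) (ha : ∀ J, ‖a J‖ ≤ 1) (c : ℂ)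
    (hM : ∃ M : ℝ, ∀ t ∈ Ioc (0:ℝ) 1, ‖PN_T PN_N g a t - c / t‖ ≤ M) :
    ∃ m : ℕ, (c ≠ 0 → m = 0) ∧ (c = 0 → (m = 0 ↔ mellin (PN_T PN_N g a) 1 ≠ 0)) ∧
      Tendsto (fun s => (s - 1) * PN_S a s) (𝓝[{s : ℂ | 1 < s.re}] 1) (𝓝 ((if c = 0 then 0 else 1) - m)) := by
  set G := mellin (fun t => (g t : ℂ)) with hG
  have hGd : Differentiable ℂ G := fun s => PN_g_mellin_diff gc g0 gB s
  have hG1 : G 1 ≠ 0 := by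
    have := PN_g_mellin_ne gc g0 gB gnn g1 1
    simpa using this
  set e : ℕ := if c = 0 then 0 else 1 with he
  set f : ℂ → ℂ := fun s => (s - 1) ^ e * PN_H g a c s + c with hf
  have hUo : IsOpen {s : ℂ | 0 < s.re} := isOpen_lt continuous_const continuous_re
  have hVo : IsOpen {s : ℂ | 1 < s.re} := isOpen_lt continuous_const continuous_re
  have hfd : DifferentiableOn ℂ f {s | 0 < s.re} := by
    intro s hs
    have := (PN_H_props hB gc gB a c hM hs).1
    have h2 : DifferentiableAt ℂ f s := by
      simp only [hf]
      fun_prop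
    exact h2.differentiableWithinAt
  have hfan : AnalyticOnNhd ℂ f {s | 0 < s.re} := hfd.analyticOnNhd hUo
  have hfeq : ∀ s : ℂ, 1 < s.re → f s = (s - 1) ^ e * (G s * PN_L a s) := by
    intro s hs
    have hs1 : s - 1 ≠ 0 := by
      intro h
      rw [sub_eq_zero] at h
      rw [h] at hs
      simp at hs
    simp only [hf, he]
    rw [PN_H_eq hB gc g0 gB a ha c hM hs, ← hG]
    split_ifs with hc
    · simp [hc]
    · field_simp
      ring
  have hne : ¬ ∀ᶠ z in 𝓝 1, f z = 0 := by
    intro hz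
    have hconv : Convex ℝ {s : ℂ | 0 < s.re} := convex_halfSpace_re_gt 0
    have h0 := hfan.eqOn_zero_of_preconnected_of_eventuallyEq_zero hconv.isPreconnected (z₀ := 1) (by simp) hz
    have hL0 : ∀ σ : ℝ, 1 < σ → PN_L a σ = 0 := by
      intro σ hσ
      have h1 := h0 (show (σ : ℂ) ∈ {s : ℂ | 0 < s.re} by simp; linarith)
      rw [hfeq σ (by simpa using hσ)] at h1
      have h2 : ((σ : ℂ) - 1) ^ e ≠ 0 := by
        apply pow_ne_zero
        norm_cast
        exact sub_ne_zero.2 hσ.ne'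
      have h3 := PN_g_mellin_ne gc g0 gB gnn g1 σ
      simpa [h2, h3, hG] using h1
    have h3 : Tendsto (fun σ : ℝ => PN_L a σ) atTop (𝓝 0) :=
      Tendsto.congr' (by filter_upwards [eventually_gt_atTop 1] with σ hσ using (hL0 σ hσ).symm) tendsto_const_nhds
    exact zero_ne_one (tendsto_nhds_unique h3 (PN_L_tendsto_one a ha))
  obtain ⟨m, hm0, hmne, hmt⟩ := PN_order (hfan 1 (by simp)) hne
  have hsub : {s : ℂ | 1 < s.re} ⊆ {1}ᶜ := by
    intro s hs h
    rw [mem_singleton_iff] at h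
    rw [h] at hs
    simp at hs
  refine ⟨m, ?_, ?_, ?_⟩
  · intro hc
    rw [hm0]
    simp [hf, he, hc]
  · intro hc
    rw [hm0, ← PN_H_zero]
    simp [hf, he, hc]
  · have hle : 𝓝[{s : ℂ | 1 < s.re}] 1 ≤ 𝓝[≠] 1 := nhdsWithin_mono _ hsub
    have hle2 : 𝓝[{s : ℂ | 1 < s.re}] 1 ≤ 𝓝 1 := nhdsWithin_le_nhds
    have h1 := hmt.mono_left hle
    have hGc : ContinuousAt (fun s => (s - 1) * (deriv G s / G s)) 1 := by
      have ha1 : AnalyticAt ℂ G 1 := hGd.analyticAt 1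
      have := ha1.deriv.continuousAt
      have := ha1.continuousAt
      fun_prop (disch := assumption)
    have h2 : Tendsto (fun s => (s - 1) * (deriv G s / G s)) (𝓝[{s : ℂ | 1 < s.re}] 1) (𝓝 0) := by
      have := hGc.tendsto.mono_left hle2
      simpa using this
    have h3 : Tendsto (fun s => (e : ℂ) + (s - 1) * (deriv G s / G s) - (s - 1) * (deriv f s / f s))
        (𝓝[{s : ℂ | 1 < s.re}] 1) (𝓝 ((e : ℂ) + 0 - m)) := (tendsto_const_nhds.add h2).sub h1
    have hee : (e : ℂ) + 0 - m = (if c = 0 then 0 else 1) - m := by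
      simp only [he]
      split_ifs <;> simp
    rw [hee] at h3
    refine h3.congr' ?_
    filter_upwards [self_mem_nhdsWithin, hmne.filter_mono hle] with s hs hfs
    have hs' : 1 < s.re := hs
    have hfs' := hfs
    rw [hfeq s hs'] at hfs'
    have hL : PN_L a s ≠ 0 := fun h => hfs' (by simp [h])
    have hGs : G s ≠ 0 := fun h => hfs' (by simp [h])
    have hs1 : s - 1 ≠ 0 := sub_ne_zero.2 (hsub hs)
    have hder : HasDerivAt f ((e * (s - 1) ^ (e - 1) * 1) * (G s * PN_L a s) +
        (s - 1) ^ e * (deriv G s * PN_L a s + G s * (-(PN_L a s * PN_S a s)))) s := by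
      have h4 : HasDerivAt (fun s => (s - 1) ^ e * (G s * PN_L a s)) ((e * (s - 1) ^ (e - 1) * 1) * (G s * PN_L a s) +
        (s - 1) ^ e * (deriv G s * PN_L a s + G s * (-(PN_L a s * PN_S a s)))) s :=
        (((hasDerivAt_id s).sub_const 1).pow e).mul ((hGd s).hasDerivAt.mul (PN_L_hasDerivAt a ha hs'))
      refine h4.congr_of_eventuallyEq ?_
      filter_upwards [hVo.mem_nhds hs] with z hz using hfeq z hz
    rw [hder.deriv, hfeq s hs']
    rcases Nat.eq_zero_or_pos e with h0 | h0
    · rw [h0]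
      simp
      field_simp
      ring
    · have : e = 1 := by
        simp only [he] at h0 ⊢
        split_ifs at h0 ⊢ <;> simp_all
      rw [this]
      simp
      field_simp
      ring

end LimitS

end P5dsec

section P5esec
section Chars

open MeasureTheory Set Filter Topology Complex NumberField
open scoped Classical nonZeroDivisors ComplexConjugate

variable {K : Type*} [Field K] [NumberField K] {g : ℝ → ℝ} {B : ℝ}

/-- class group character as function on ideals -/
noncomputable def PN_chi (ψ : AddChar (Additive (ClassGroup (𝓞 K))) ℂ) : (Ideal (𝓞 K))⁰ →* ℂ where
  toFun J := ψ (Additive.ofMul (ClassGroup.mk0 J))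
  map_one' := by simp
  map_mul' I J := by simp [AddChar.map_add_eq_mul]

theorem PN_chi_apply (ψ : AddChar (Additive (ClassGroup (𝓞 K))) ℂ) (J : (Ideal (𝓞 K))⁰) :
    PN_chi ψ J = ψ (Additive.ofMul (ClassGroup.mk0 J)) := rfl

theorem PN_chi_norm (ψ : AddChar (Additive (ClassGroup (𝓞 K))) ℂ) (J : (Ideal (𝓞 K))⁰) :
    ‖PN_chi ψ J‖ ≤ 1 := (AddChar.norm_apply ψ _).le

theorem PN_T_chi (hB : 0 < B) (gB : ∀ v, B ≤ v → g v = 0) (ψ : AddChar (Additive (ClassGroup (𝓞 K))) ℂ)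
    {t : ℝ} (ht : 0 < t) :
    PN_T PN_N g (PN_chi ψ) t = ∑ C : ClassGroup (𝓞 K), ψ (Additive.ofMul C) *
      ((∑' J : {J : (Ideal (𝓞 K))⁰ // ClassGroup.mk0 J = C}, g (t * Ideal.absNorm (J.1 : Ideal (𝓞 K))) : ℝ) : ℂ) := by
  have hs := (PN_T_hasSum PN_hfin hB gB (PN_chi ψ) ht).summable
  let e := Equiv.sigmaFiberEquiv (fun J : (Ideal (𝓞 K))⁰ => ClassGroup.mk0 J)
  unfold PN_T
  have hs2 := e.summable_iff.2 hs
  rw [← e.tsum_eq]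
  simp only [Function.comp_def] at hs2
  rw [Summable.tsum_sigma hs2, tsum_fintype]
  refine Finset.sum_congr rfl fun C _ => ?_
  rw [ofReal_tsum, ← tsum_mul_left]
  refine tsum_congr fun J => ?_
  have h1 : e ⟨C, J⟩ = J.1 := rfl
  rw [h1, PN_chi_apply, J.2]
  rfl

theorem PN_chi_bound (hB : 0 < B) (gB : ∀ v, B ≤ v → g v = 0) {c : ℝ} (hc : ∀ C : ClassGroup (𝓞 K), ∃ M : ℝ, ∀ t ∈ Ioc (0:ℝ) 1,
      |∑' J : {J : (Ideal (𝓞 K))⁰ // ClassGroup.mk0 J = C}, g (t * Ideal.absNorm (J.1 : Ideal (𝓞 K))) - c / t| ≤ M)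
    (ψ : AddChar (Additive (ClassGroup (𝓞 K))) ℂ) :
    ∃ M : ℝ, ∀ t ∈ Ioc (0:ℝ) 1, ‖PN_T PN_N g (PN_chi ψ) t -
      (c * ∑ C, ψ C : ℂ) / t‖ ≤ M := by
  choose M hM using hc
  refine ⟨∑ C, M C, fun t ht => ?_⟩
  rw [PN_T_chi hB gB ψ ht.1]
  have : (c * ∑ C, ψ C : ℂ) / t = ∑ C : ClassGroup (𝓞 K), ψ (Additive.ofMul C) * ((c / t : ℝ) : ℂ) := by
    rw [← Finset.sum_mul]
    have : ∑ C, ψ C = ∑ C : ClassGroup (𝓞 K), ψ (Additive.ofMul C) :=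
      (Equiv.sum_comp (Additive.ofMul (α := ClassGroup (𝓞 K))) ψ).symm
    rw [this]
    push_cast
    ring
  rw [this, ← Finset.sum_sub_distrib]
  refine (norm_sum_le _ _).trans (Finset.sum_le_sum fun C _ => ?_)
  rw [← mul_sub, norm_mul, AddChar.norm_apply, one_mul, ← ofReal_sub, norm_real]
  exact hM C t ht

theorem PN_mellin_conj (ψ : AddChar (Additive (ClassGroup (𝓞 K))) ℂ) :
    mellin (PN_T PN_N g (PN_chi ψ⁻¹)) 1 = conj (mellin (PN_T PN_N g (PN_chi ψ)) 1) := by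
  have h : ∀ t, PN_T PN_N g (PN_chi ψ⁻¹) t = conj (PN_T PN_N g (PN_chi ψ) t) := by
    intro t
    unfold PN_T
    rw [Complex.conj_tsum]
    refine tsum_congr fun J => ?_
    rw [map_mul, conj_ofReal, PN_chi_apply, PN_chi_apply, AddChar.inv_apply, AddChar.map_neg_eq_conj]
  unfold mellin
  rw [← integral_conj]
  congr 1
  ext t
  simp [h]

/-- prime power sum in a class -/
noncomputable def PN_SC (C : ClassGroup (𝓞 K)) (σ : ℝ) : ℝ :=
  ∑' q : (Ideal (𝓞 K))⁰ × ℕ, (if ClassGroup.mk0 (q.1 ^ (q.2 + 1)) = C then PN_w q.1 * (PN_N (q.1 ^ (q.2 + 1)) : ℝ) ^ (-σ) else 0)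

theorem PN_orth (C : ClassGroup (𝓞 K)) {σ : ℝ} (hσ : 1 < σ) :
    ∑ ψ : AddChar (Additive (ClassGroup (𝓞 K))) ℂ, ψ (-Additive.ofMul C) * PN_S (PN_chi ψ) σ =
      Fintype.card (ClassGroup (𝓞 K)) * (PN_SC C σ : ℂ) := by
  unfold PN_S PN_SC
  have hs : ∀ ψ : AddChar (Additive (ClassGroup (𝓞 K))) ℂ, Summable fun q : (Ideal (𝓞 K))⁰ × ℕ =>
      ψ (-Additive.ofMul C) * ((PN_w q.1 : ℂ) * (PN_chi ψ (q.1 ^ (q.2 + 1)) * (PN_N (q.1 ^ (q.2 + 1)) : ℂ) ^ (-(σ : ℂ)))) := by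
    intro ψ
    exact (PN_S_norm_summable (PN_chi ψ) (PN_chi_norm ψ) (s := σ) (by simpa using hσ)).of_norm.mul_left _
  simp_rw [← tsum_mul_left]
  rw [← Summable.tsum_finsetSum (fun ψ _ => hs ψ), ofReal_tsum, ← tsum_mul_left]
  refine tsum_congr fun q => ?_
  have h1 : ∑ ψ : AddChar (Additive (ClassGroup (𝓞 K))) ℂ, ψ (-Additive.ofMul C) * PN_chi ψ (q.1 ^ (q.2 + 1)) =
      if ClassGroup.mk0 (q.1 ^ (q.2 + 1)) = C then (Fintype.card (ClassGroup (𝓞 K)) : ℂ) else 0 := by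
    have := AddChar.sum_apply_eq_ite (α := Additive (ClassGroup (𝓞 K))) (-Additive.ofMul C + Additive.ofMul (ClassGroup.mk0 (q.1 ^ (q.2 + 1))))
    simp only [AddChar.map_add_eq_mul] at this
    simp only [PN_chi_apply]
    rw [this]
    have hiff : (-Additive.ofMul C + Additive.ofMul (ClassGroup.mk0 (q.1 ^ (q.2 + 1))) = 0) ↔ ClassGroup.mk0 (q.1 ^ (q.2 + 1)) = C := by
      rw [neg_add_eq_zero, eq_comm]
      exact Additive.ofMul.injective.eq_iff
    simp only [hiff]
    rw [Fintype.card_additive]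
  have h2 : ∑ ψ : AddChar (Additive (ClassGroup (𝓞 K))) ℂ, ψ (-Additive.ofMul C) *
      ((PN_w q.1 : ℂ) * (PN_chi ψ (q.1 ^ (q.2 + 1)) * (PN_N (q.1 ^ (q.2 + 1)) : ℂ) ^ (-(σ : ℂ)))) =
      (∑ ψ : AddChar (Additive (ClassGroup (𝓞 K))) ℂ, ψ (-Additive.ofMul C) * PN_chi ψ (q.1 ^ (q.2 + 1))) *
      ((PN_w q.1 : ℂ) * (PN_N (q.1 ^ (q.2 + 1)) : ℂ) ^ (-(σ : ℂ))) := by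
    rw [Finset.sum_mul]
    refine Finset.sum_congr rfl fun ψ _ => ?_
    ring
  rw [h2, h1]
  split_ifs
  · rw [ofReal_mul, ofReal_cpow (PN_N_pos _).le]
    simp
  · simp

theorem PN_SC_nonneg (C : ClassGroup (𝓞 K)) (σ : ℝ) : 0 ≤ PN_SC C σ := by
  refine tsum_nonneg fun q => ?_
  have := PN_w_nonneg q.1
  split_ifs
  · positivity
  · rfl

theorem PN_tendsto_real : Tendsto (fun σ : ℝ => (σ : ℂ)) (𝓝[>] 1) (𝓝[{s : ℂ | 1 < s.re}] 1) := by
  refine tendsto_nhdsWithin_iff.2 ⟨?_, ?_⟩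
  · have : Tendsto (fun σ : ℝ => (σ : ℂ)) (𝓝 1) (𝓝 ((1:ℝ) : ℂ)) := continuous_ofReal.tendsto 1
    rw [ofReal_one] at this
    exact this.mono_left nhdsWithin_le_nhds
  · filter_upwards [self_mem_nhdsWithin] with σ hσ
    simpa using hσ

/-- summary of what the analytic theory says about a class -/
theorem PN_class_limit (hB : 1 ≤ B) (hg : ContDiff ℝ (⊤ : ℕ∞) g) (g0 : ∀ v ≤ 1 / 4, g v = 0) (gB : ∀ v, B ≤ v → g v = 0)
    (gnn : ∀ v, 0 ≤ g v) (g1 : g 1 ≠ 0) :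
    ∃ m : AddChar (Additive (ClassGroup (𝓞 K))) ℂ → ℕ, m 0 = 0 ∧
      (∀ ψ ≠ 0, (m ψ = 0 ↔ mellin (PN_T PN_N g (PN_chi ψ)) 1 ≠ 0)) ∧
      ∀ C : ClassGroup (𝓞 K), Tendsto (fun σ : ℝ => (((σ - 1) * (Fintype.card (ClassGroup (𝓞 K)) * PN_SC C σ) : ℝ) : ℂ)) (𝓝[>] 1)
        (𝓝 (1 - ∑ ψ : AddChar (Additive (ClassGroup (𝓞 K))) ℂ, ψ (-Additive.ofMul C) * m ψ)) := by
  obtain ⟨c, hc, hcount⟩ := PN_class_count (K := K) hg g0 gB gnn g1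
  have hB0 : 0 < B := by linarith
  have hlim := fun ψ : AddChar (Additive (ClassGroup (𝓞 K))) ℂ =>
    PN_S_limit hB hg.continuous g0 gB gnn g1 (PN_chi ψ) (PN_chi_norm ψ) (c * ∑ C, ψ C) (PN_chi_bound hB0 gB hcount ψ)
  have hcc : ∀ ψ : AddChar (Additive (ClassGroup (𝓞 K))) ℂ, (c * ∑ C, ψ C : ℂ) = 0 ↔ ψ ≠ 0 := by
    intro ψ
    rw [mul_eq_zero, ofReal_eq_zero, AddChar.sum_eq_zero_iff_ne_zero]
    simp [hc.ne']
  choose m hm1 hm2 hm3 using hlim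
  refine ⟨m, hm1 0 (by rw [Ne, hcc]; simp), fun ψ hψ => hm2 ψ ((hcc ψ).2 hψ), fun C => ?_⟩
  have h1 : Tendsto (fun σ : ℝ => ∑ ψ : AddChar (Additive (ClassGroup (𝓞 K))) ℂ,
      ψ (-Additive.ofMul C) * (((σ : ℂ) - 1) * PN_S (PN_chi ψ) σ)) (𝓝[>] 1)
      (𝓝 (∑ ψ : AddChar (Additive (ClassGroup (𝓞 K))) ℂ, ψ (-Additive.ofMul C) *
        ((if (c * ∑ C, ψ C : ℂ) = 0 then 0 else 1) - m ψ))) :=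
    tendsto_finsetSum _ fun ψ _ => ((hm3 ψ).comp PN_tendsto_real).const_mul _
  have h2 : ∑ ψ : AddChar (Additive (ClassGroup (𝓞 K))) ℂ, ψ (-Additive.ofMul C) *
        ((if (c * ∑ C, ψ C : ℂ) = 0 then 0 else 1) - m ψ) = 1 - ∑ ψ : AddChar (Additive (ClassGroup (𝓞 K))) ℂ, ψ (-Additive.ofMul C) * m ψ := by
    simp_rw [mul_sub]
    rw [Finset.sum_sub_distrib]
    congr 1
    simp only [hcc]
    rw [Finset.sum_eq_single 0]
    · simp
    · intro ψ _ hψ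
      simp [hψ]
    · simp
  rw [h2] at h1
  refine h1.congr' ?_
  filter_upwards [self_mem_nhdsWithin] with σ hσ
  push_cast
  rw [← PN_orth C hσ, Finset.mul_sum]
  refine Finset.sum_congr rfl fun ψ _ => ?_
  ring

/-- if no nontrivial quadratic character vanishes, we get the density statement -/
theorem PN_class_density (hB : 1 ≤ B) (hg : ContDiff ℝ (⊤ : ℕ∞) g) (g0 : ∀ v ≤ 1 / 4, g v = 0) (gB : ∀ v, B ≤ v → g v = 0)
    (gnn : ∀ v, 0 ≤ g v) (g1 : g 1 ≠ 0)
    (hquad : ∀ ψ : AddChar (Additive (ClassGroup (𝓞 K))) ℂ, ψ ≠ 0 → ψ⁻¹ = ψ → mellin (PN_T PN_N g (PN_chi ψ)) 1 ≠ 0)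
    (C : ClassGroup (𝓞 K)) :
    Tendsto (fun σ : ℝ => (σ - 1) * (Fintype.card (ClassGroup (𝓞 K)) * PN_SC C σ)) (𝓝[>] 1) (𝓝 1) := by
  obtain ⟨m, hm0, hm1, hm2⟩ := PN_class_limit (K := K) hB hg g0 gB gnn g1
  have hsum : ∑ ψ, m ψ ≤ 1 := by
    have h := hm2 1
    simp only [ofMul_one, neg_zero, AddChar.map_zero_eq_one, one_mul] at h
    have h2 := (continuous_re.tendsto _).comp h
    have h3 : (0:ℝ) ≤ (1 - ∑ ψ, (m ψ : ℂ)).re := by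
      refine ge_of_tendsto h2 ?_
      filter_upwards [self_mem_nhdsWithin] with σ hσ
      have hσ' : 1 < σ := hσ
      simp only [Function.comp, ofReal_re]
      have := PN_SC_nonneg (K := K) 1 σ
      have : 0 ≤ σ - 1 := by linarith
      positivity
    have h4 : (1 - ∑ ψ, (m ψ : ℂ)).re = 1 - ((∑ ψ, m ψ : ℕ) : ℝ) := by
      rw [← Nat.cast_sum, sub_re, one_re, natCast_re]
    rw [h4] at h3
    have : ((∑ ψ, m ψ : ℕ) : ℝ) ≤ 1 := by linarith
    exact_mod_cast this
  have hall : ∀ ψ, m ψ = 0 := by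
    intro ψ
    by_cases hψ : ψ = 0
    · rw [hψ, hm0]
    by_contra hne
    have hz : mellin (PN_T PN_N g (PN_chi ψ)) 1 = 0 := by
      by_contra h
      exact hne ((hm1 ψ hψ).2 h)
    have hinv : ψ⁻¹ ≠ ψ := fun h => hquad ψ hψ h hz
    have hψ' : ψ⁻¹ ≠ 0 := by
      intro h
      apply hψ
      have : ψ⁻¹ = 1 := h
      exact inv_eq_one.1 this
    have hne' : m ψ⁻¹ ≠ 0 := by
      intro h
      exact (hm1 _ hψ').1 h (by rw [PN_mellin_conj, hz, map_zero])
    have : m ψ⁻¹ + m ψ ≤ ∑ ψ, m ψ := by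
      rw [← Finset.sum_pair hinv]
      exact Finset.sum_le_sum_of_subset (Finset.subset_univ _)
    omega
  have h := (continuous_re.tendsto _).comp (hm2 C)
  simp only [hall, Nat.cast_zero, mul_zero, Finset.sum_const_zero, sub_zero, one_re] at h
  exact h

end Chars

end P5esec

section P6asec
section HighDegree

open MeasureTheory Set Filter Topology Complex NumberField
open scoped Classical nonZeroDivisors

variable {K : Type*} [Field K] [NumberField K]

theorem PN_norm_nat (m : ℕ) : Ideal.absNorm (Ideal.span {(m : 𝓞 K)}) = m ^ Module.finrank ℚ K := by
  rw [Ideal.absNorm_span_singleton]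
  have := Algebra.norm_algebraMap_of_basis (RingOfIntegers.basis K) (m : ℤ)
  rw [← Module.finrank_eq_card_basis (RingOfIntegers.basis K), RingOfIntegers.rank] at this
  have h : (algebraMap ℤ (𝓞 K)) (m : ℤ) = (m : 𝓞 K) := by simp
  rw [h] at this
  rw [this, Int.natAbs_pow, Int.natAbs_natCast]

theorem PN_primes_over_card (p : ℕ) (hp : p.Prime) (T : Finset (Ideal (𝓞 K)))
    (hT : ∀ P ∈ T, Prime P ∧ (p : 𝓞 K) ∈ P) : T.card ≤ Module.finrank ℚ K := by
  have h1 : ∏ P ∈ T, P ∣ Ideal.span {(p : 𝓞 K)} := by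
    refine Finset.prod_primes_dvd _ (fun P hP => (hT P hP).1) (fun P hP => ?_)
    rw [Ideal.dvd_span_singleton]
    exact (hT P hP).2
  have h2 : (∏ P ∈ T, Ideal.absNorm P) ∣ p ^ Module.finrank ℚ K := by
    rw [← PN_norm_nat (K := K), ← map_prod]
    exact map_dvd Ideal.absNorm h1
  have h3 : p ^ T.card ≤ ∏ P ∈ T, Ideal.absNorm P := by
    rw [← Finset.prod_const]
    refine Finset.prod_le_prod' fun P hP => ?_
    have hd : Ideal.absNorm P ∣ p ^ Module.finrank ℚ K := (Finset.dvd_prod_of_mem _ hP).trans h2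
    obtain ⟨j, -, hj⟩ := (Nat.dvd_prime_pow hp).1 hd
    have hj0 : j ≠ 0 := by
      rintro rfl
      rw [pow_zero, Ideal.absNorm_eq_one_iff, ← Ideal.isUnit_iff] at hj
      exact (hT P hP).1.not_unit hj
    rw [hj]
    exact Nat.le_self_pow hj0 p
  have h4 := h3.trans (Nat.le_of_dvd (pow_pos hp.pos _) h2)
  exact (Nat.pow_le_pow_iff_right hp.one_lt).1 h4

/-- the rational prime below -/
noncomputable def PN_p (P : (Ideal (𝓞 K))⁰) : ℕ := Ideal.absNorm (Ideal.under ℤ (P : Ideal (𝓞 K)))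

theorem PN_p_prime (P : (Ideal (𝓞 K))⁰) (hP : Prime (P : Ideal (𝓞 K))) :
    (PN_p P).Prime ∧ ((PN_p P : ℕ) : 𝓞 K) ∈ (P : Ideal (𝓞 K)) := by
  have : (P : Ideal (𝓞 K)).IsPrime := Ideal.isPrime_of_prime hP
  have : NeZero (P : Ideal (𝓞 K)) := ⟨hP.ne_zero⟩
  exact ⟨Nat.absNorm_under_prime _, Int.absNorm_under_mem _⟩

theorem PN_N_sq (P : (Ideal (𝓞 K))⁰) (hP : Prime (P : Ideal (𝓞 K))) (hN : ¬ (PN_N P).Prime) : PN_p P ^ 2 ≤ PN_N P := by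
  obtain ⟨hp, hm⟩ := PN_p_prime P hP
  have h1 : (P : Ideal (𝓞 K)) ∣ Ideal.span {((PN_p P : ℕ) : 𝓞 K)} := by
    rwa [Ideal.dvd_span_singleton]
  have h2 := map_dvd Ideal.absNorm h1
  rw [PN_norm_nat] at h2
  obtain ⟨j, -, hj⟩ := (Nat.dvd_prime_pow hp).1 h2
  change PN_N P = _ at hj
  have hj0 : j ≠ 0 := by
    rintro rfl
    rw [pow_zero, PN_N, Ideal.absNorm_eq_one_iff, ← Ideal.isUnit_iff] at hj
    exact hP.not_unit hj
  have hj1 : j ≠ 1 := by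
    rintro rfl
    rw [pow_one] at hj
    exact hN (hj ▸ hp)
  rw [hj]
  exact Nat.pow_le_pow_right hp.pos (by omega)

theorem PN_gen_high {ι : Type*} (N p : ι → ℕ) (w : ι → ℝ) (n : ℕ) (hp : ∀ i, 1 ≤ p i)
    (hfib : ∀ (q : ℕ) (T : Finset ι), (∀ i ∈ T, p i = q) → T.card ≤ n)
    (hsq : ∀ i, p i ^ 2 ≤ N i) (hw0 : ∀ i, 0 ≤ w i) (hw : ∀ i, w i ≤ Real.log (N i)) :
    Summable fun i => w i * (N i : ℝ)⁻¹ := by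
  have hcard : ∀ (X : ℕ) (T : Finset ι), (∀ P ∈ T, p P ≤ X) → T.card ≤ X * n := by
    intro X T hT
    have := Finset.card_le_mul_card_image_of_maps_to (f := p) (s := T) (t := Finset.Icc 1 X)
      (fun P hP => Finset.mem_Icc.2 ⟨hp P, hT P hP⟩) n ?_
    · rw [Nat.card_Icc, Nat.add_sub_cancel, mul_comm] at this
      exact this
    · intro q _
      exact hfib q _ (fun i hi => (Finset.mem_filter.1 hi).2)
  have hfin : ∀ X : ℕ, {i | p i ≤ X}.Finite := by
    intro X
    by_contra h
    obtain ⟨T, hT, hTc⟩ := (Set.Infinite.exists_subset_card_eq h (X * n + 1))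
    have := hcard X T (fun P hP => hT hP)
    omega
  have h1 := PN_summable_of_card p hp hfin (by
      refine Asymptotics.IsBigO.of_bound n (Eventually.of_forall fun X => ?_)
      have := hcard X (hfin X).toFinset (fun P hP => by simpa using hP)
      simp only [Real.norm_natCast]
      rw [mul_comm]
      exact_mod_cast this) (σ := 3 / 2) (by norm_num)
  refine Summable.of_nonneg_of_le (fun P => ?_) (fun P => ?_) (h1.mul_left 4)
  · have := hw0 P
    positivity
  · have hp0 : (0:ℝ) < p P := by exact_mod_cast hp P
    have hsq : ((p P : ℝ)) ^ 2 ≤ N P := by exact_mod_cast hsq P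
    have hN : (0:ℝ) < N P := lt_of_lt_of_le (by positivity) hsq
    have hlog : w P ≤ (N P : ℝ) ^ (1 / 4 : ℝ) / (1 / 4) :=
      (hw P).trans (Real.log_le_rpow_div hN.le (by norm_num))
    calc w P * (N P : ℝ)⁻¹ ≤ (N P : ℝ) ^ (1 / 4 : ℝ) / (1 / 4) * (N P : ℝ)⁻¹ := by gcongr
      _ = 4 * (N P : ℝ) ^ (-(3 / 4) : ℝ) := by
        rw [← Real.rpow_neg_one, div_mul_eq_mul_div, ← Real.rpow_add hN]
        norm_num
        ring
      _ ≤ 4 * (((p P : ℝ)) ^ 2) ^ (-(3 / 4) : ℝ) := by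
        have := Real.rpow_le_rpow_of_nonpos (by positivity) hsq (show (-(3 / 4) : ℝ) ≤ 0 by norm_num)
        linarith
      _ = 4 * (p P : ℝ) ^ (-(3 / 2) : ℝ) := by
        rw [← Real.rpow_natCast, ← Real.rpow_mul hp0.le]
        norm_num

theorem PN_high_fib (q : ℕ) (T : Finset {P : (Ideal (𝓞 K))⁰ // Prime (P : Ideal (𝓞 K)) ∧ ¬ (PN_N P).Prime})
    (hT : ∀ i ∈ T, PN_p i.1 = q) : T.card ≤ Module.finrank ℚ K := by
  rcases T.eq_empty_or_nonempty with he | ⟨Q, hQ⟩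
  · rw [he, Finset.card_empty]; exact Nat.zero_le _
  have hinj : Function.Injective (fun P : {P : (Ideal (𝓞 K))⁰ // Prime (P : Ideal (𝓞 K)) ∧ ¬ (PN_N P).Prime} => (P.1 : Ideal (𝓞 K))) :=
    Subtype.val_injective.comp Subtype.val_injective
  rw [← Finset.card_map ⟨_, hinj⟩]
  apply PN_primes_over_card q (hT Q hQ ▸ (PN_p_prime Q.1 Q.2.1).1)
  intro P hP
  rw [Finset.mem_map] at hP
  obtain ⟨P', hP', rfl⟩ := hP
  exact ⟨P'.2.1, hT P' hP' ▸ (PN_p_prime P'.1 P'.2.1).2⟩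

theorem PN_high_summable :
    Summable fun P : {P : (Ideal (𝓞 K))⁰ // Prime (P : Ideal (𝓞 K)) ∧ ¬ (PN_N P).Prime} =>
      PN_w P.1 * (PN_N P.1 : ℝ)⁻¹ := by
  refine PN_gen_high (ι := {P : (Ideal (𝓞 K))⁰ // Prime (P : Ideal (𝓞 K)) ∧ ¬ (PN_N P).Prime}) (fun P => PN_N P.1) (fun P => PN_p P.1) (fun P => PN_w P.1) (Module.finrank ℚ K)
    ?_ ?_ ?_ ?_ ?_
  · intro P
    exact (PN_p_prime P.1 P.2.1).1.one_lt.le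
  · intro q T hT
    exact PN_high_fib q T hT
  · intro P
    exact PN_N_sq P.1 P.2.1 P.2.2
  · intro P
    exact PN_w_nonneg P.1
  · intro P
    exact PN_w_le P.1

theorem PN_gen_bdd {ι : Type*} (N : ι → ℕ) (w : ι → ℝ) (hN : ∀ i, 1 ≤ N i) (hw0 : ∀ i, 0 ≤ w i)
    (h2 : Summable fun i => w i * (N i : ℝ) ^ (-2 : ℝ)) (Q : ι → Prop)
    (hQ : Summable fun i : {i // Q i} => w i.1 * (N i.1 : ℝ)⁻¹) (F : Finset ι)
    (c : ι × ℕ → Prop) (a : ι × ℕ → ℝ → ℝ) (ha0 : ∀ q σ, 0 ≤ a q σ)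
    (ha1 : ∀ P σ, 1 < σ → a (P, 0) σ ≤ w P * (N P : ℝ)⁻¹)
    (hc : ∀ P, c (P, 0) → w P ≠ 0 → Q P ∨ P ∈ F)
    (ha2 : ∀ P k σ, 1 < σ → 0 < k → a (P, k) σ ≤ (w P * (N P : ℝ) ^ (-2 : ℝ)) * (2 * (1 / 2 : ℝ) ^ k)) :
    ∃ M : ℝ, ∀ σ : ℝ, 1 < σ → ∑' q, (if c q then a q σ else 0) ≤ M := by
  let z : ι → ℝ := fun P => w P * (N P : ℝ)⁻¹
  have hz : ∀ P, 0 ≤ z P := fun P => by have := hw0 P; simp only [z]; positivity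
  let v : ι → ℝ := fun P => Set.indicator {i | Q i} z P + (if P ∈ F then z P else 0)
  have hv0 : ∀ P, 0 ≤ v P := by
    intro P
    have h1 : 0 ≤ Set.indicator {i | Q i} z P := Set.indicator_nonneg (fun i _ => hz i) P
    have h2 : 0 ≤ (if P ∈ F then z P else 0) := by split_ifs; exacts [hz P, le_rfl]
    exact add_nonneg h1 h2
  have hv : Summable v := by
    refine Summable.add ?_ ?_
    · exact summable_subtype_iff_indicator.1 hQ
    · refine summable_of_ne_finset_zero (s := F) ?_
      intro P hP
      simp [hP]
  let u : ι × ℕ → ℝ := fun q => (w q.1 * (N q.1 : ℝ) ^ (-2 : ℝ)) * (2 * (1 / 2 : ℝ) ^ q.2) +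
    v q.1 * (if q.2 = 0 then 1 else 0)
  have hu : Summable u := by
    refine Summable.add ?_ ?_
    · refine Summable.mul_of_nonneg (f := fun P => w P * (N P : ℝ) ^ (-2 : ℝ)) (g := fun k : ℕ => 2 * (1 / 2 : ℝ) ^ k) h2 (summable_geometric_two.mul_left 2) ?_ ?_
      · intro P
        have := hw0 P
        simp only [Pi.zero_apply]
        positivity
      · intro k
        simp only [Pi.zero_apply]
        positivity
    · refine Summable.mul_of_nonneg (f := v) (g := fun k : ℕ => if k = 0 then (1:ℝ) else 0) hv ?_ hv0 ?_
      · refine summable_of_ne_finset_zero (s := {0}) ?_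
        intro k hk
        simpa using hk
      · intro k
        simp only [Pi.zero_apply]
        split_ifs <;> norm_num
  have hu0 : ∀ q, 0 ≤ u q := by
    intro q
    have := hw0 q.1
    have := hv0 q.1
    simp only [u]
    split_ifs <;> positivity
  refine ⟨∑' q, u q, fun σ hσ => ?_⟩
  have hle : ∀ q : ι × ℕ, (if c q then a q σ else 0) ≤ u q := by
    rintro ⟨P, k⟩
    split_ifs with hC
    swap
    · exact hu0 _
    have hww := hw0 P
    rcases Nat.eq_zero_or_pos k with rfl | hk
    · refine (ha1 P σ hσ).trans ?_
      by_cases hw : w P = 0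
      · rw [hw, zero_mul]; exact hu0 _
      have hvu : v P ≤ u (P, 0) := by
        simp only [u, if_true, mul_one, pow_zero]
        have : 0 ≤ w P * (N P : ℝ) ^ (-2 : ℝ) * 2 := by positivity
        linarith
      refine le_trans ?_ hvu
      change z P ≤ v P
      have h1 : 0 ≤ Set.indicator {i | Q i} z P := Set.indicator_nonneg (fun i _ => hz i) P
      have h2 : 0 ≤ (if P ∈ F then z P else 0) := by split_ifs; exacts [hz P, le_rfl]
      rcases hc P hC hw with h | h
      · have : Set.indicator {i | Q i} z P = z P := Set.indicator_of_mem (s := {i | Q i}) h z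
        simp only [v]
        linarith
      · simp only [v, h, if_true]
        linarith
    · refine (ha2 P k σ hσ hk).trans ?_
      simp only [u, hk.ne', if_false, mul_zero, add_zero]
      exact le_rfl
  refine Summable.tsum_le_tsum hle ?_ hu
  refine Summable.of_nonneg_of_le (fun q => ?_) hle hu
  split_ifs
  exacts [ha0 _ _, le_rfl]

theorem PN_w2_summable : Summable fun P : (Ideal (𝓞 K))⁰ => PN_w P * (PN_N P : ℝ) ^ (-2 : ℝ) := by
  refine Summable.of_nonneg_of_le (fun J => ?_) (fun J => ?_) (PN_logsum (K := K) (σ := 2) (by norm_num))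
  · have := PN_w_nonneg J; positivity
  · have := PN_w_le J; gcongr

theorem PN_a1 (P : (Ideal (𝓞 K))⁰) (σ : ℝ) (hσ : 1 < σ) :
    PN_w P * (PN_N (P ^ (0 + 1)) : ℝ) ^ (-σ) ≤ PN_w P * (PN_N P : ℝ)⁻¹ := by
  have h1 : (1:ℝ) ≤ PN_N P := by exact_mod_cast PN_N_ge P
  rw [zero_add, pow_one, ← Real.rpow_neg_one]
  refine mul_le_mul_of_nonneg_left ?_ (PN_w_nonneg P)
  apply Real.rpow_le_rpow_of_exponent_le h1; linarith

theorem PN_a2 (P : (Ideal (𝓞 K))⁰) (k : ℕ) (σ : ℝ) (hσ : 1 < σ) (hk : 0 < k) :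
    PN_w P * (PN_N (P ^ (k + 1)) : ℝ) ^ (-σ) ≤ (PN_w P * (PN_N P : ℝ) ^ (-2 : ℝ)) * (2 * (1 / 2 : ℝ) ^ k) := by
  have h1 := PN_S_term_le P k 1 hk hσ.le
  refine h1.trans ?_
  have h3 : PN_w P * (PN_N P : ℝ) ^ (-(((1:ℕ) + 1) * σ)) ≤ PN_w P * (PN_N P : ℝ) ^ (-2 : ℝ) := by
    refine mul_le_mul_of_nonneg_left ?_ (PN_w_nonneg P)
    apply Real.rpow_le_rpow_of_exponent_le (by exact_mod_cast PN_N_ge P)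
    push_cast
    linarith
  have h4 : (1 / 2 : ℝ) ^ (k - 1) = 2 * (1 / 2 : ℝ) ^ k := by
    obtain ⟨j, rfl⟩ := Nat.exists_eq_succ_of_ne_zero hk.ne'
    simp only [Nat.succ_eq_add_one, Nat.add_sub_cancel, pow_succ]
    ring
  rw [h4]
  exact mul_le_mul_of_nonneg_right h3 (by positivity)

/-- if a class has only finitely many prime-norm ideals then `PN_SC` is bounded -/
theorem PN_SC_bounded (C : ClassGroup (𝓞 K))
    (hF : {J : (Ideal (𝓞 K))⁰ | ClassGroup.mk0 J = C ∧ (PN_N J).Prime}.Finite) :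
    ∃ M : ℝ, ∀ σ : ℝ, 1 < σ → PN_SC C σ ≤ M := by
  refine PN_gen_bdd (ι := (Ideal (𝓞 K))⁰) PN_N PN_w PN_N_ge PN_w_nonneg PN_w2_summable
    (fun P => Prime (P : Ideal (𝓞 K)) ∧ ¬ (PN_N P).Prime) PN_high_summable hF.toFinset
    (fun q => ClassGroup.mk0 (q.1 ^ (q.2 + 1)) = C) (fun q σ => PN_w q.1 * (PN_N (q.1 ^ (q.2 + 1)) : ℝ) ^ (-σ))
    (fun q σ => mul_nonneg (PN_w_nonneg _) (Real.rpow_nonneg (Nat.cast_nonneg _) _))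
    (fun P σ hσ => PN_a1 P σ hσ) (fun P hC hw => ?_) (fun P k σ hσ hk => PN_a2 P k σ hσ hk)
  by_cases h : (PN_N P).Prime
  · right
    rw [Set.Finite.mem_toFinset]
    refine ⟨?_, h⟩
    dsimp only at hC
    rwa [zero_add, pow_one] at hC
  · exact Or.inl ⟨(PN_w_ne hw).1, h⟩

theorem PN_infinite_of_density (C : ClassGroup (𝓞 K))
    (h : Tendsto (fun σ : ℝ => (σ - 1) * (Fintype.card (ClassGroup (𝓞 K)) * PN_SC C σ)) (𝓝[>] 1) (𝓝 1)) :
    {J : (Ideal (𝓞 K))⁰ | ClassGroup.mk0 J = C ∧ (PN_N J).Prime}.Infinite := by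
  intro hF
  obtain ⟨M, hM⟩ := PN_SC_bounded C hF
  have h1 : Tendsto (fun σ : ℝ => (σ - 1) * (Fintype.card (ClassGroup (𝓞 K)) * M)) (𝓝[>] 1) (𝓝 0) := by
    have : ContinuousAt (fun σ : ℝ => (σ - 1) * (Fintype.card (ClassGroup (𝓞 K)) * M)) 1 := by fun_prop
    have := this.tendsto.mono_left (nhdsWithin_le_nhds (s := Ioi 1))
    simpa using this
  have h2 : (1:ℝ) ≤ 0 := by
    refine le_of_tendsto_of_tendsto h h1 ?_
    filter_upwards [self_mem_nhdsWithin] with σ hσ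
    have hσ' : 1 < σ := hσ
    have : 0 ≤ σ - 1 := by linarith
    have := hM σ hσ'
    gcongr
  linarith

end HighDegree

end P6asec

section P6bsec
section DivSum

open Finset
open scoped Classical

variable {α : Type*} [CommMonoidWithZero α] [IsCancelMulZero α] [UniqueFactorizationMonoid α] [Subsingleton αˣ]

theorem PN_div_coprime (χ : α →* ℝ) {x y : α} (hxy : IsRelPrime x y) (S T U : Finset α)
    (hS : ∀ d, d ∈ S ↔ d ∣ x) (hT : ∀ d, d ∈ T ↔ d ∣ y) (hU : ∀ d, d ∈ U ↔ d ∣ x * y) (hy0 : x * y ≠ 0) :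
    ∑ d ∈ U, χ d = (∑ d ∈ S, χ d) * ∑ d ∈ T, χ d := by
  rw [sum_mul_sum, ← sum_product']
  symm
  refine sum_bij (fun q _ => q.1 * q.2) ?_ ?_ ?_ ?_
  · rintro ⟨d, e⟩ h
    rw [mem_product, hS, hT] at h
    exact (hU _).2 (mul_dvd_mul h.1 h.2)
  · rintro ⟨d, e⟩ h ⟨d', e'⟩ h' heq
    rw [mem_product, hS, hT] at h h'
    dsimp only at h h' heq
    have key : ∀ {d e d' e' : α}, d ∣ x → e' ∣ y → d * e = d' * e' → d ∣ d' := by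
      intro d e d' e' h1 h2 h3
      have hr : IsRelPrime d e' := fun c hc1 hc2 => hxy (hc1.trans h1) (hc2.trans h2)
      exact hr.dvd_of_dvd_mul_right (Dvd.intro _ h3)
    have hd : d = d' := associated_iff_eq.1 (associated_of_dvd_dvd (key h.1 h'.2 heq) (key h'.1 h.2 heq.symm))
    subst hd
    have hd0 : d ≠ 0 := by
      rintro rfl
      exact hy0 (by rw [zero_dvd_iff.1 h.1, zero_mul])
    rw [mul_left_cancel₀ hd0 heq]
  · intro b hb
    obtain ⟨d, e, hd, he, rfl⟩ := exists_dvd_and_dvd_of_dvd_mul ((hU b).1 hb)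
    exact ⟨(d, e), by rw [mem_product, hS, hT]; exact ⟨hd, he⟩, rfl⟩
  · rintro ⟨d, e⟩ h
    rw [map_mul]

theorem PN_div_pow (χ : α →* ℝ) {p : α} (hp : Prime p) (i : ℕ) (S : Finset α)
    (hS : ∀ d, d ∈ S ↔ d ∣ p ^ i) : ∑ d ∈ S, χ d = ∑ j ∈ range (i + 1), χ p ^ j := by
  symm
  refine sum_bij (fun j _ => p ^ j) ?_ ?_ ?_ ?_
  · intro j hj
    rw [hS]
    exact pow_dvd_pow _ (by have := mem_range.1 hj; omega)
  · intro a _ b _ h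
    have h1 : p ^ a ∣ p ^ b := h.dvd
    have h2 : p ^ b ∣ p ^ a := h.symm.dvd
    rw [pow_dvd_pow_iff hp.ne_zero hp.not_unit] at h1 h2
    omega
  · intro b hb
    obtain ⟨j, hj, hb⟩ := (dvd_prime_pow hp i).1 ((hS b).1 hb)
    exact ⟨j, mem_range.2 (by omega), (associated_iff_eq.1 hb).symm⟩
  · intro j _
    rw [map_pow]

theorem PN_div_nonneg (χ : α →* ℝ) (hχ : ∀ a, a ≠ 0 → χ a = 1 ∨ χ a = -1) (a : α) (ha : a ≠ 0) :
    (∀ S : Finset α, (∀ d, d ∈ S ↔ d ∣ a) → 0 ≤ ∑ d ∈ S, χ d) ∧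
    (∀ S : Finset α, (∀ d, d ∈ S ↔ d ∣ a ^ 2) → 1 ≤ ∑ d ∈ S, χ d) := by
  revert ha
  induction a using UniqueFactorizationMonoid.induction_on_coprime with
  | h0 => exact fun h => (h rfl).elim
  | h1 hx =>
    rename_i x
    intro _
    obtain rfl : x = 1 := isUnit_iff_eq_one.1 hx
    have : ∀ S : Finset α, (∀ d, d ∈ S ↔ d ∣ 1) → ∑ d ∈ S, χ d = 1 := by
      intro S hS
      have : S = {1} := by
        ext d
        rw [hS, mem_singleton, ← isUnit_iff_dvd_one, isUnit_iff_eq_one]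
      rw [this, sum_singleton, map_one]
    refine ⟨fun S hS => by rw [this S hS]; norm_num, fun S hS => by rw [this S (by simpa using hS)]⟩
  | hpr i hp =>
    rename_i p
    intro _
    refine ⟨fun S hS => ?_, fun S hS => ?_⟩
    · rw [PN_div_pow χ hp i S hS]
      rcases hχ p hp.ne_zero with h | h <;> rw [h]
      · simp only [one_pow, sum_const, card_range, nsmul_eq_mul]
        positivity
      · rw [neg_one_geom_sum]
        split_ifs <;> norm_num
    · rw [← pow_mul] at hS
      rw [PN_div_pow χ hp _ S hS]
      rcases hχ p hp.ne_zero with h | h <;> rw [h]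
      · simp only [one_pow, sum_const, card_range, nsmul_eq_mul]
        push_cast
        have : (0:ℝ) ≤ i := by positivity
        linarith
      · rw [neg_one_geom_sum, if_neg]
        rw [Nat.not_even_iff_odd]
        exact ⟨i, by ring⟩
  | hcp hxy hx hy =>
    rename_i x y
    intro h0
    have hx0 : x ≠ 0 := left_ne_zero_of_mul h0
    have hy0 : y ≠ 0 := right_ne_zero_of_mul h0
    refine ⟨fun S hS => ?_, fun S hS => ?_⟩
    · have h1 : ∀ d, d ∈ S.filter (· ∣ x) ↔ d ∣ x := fun d => by
        rw [mem_filter, hS]; exact ⟨fun h => h.2, fun h => ⟨h.mul_right _, h⟩⟩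
      have h2 : ∀ d, d ∈ S.filter (· ∣ y) ↔ d ∣ y := fun d => by
        rw [mem_filter, hS]; exact ⟨fun h => h.2, fun h => ⟨h.mul_left _, h⟩⟩
      rw [PN_div_coprime χ hxy _ _ S h1 h2 hS h0]
      exact mul_nonneg ((hx hx0).1 _ h1) ((hy hy0).1 _ h2)
    · rw [mul_pow] at hS
      have h1 : ∀ d, d ∈ S.filter (· ∣ x ^ 2) ↔ d ∣ x ^ 2 := fun d => by
        rw [mem_filter, hS]; exact ⟨fun h => h.2, fun h => ⟨h.mul_right _, h⟩⟩
      have h2 : ∀ d, d ∈ S.filter (· ∣ y ^ 2) ↔ d ∣ y ^ 2 := fun d => by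
        rw [mem_filter, hS]; exact ⟨fun h => h.2, fun h => ⟨h.mul_left _, h⟩⟩
      have hr : IsRelPrime (x ^ 2) (y ^ 2) := hxy.pow
      rw [PN_div_coprime χ hr _ _ S h1 h2 hS (by rw [← mul_pow]; exact pow_ne_zero 2 h0)]
      exact one_le_mul_of_one_le_of_one_le ((hx hx0).2 _ h1) ((hy hy0).2 _ h2)

end DivSum

end P6bsec

section P6csec
section WUpper

open MeasureTheory Set Filter Topology
open scoped Classical

theorem PN_bdd_extend {f : ℝ → ℝ} {B M : ℝ} (hf : ContinuousOn f (Ioi 0)) (h : ∀ t ∈ Ioc (0:ℝ) 1, |f t| ≤ M) :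
    ∃ M' : ℝ, 0 ≤ M' ∧ ∀ t ∈ Ioc (0:ℝ) B, |f t| ≤ M' := by
  obtain ⟨C, hC⟩ := (isCompact_Icc (a := (1:ℝ)) (b := B)).exists_bound_of_continuousOn
    (hf.mono (fun x hx => lt_of_lt_of_le one_pos hx.1))
  refine ⟨max (max M C) 0, le_max_right _ _, fun t ht => ?_⟩
  rcases le_total t 1 with h1 | h1
  · exact (h t ⟨ht.1, h1⟩).trans ((le_max_left _ _).trans (le_max_left _ _))
  · exact (hC t ⟨h1, ht.2⟩).trans ((le_max_right _ _).trans (le_max_left _ _))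

theorem PN_W_upper {Z1 Z : ℝ → ℝ} {B c M M' : ℝ} (hB : 1 ≤ B) (hc : 0 ≤ c) (hZ1c : ContinuousOn Z1 (Ioi 0))
    (hZc : ContinuousOn Z (Ioi 0)) (hZB : ∀ v, B ≤ v → Z v = 0)
    (h1 : ∀ t ∈ Ioc (0:ℝ) 1, |Z1 t - c / t| ≤ M) (h2 : ∀ t ∈ Ioc (0:ℝ) 1, |Z t| ≤ M')
    (hIntg : ∫ v in Ioi (0:ℝ), Z v = 0) :
    ∃ D : ℝ, 0 ≤ D ∧ ∀ t ∈ Ioc (0:ℝ) 1, ∫ u in (t / B)..B, Z1 (t / u) * Z u / u ≤ D * (1 + Real.log (1 / t)) := by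
  have hB0 : 0 < B := by linarith
  obtain ⟨M1, hM10, hM1⟩ := PN_bdd_extend (f := fun t => Z1 t - c / t) (B := B)
    (hZ1c.sub (continuousOn_const.div continuousOn_id (fun x hx => ne_of_gt hx))) h1
  obtain ⟨M2, hM20, hM2⟩ := PN_bdd_extend (f := Z) (B := B) hZc h2
  have hZint : IntegrableOn Z (Ioc 0 B) := by
    haveI : IsFiniteMeasure (volume.restrict (Ioc 0 B)) := ⟨by simp⟩
    refine Integrable.of_bound (μ := volume.restrict (Ioc 0 B)) ?_ M2 ?_
    · exact (hZc.mono Ioc_subset_Ioi_self).aestronglyMeasurable measurableSet_Ioc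
    · filter_upwards [ae_restrict_mem (measurableSet_Ioc (a := (0:ℝ)) (b := B))] with t ht using hM2 t ht
  have h0B : ∫ v in (0:ℝ)..B, Z v = 0 := by
    rw [intervalIntegral.integral_of_le hB0.le]
    refine Eq.trans ?_ hIntg
    refine setIntegral_eq_of_subset_of_forall_diff_eq_zero measurableSet_Ioi Ioc_subset_Ioi_self ?_ |>.symm
    rintro x ⟨hx, hx2⟩
    refine hZB x ?_
    by_contra h
    exact hx2 ⟨hx, by linarith⟩
  have hlogB : 0 ≤ Real.log B := Real.log_nonneg hB
  refine ⟨c * M2 + M1 * M2 * (2 * Real.log B + 1), by positivity, fun t ht => ?_⟩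
  have ht0 := ht.1
  have htB0 : 0 < t / B := by have := ht.1; positivity
  have htB : t / B ≤ B := by
    rw [div_le_iff₀ hB0]
    nlinarith [ht.2]
  have hsub : uIcc (t / B) B ⊆ Ioi 0 := by
    rw [uIcc_of_le htB]; exact fun x hx => lt_of_lt_of_le htB0 hx.1
  have hZi : IntervalIntegrable Z volume (t / B) B := (hZc.mono hsub).intervalIntegrable
  have hZi0 : IntervalIntegrable Z volume 0 (t / B) := by
    rw [intervalIntegrable_iff_integrableOn_Ioc_of_le htB0.le]
    exact hZint.mono_set (Ioc_subset_Ioc_right htB)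
  have hsplit := intervalIntegral.integral_add_adjacent_intervals hZi0 hZi
  have hsmall : |∫ u in (0:ℝ)..(t / B), Z u| ≤ M2 * (t / B) := by
    have := intervalIntegral.norm_integral_le_of_norm_le_const (a := 0) (b := t / B) (f := Z) (C := M2) (by
      intro x hx
      rw [uIoc_of_le htB0.le] at hx
      exact hM2 x ⟨hx.1, hx.2.trans htB⟩)
    rwa [sub_zero, abs_of_pos htB0] at this
  have hinvi : IntervalIntegrable (fun u : ℝ => u⁻¹) volume (t / B) B :=
    (continuousOn_id.inv₀ (fun x hx => ne_of_gt (hsub hx))).intervalIntegrable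
  have hmono : ∫ u in (t / B)..B, Z1 (t / u) * Z u / u ≤ ∫ u in (t / B)..B, (c / t * Z u + M1 * M2 * u⁻¹) := by
    refine intervalIntegral.integral_mono_on htB ?_ ((hZi.const_mul _).add (hinvi.const_mul _)) ?_
    · refine ContinuousOn.intervalIntegrable (ContinuousOn.div (ContinuousOn.mul ?_ (hZc.mono hsub)) continuousOn_id (fun x hx => ne_of_gt (hsub hx)))
      refine hZ1c.comp (continuousOn_const.div continuousOn_id (fun x hx => ne_of_gt (hsub hx))) ?_
      intro x hx
      exact div_pos ht.1 (hsub hx)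
    · intro u hu
      have hu0 : 0 < u := lt_of_lt_of_le htB0 hu.1
      have hE := hM1 (t / u) ⟨div_pos ht.1 hu0, by
        rw [div_le_iff₀ hu0]; have := hu.1; rw [div_le_iff₀ hB0] at this; linarith⟩
      have hZu := hM2 u ⟨hu0, hu.2⟩
      have h3 : (Z1 (t / u) - c / (t / u)) * Z u ≤ M1 * M2 := by
        refine (le_abs_self _).trans ?_
        rw [abs_mul]
        exact mul_le_mul hE hZu (abs_nonneg _) hM10
      have h4 : Z1 (t / u) * Z u / u = c / t * Z u + ((Z1 (t / u) - c / (t / u)) * Z u) * u⁻¹ := by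
        field_simp
        ring
      rw [h4]
      gcongr
  refine hmono.trans ?_
  rw [intervalIntegral.integral_add (hZi.const_mul _) (hinvi.const_mul _), intervalIntegral.integral_const_mul,
    intervalIntegral.integral_const_mul, integral_inv_of_pos htB0 hB0]
  have hlog : Real.log (B / (t / B)) = 2 * Real.log B + Real.log (1 / t) := by
    rw [Real.log_div hB0.ne' htB0.ne', Real.log_div ht.1.ne' hB0.ne', one_div, Real.log_inv]
    ring
  have hlt : 0 ≤ Real.log (1 / t) := by
    apply Real.log_nonneg
    rw [le_div_iff₀ ht.1]; linarith [ht.2]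
  have hmain : c / t * ∫ u in (t / B)..B, Z u ≤ c * M2 := by
    have h5 : ∫ u in (t / B)..B, Z u ≤ M2 * (t / B) := by
      have := (abs_le.1 hsmall).1
      linarith
    have h6 : c / t * ∫ u in (t / B)..B, Z u ≤ c / t * (M2 * (t / B)) := by
      gcongr
    have h7 : c / t * (M2 * (t / B)) = c * M2 / B := by
      field_simp
    rw [h7] at h6
    refine h6.trans (div_le_self (by positivity) hB)
  rw [hlog]
  have h8 : 0 ≤ c * M2 * Real.log (1 / t) := by positivity
  have h9 : 0 ≤ M1 * M2 * (2 * Real.log B * Real.log (1 / t)) := by positivity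
  have h10 : 0 ≤ M1 * M2 := by positivity
  nlinarith

end WUpper

section Kernel

open MeasureTheory Set Filter Topology
open scoped Classical

variable {g : ℝ → ℝ} {B : ℝ}

/-- multiplicative self-convolution kernel -/
noncomputable def PN_K (g : ℝ → ℝ) (x : ℝ) : ℝ := ∫ v in Ioi (0:ℝ), g (x / v) * g v / v

theorem PN_K_nonneg (gnn : ∀ v, 0 ≤ g v) (x : ℝ) : 0 ≤ PN_K g x := by
  refine setIntegral_nonneg measurableSet_Ioi fun v hv => ?_
  have hv' : 0 < v := hv
  have := gnn v
  have := gnn (x / v)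
  positivity

theorem PN_K_zero (hB : 0 < B) (gB : ∀ v, B ≤ v → g v = 0) {x : ℝ} (hx : B * B ≤ x) : PN_K g x = 0 := by
  refine setIntegral_eq_zero_of_forall_eq_zero fun v hv => ?_
  have hv' : 0 < v := hv
  rcases le_total B v with h | h
  · rw [gB v h]; simp
  · rw [gB (x / v)]
    · simp
    · rw [le_div_iff₀ hv']
      nlinarith

theorem PN_K_ge (gc : Continuous g) (g0 : ∀ v ≤ 1 / 4, g v = 0) (gB : ∀ v, B ≤ v → g v = 0) (gnn : ∀ v, 0 ≤ g v)
    {Y : ℝ} (hY : 2 ≤ Y) (hYB : Y ≤ B) (gone : ∀ v ∈ Icc (1 / 2 : ℝ) Y, g v = 1) {x : ℝ} (hx : x ∈ Icc 1 Y) :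
    1 / 2 ≤ PN_K g x := by
  have h1 : PN_K g x = ∫ v in Icc (1 / 4) B, g (x / v) * g v / v := by
    refine setIntegral_eq_of_subset_of_forall_diff_eq_zero measurableSet_Ioi
      (fun v hv => lt_of_lt_of_le (by norm_num) hv.1) ?_
    rintro v ⟨hv, hv2⟩
    have : g v = 0 := by
      by_contra h
      refine hv2 ⟨?_, ?_⟩
      · by_contra h'
        exact h (g0 v (by linarith))
      · by_contra h'
        exact h (gB v (by linarith))
    simp [this]
  have hne : ∀ v ∈ Icc (1 / 4 : ℝ) B, v ≠ 0 := fun v hv => ne_of_gt (lt_of_lt_of_le (by norm_num) hv.1)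
  have hI : IntegrableOn (fun v => g (x / v) * g v / v) (Icc (1 / 4) B) := by
    refine ContinuousOn.integrableOn_Icc ?_
    refine ContinuousOn.div (ContinuousOn.mul ?_ gc.continuousOn) continuousOn_id hne
    exact gc.comp_continuousOn (continuousOn_const.div continuousOn_id hne)
  have hsub : Icc (1:ℝ) 2 ⊆ Icc (1 / 4) B := Icc_subset_Icc (by norm_num) (by linarith)
  rw [h1]
  calc (1 / 2 : ℝ) = ∫ v in Icc (1:ℝ) 2, (1 / 2 : ℝ) := by
        simp; norm_num
    _ ≤ ∫ v in Icc (1:ℝ) 2, g (x / v) * g v / v := by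
        refine setIntegral_mono_on (by simp) (hI.mono_set hsub) measurableSet_Icc fun v hv => ?_
        have hv0 : 0 < v := lt_of_lt_of_le one_pos hv.1
        rw [gone v ⟨by linarith [hv.1], hv.2.trans hY⟩, gone (x / v)]
        · rw [mul_one]
          exact one_div_le_one_div_of_le hv0 hv.2
        · constructor
          · rw [le_div_iff₀ hv0]; linarith [hv.2, hx.1]
          · rw [div_le_iff₀ hv0]; nlinarith [hv.1, hx.2]
    _ ≤ _ := by
        refine setIntegral_mono_set hI ?_ hsub.eventuallyLE
        filter_upwards [ae_restrict_mem measurableSet_Icc] with v hv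
        have : 0 < v := lt_of_lt_of_le (by norm_num) hv.1
        have := gnn v
        have := gnn (x / v)
        simp only [Pi.zero_apply]
        positivity

theorem PN_K_scale (hB : 1 ≤ B) (gB : ∀ v, B ≤ v → g v = 0) {t a d : ℝ} (ht : 0 < t) (ht1 : t ≤ 1) (ha : 1 ≤ a) (hd : 1 ≤ d) :
    ∫ u in (t / B)..B, g (t / u * a) * g (u * d) / u = PN_K g (t * (a * d)) := by
  have hB0 : 0 < B := by linarith
  have htB0 : 0 < t / B := by positivity
  have htB : t / B ≤ B := by
    rw [div_le_iff₀ hB0]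
    nlinarith
  have hd0 : 0 < d := by linarith
  have h1 : ∫ u in (t / B)..B, g (t / u * a) * g (u * d) / u = ∫ u in Ioi (0:ℝ), g (t / u * a) * g (u * d) / u := by
    rw [intervalIntegral.integral_of_le htB]
    refine (setIntegral_eq_of_subset_of_forall_diff_eq_zero measurableSet_Ioi
      (fun v hv => lt_trans htB0 hv.1) ?_).symm
    rintro u ⟨hu, hu2⟩
    have hu0 : 0 < u := hu
    rcases le_or_gt u (t / B) with h | h
    · rw [gB (t / u * a)]
      · simp
      · have : B ≤ t / u := by
          rw [le_div_iff₀ hu0]; rw [le_div_iff₀ hB0] at h; linarith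
        nlinarith
    · have h' : B < u := by
        by_contra h''
        exact hu2 ⟨h, by linarith⟩
      rw [gB (u * d)]
      · simp
      · nlinarith
  rw [h1, PN_K]
  have h2 := integral_comp_mul_right_Ioi (fun v => g (t * (a * d) / v) * g v / v) 0 hd0
  rw [zero_mul, smul_eq_mul] at h2
  have h3 : ∫ v in Ioi (0:ℝ), g (t * (a * d) / v) * g v / v = d * ∫ x in Ioi (0:ℝ), g (t * (a * d) / (x * d)) * g (x * d) / (x * d) := by
    rw [h2, ← mul_assoc d, mul_inv_cancel₀ hd0.ne', one_mul]
  rw [h3, ← integral_const_mul]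
  refine setIntegral_congr_fun measurableSet_Ioi fun u hu => ?_
  have hu0 : 0 < u := hu
  have h4 : t * (a * d) / (u * d) = t / u * a := by field_simp
  rw [h4]
  field_simp

end Kernel

end P6csec

section P6dsec
section WEq

open MeasureTheory Set Filter Topology
open scoped Classical

variable {g : ℝ → ℝ} {B : ℝ} {M : Type*} [CommMonoid M] [IsCancelMul M] {N : M → ℕ}

theorem PN_W_double (hB : 1 ≤ B) (gc : Continuous g) (gB : ∀ v, B ≤ v → g v = 0) (hN : ∀ i, 1 ≤ N i)
    (χ : M → ℝ) {Z1 Z : ℝ → ℝ} {t : ℝ} (ht : t ∈ Ioc (0:ℝ) 1) (S : Finset M)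
    (hZ1 : ∀ u, t / B ≤ u → Z1 u = ∑ i ∈ S, g (u * N i))
    (hZ : ∀ u, t / B ≤ u → Z u = ∑ i ∈ S, χ i * g (u * N i)) :
    ∫ u in (t / B)..B, Z1 (t / u) * Z u / u = ∑ q ∈ S ×ˢ S, χ q.2 * PN_K g (t * (N q.1 * N q.2)) := by
  have hB0 : 0 < B := by linarith
  have ht0 := ht.1
  have htB0 : 0 < t / B := by positivity
  have htB : t / B ≤ B := by
    rw [div_le_iff₀ hB0]
    nlinarith [ht.2]
  have hne : ∀ u ∈ uIcc (t / B) B, u ≠ 0 := by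
    intro u hu
    rw [uIcc_of_le htB] at hu
    exact ne_of_gt (lt_of_lt_of_le htB0 hu.1)
  have h1 : ∫ u in (t / B)..B, Z1 (t / u) * Z u / u =
      ∫ u in (t / B)..B, ∑ q ∈ S ×ˢ S, χ q.2 * (g (t / u * N q.1) * g (u * N q.2) / u) := by
    refine intervalIntegral.integral_congr fun u hu => ?_
    rw [uIcc_of_le htB] at hu
    have hu0 : 0 < u := lt_of_lt_of_le htB0 hu.1
    rw [hZ u hu.1, hZ1 (t / u) (by
      rw [div_le_div_iff_of_pos_left ht0 hB0 hu0]; exact hu.2), Finset.sum_mul_sum, ← Finset.sum_product', Finset.sum_div]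
    refine Finset.sum_congr rfl fun q _ => ?_
    ring
  rw [h1, intervalIntegral.integral_finset_sum]
  · refine Finset.sum_congr rfl fun q _ => ?_
    rw [intervalIntegral.integral_const_mul, PN_K_scale hB gB ht0 ht.2 (by exact_mod_cast hN q.1) (by exact_mod_cast hN q.2)]
  · intro q _
    refine ContinuousOn.intervalIntegrable ?_
    refine ContinuousOn.const_mul (s := uIcc (t / B) B) ?_ (χ q.2)
    refine ContinuousOn.div (ContinuousOn.mul ?_ ?_) continuousOn_id hne
    · exact gc.comp_continuousOn ((continuousOn_const.div continuousOn_id hne).mul continuousOn_const)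
    · exact gc.comp_continuousOn (continuousOn_id.mul continuousOn_const)

theorem PN_W_eq (hB : 1 ≤ B) (gB : ∀ v, B ≤ v → g v = 0) (hN : ∀ i, 1 ≤ N i)
    (hNm : ∀ i j, N (i * j) = N i * N j)
    (χ : M → ℝ) {t : ℝ} (ht : t ∈ Ioc (0:ℝ) 1) (S : Finset M) (X : ℕ) (hX : B * B / t ≤ X) (hS : ∀ i, i ∈ S ↔ N i ≤ X) :
    ∑ q ∈ S ×ˢ S, χ q.2 * PN_K g (t * (N q.1 * N q.2)) =
      ∑ J ∈ S, (∑ d ∈ S.filter (· ∣ J), χ d) * PN_K g (t * N J) := by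
  have hB0 : 0 < B := by linarith
  have h1 : ∑ q ∈ S ×ˢ S, χ q.2 * PN_K g (t * (N q.1 * N q.2)) =
      ∑ q ∈ (S ×ˢ S).filter (fun q => q.1 * q.2 ∈ S), χ q.2 * PN_K g (t * (N q.1 * N q.2)) := by
    symm
    refine Finset.sum_filter_of_ne ?_
    rintro q - hne
    by_contra hq
    apply hne
    rw [hS, not_le, hNm] at hq
    rw [PN_K_zero hB0 gB, mul_zero]
    rw [div_le_iff₀ ht.1] at hX
    have : (X : ℝ) ≤ N q.1 * N q.2 := by exact_mod_cast hq.le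
    nlinarith [ht.1]
  rw [h1, ← Finset.sum_fiberwise_of_maps_to (s := (S ×ˢ S).filter (fun q => q.1 * q.2 ∈ S)) (t := S) (g := fun q : M × M => q.1 * q.2) (fun q hq => (Finset.mem_filter.1 hq).2)]
  refine Finset.sum_congr rfl fun J hJ => ?_
  rw [Finset.sum_mul]
  refine Finset.sum_bij (fun q _ => q.2) ?_ ?_ ?_ ?_
  · intro q hq
    simp only [Finset.mem_filter, Finset.mem_product] at hq
    rw [Finset.mem_filter]
    exact ⟨hq.1.1.2, Dvd.intro_left _ hq.2⟩
  · rintro ⟨a, d⟩ hq ⟨a', d'⟩ hq' h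
    simp only [Finset.mem_filter, Finset.mem_product] at hq hq'
    dsimp only at h
    subst h
    have := hq.2.trans hq'.2.symm
    rw [mul_left_inj] at this
    rw [this]
  · intro d hd
    rw [Finset.mem_filter] at hd
    obtain ⟨a, ha⟩ := hd.2
    have haN : N a ≤ X := by
      refine le_trans ?_ ((hS J).1 hJ)
      rw [ha, hNm]
      exact Nat.le_mul_of_pos_left _ (hN d)
    refine ⟨(a, d), ?_, rfl⟩
    simp only [Finset.mem_filter, Finset.mem_product]
    have : a * d = J := by rw [ha, mul_comm]
    exact ⟨⟨⟨(hS a).2 haN, hd.1⟩, this ▸ hJ⟩, this⟩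
  · rintro ⟨a, d⟩ hq
    simp only [Finset.mem_filter, Finset.mem_product] at hq
    rw [← hq.2, hNm]
    push_cast
    rfl

theorem PN_W_lower (hB : 1 ≤ B) (gc : Continuous g) (g0 : ∀ v ≤ 1 / 4, g v = 0) (gB : ∀ v, B ≤ v → g v = 0) (gnn : ∀ v, 0 ≤ g v)
    {n : ℕ} (hn : 1 ≤ n) (hYB : (4:ℝ) ^ n ≤ B) (gone : ∀ v ∈ Icc (1 / 2 : ℝ) (4 ^ n), g v = 1)
    (hN : ∀ i, 1 ≤ N i) (hNm : ∀ i j, N (i * j) = N i * N j)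
    (χ : M → ℝ) (hχ0 : ∀ J, ∀ T : Finset M, (∀ d, d ∈ T ↔ d ∣ J) → 0 ≤ ∑ d ∈ T, χ d)
    (b : ℕ → M) (hb : ∀ m, 1 ≤ m → N (b m) = m ^ (2 * n))
    (hχ1 : ∀ m, 1 ≤ m → ∀ T : Finset M, (∀ d, d ∈ T ↔ d ∣ b m) → 1 ≤ ∑ d ∈ T, χ d)
    (m : ℕ) (hm : 1 ≤ m) (S : Finset M) (X : ℕ) (hX : B * B * (m:ℝ) ^ (2 * n) ≤ X) (hS : ∀ i, i ∈ S ↔ N i ≤ X) :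
    (m : ℝ) / 2 ≤ ∑ J ∈ S, (∑ d ∈ S.filter (· ∣ J), χ d) * PN_K g (((m:ℝ) ^ (2 * n))⁻¹ * N J) := by
  have hdiv : ∀ J ∈ S, ∀ d, d ∈ S.filter (· ∣ J) ↔ d ∣ J := by
    intro J hJ d
    rw [Finset.mem_filter]
    refine ⟨fun h => h.2, fun h => ⟨?_, h⟩⟩
    obtain ⟨a, rfl⟩ := h
    rw [hS] at hJ ⊢
    rw [hNm] at hJ
    exact (Nat.le_mul_of_pos_right _ (hN a)).trans hJ
  have hm0 : (1:ℝ) ≤ m := by exact_mod_cast hm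
  have hmp : (0:ℝ) < (m:ℝ) ^ (2 * n) := by positivity
  have h4 : (4:ℝ) ≤ 4 ^ n := le_self_pow₀ (by norm_num) (by omega)
  have hle : ∀ k ∈ Finset.Ico m (2 * m), (k : ℝ) ^ (2 * n) ≤ 4 ^ n * (m:ℝ) ^ (2 * n) := by
    intro k hk
    have hk2 : (k:ℝ) ≤ 2 * m := by exact_mod_cast (Finset.mem_Ico.1 hk).2.le
    calc (k:ℝ) ^ (2 * n) ≤ (2 * m : ℝ) ^ (2 * n) := by gcongr
      _ = 4 ^ n * (m:ℝ) ^ (2 * n) := by rw [mul_pow, pow_mul]; norm_num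
  have hinj : Set.InjOn b (Finset.Ico m (2 * m)) := by
    intro k hk l hl h
    have hk1 := hm.trans (Finset.mem_Ico.1 hk).1
    have hl1 := hm.trans (Finset.mem_Ico.1 hl).1
    have := hb k hk1
    rw [h, hb l hl1] at this
    exact (Nat.pow_left_injective (by omega : 2 * n ≠ 0) this).symm
  have hsub : (Finset.Ico m (2 * m)).image b ⊆ S := by
    intro J hJ
    obtain ⟨k, hk, rfl⟩ := Finset.mem_image.1 hJ
    rw [hS, hb k (hm.trans (Finset.mem_Ico.1 hk).1)]
    have h1 := hle k hk
    have : ((k ^ (2 * n) : ℕ) : ℝ) ≤ X := by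
      push_cast
      refine h1.trans (le_trans ?_ hX)
      have : (4:ℝ) ^ n ≤ B * B := by nlinarith
      gcongr
    exact_mod_cast this
  calc (m : ℝ) / 2 = ∑ k ∈ Finset.Ico m (2 * m), (1 / 2 : ℝ) := by
        rw [Finset.sum_const, Nat.card_Ico, nsmul_eq_mul, two_mul, Nat.add_sub_cancel]
        ring
    _ ≤ ∑ k ∈ Finset.Ico m (2 * m), (∑ d ∈ S.filter (· ∣ b k), χ d) * PN_K g (((m:ℝ) ^ (2 * n))⁻¹ * N (b k)) := by
        refine Finset.sum_le_sum fun k hk => ?_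
        have hk1 := hm.trans (Finset.mem_Ico.1 hk).1
        have hkS : b k ∈ S := hsub (Finset.mem_image_of_mem _ hk)
        have e1 := hχ1 k hk1 _ (hdiv _ hkS)
        have e2 : 1 / 2 ≤ PN_K g (((m:ℝ) ^ (2 * n))⁻¹ * N (b k)) := by
          refine PN_K_ge gc g0 gB gnn (by linarith) hYB gone ?_
          rw [hb k hk1]
          push_cast
          rw [inv_mul_eq_div]
          constructor
          · rw [one_le_div hmp]
            have : (m:ℝ) ≤ k := by exact_mod_cast (Finset.mem_Ico.1 hk).1
            gcongr
          · rw [div_le_iff₀ hmp]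
            exact hle k hk
        nlinarith
    _ = ∑ J ∈ (Finset.Ico m (2 * m)).image b, (∑ d ∈ S.filter (· ∣ J), χ d) * PN_K g (((m:ℝ) ^ (2 * n))⁻¹ * N J) :=
        (Finset.sum_image (f := fun J => (∑ d ∈ S.filter (· ∣ J), χ d) * PN_K g (((m:ℝ) ^ (2 * n))⁻¹ * N J)) hinj).symm
    _ ≤ _ := Finset.sum_le_sum_of_subset_of_nonneg hsub
        (fun J hJ _ => mul_nonneg (hχ0 J _ (hdiv J hJ)) (PN_K_nonneg gnn _))

/-- the contradiction, in abstract form -/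
theorem PN_quad_abs (hB : 1 ≤ B) (gc : Continuous g) (g0 : ∀ v ≤ 1 / 4, g v = 0) (gB : ∀ v, B ≤ v → g v = 0) (gnn : ∀ v, 0 ≤ g v)
    {n : ℕ} (hn : 1 ≤ n) (hYB : (4:ℝ) ^ n ≤ B) (gone : ∀ v ∈ Icc (1 / 2 : ℝ) (4 ^ n), g v = 1)
    (hN : ∀ i, 1 ≤ N i) (hNm : ∀ i j, N (i * j) = N i * N j) (hfin : ∀ X : ℕ, {i | N i ≤ X}.Finite)
    (χ : M → ℝ) (hχ0 : ∀ J, ∀ T : Finset M, (∀ d, d ∈ T ↔ d ∣ J) → 0 ≤ ∑ d ∈ T, χ d)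
    (b : ℕ → M) (hb : ∀ m, 1 ≤ m → N (b m) = m ^ (2 * n))
    (hχ1 : ∀ m, 1 ≤ m → ∀ T : Finset M, (∀ d, d ∈ T ↔ d ∣ b m) → 1 ≤ ∑ d ∈ T, χ d)
    {c E E' : ℝ} (hc : 0 ≤ c)
    (h1 : ∀ t ∈ Ioc (0:ℝ) 1, ‖PN_T N g (fun _ => 1) t - c / t‖ ≤ E)
    (h2 : ∀ t ∈ Ioc (0:ℝ) 1, ‖PN_T N g (fun i => (χ i : ℂ)) t‖ ≤ E') :
    mellin (PN_T N g (fun i => (χ i : ℂ))) 1 ≠ 0 := by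
  intro hmel
  have hB0 : 0 < B := by linarith
  let R1 : ℝ → ℝ := fun t => ∑' i, g (t * N i)
  let R : ℝ → ℝ := fun t => ∑' i, χ i * g (t * N i)
  have hR1 : ∀ t, PN_T N g (fun _ => 1) t = (R1 t : ℂ) := by
    intro t
    simp only [PN_T, R1, Complex.ofReal_tsum, one_mul]
  have hR : ∀ t, PN_T N g (fun i => (χ i : ℂ)) t = (R t : ℂ) := by
    intro t
    simp only [PN_T, R, Complex.ofReal_tsum, Complex.ofReal_mul]
  have hc1 : ContinuousOn R1 (Ioi 0) := by
    have := Complex.continuous_re.comp_continuousOn (PN_T_continuousOn hfin hB0 gc gB (fun _ => 1))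
    refine this.congr fun t _ => ?_
    simp only [Function.comp, hR1, Complex.ofReal_re]
  have hc2 : ContinuousOn R (Ioi 0) := by
    have := Complex.continuous_re.comp_continuousOn (PN_T_continuousOn hfin hB0 gc gB (fun i => (χ i : ℂ)))
    refine this.congr fun t _ => ?_
    simp only [Function.comp, hR, Complex.ofReal_re]
  have hRB : ∀ v, B ≤ v → R v = 0 := by
    intro v hv
    have := PN_T_zero hN hB0 gB (fun i => (χ i : ℂ)) hv
    rw [hR] at this
    exact_mod_cast this
  have hIntg : ∫ v in Ioi (0:ℝ), R v = 0 := by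
    have : mellin (PN_T N g (fun i => (χ i : ℂ))) 1 = ((∫ v in Ioi (0:ℝ), R v : ℝ) : ℂ) := by
      rw [mellin, ← integral_complex_ofReal]
      refine setIntegral_congr_fun measurableSet_Ioi fun t _ => ?_
      simp [hR]
    rw [this] at hmel
    exact_mod_cast hmel
  obtain ⟨D, hD0, hD⟩ := PN_W_upper (M := E) (M' := E') hB hc hc1 hc2 hRB (fun t ht => by
      have := h1 t ht
      rw [hR1] at this
      rw [← Real.norm_eq_abs, ← Complex.norm_real]
      push_cast
      exact this) (fun t ht => by
      have := h2 t ht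
      rwa [hR, Complex.norm_real] at this) hIntg
  have key : ∀ m : ℕ, 1 ≤ m → (m : ℝ) / 2 ≤ D * (1 + 2 * n * Real.log m) := by
    intro m hm
    have hm0 : (1:ℝ) ≤ m := by exact_mod_cast hm
    have hmp : (0:ℝ) < (m:ℝ) ^ (2 * n) := by positivity
    set t : ℝ := ((m:ℝ) ^ (2 * n))⁻¹ with htdef
    have ht : t ∈ Ioc (0:ℝ) 1 := ⟨by positivity, inv_le_one_of_one_le₀ (one_le_pow₀ hm0)⟩
    have htB0 : 0 < t / B := div_pos ht.1 hB0
    have hu := hD t ht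
    have hX : B * B / t ≤ (⌈B / (t / B)⌉₊ : ℝ) := by
      refine le_trans (le_of_eq ?_) (Nat.le_ceil _)
      have := ht.1
      field_simp
    have hS : ∀ i, i ∈ (hfin ⌈B / (t / B)⌉₊).toFinset ↔ N i ≤ ⌈B / (t / B)⌉₊ := by
      intro i
      rw [Set.Finite.mem_toFinset, mem_setOf_eq]
    rw [PN_W_double hB gc gB hN χ ht _ (fun u hu => by
        have := PN_T_eq_sum hfin hB0 gB (fun _ => 1) htB0 hu
        rw [hR1] at this
        simp only [one_mul] at this
        exact_mod_cast this) (fun u hu => by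
        have := PN_T_eq_sum hfin hB0 gB (fun i => (χ i : ℂ)) htB0 hu
        rw [hR] at this
        exact_mod_cast this),
      PN_W_eq hB gB hN hNm χ ht _ _ hX hS] at hu
    have hl := PN_W_lower hB gc g0 gB gnn hn hYB gone hN hNm χ hχ0 b hb hχ1 m hm _ _ (by
      rw [htdef, div_inv_eq_mul] at hX
      exact hX) hS
    refine hl.trans (hu.trans (le_of_eq ?_))
    rw [htdef, one_div, inv_inv, Real.log_pow]
    push_cast
    ring
  have hlo : Tendsto (fun m : ℕ => (D * (1 + 2 * n * Real.log m)) / m) atTop (𝓝 0) := by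
    have e1 : Tendsto (fun x : ℝ => Real.log x / x) atTop (𝓝 0) := Real.isLittleO_log_id_atTop.tendsto_div_nhds_zero
    have e2 : Tendsto (fun x : ℝ => D * (x⁻¹ + 2 * n * (Real.log x / x))) atTop (𝓝 (D * (0 + 2 * n * 0))) :=
      (tendsto_inv_atTop_zero.add (e1.const_mul _)).const_mul D
    simp only [mul_zero, add_zero] at e2
    refine (e2.comp tendsto_natCast_atTop_atTop).congr fun m => ?_
    simp only [Function.comp]
    ring
  have : (1 / 2 : ℝ) ≤ 0 := by
    refine ge_of_tendsto hlo ?_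
    filter_upwards [eventually_ge_atTop 1] with m hm
    have hm0 : (1:ℝ) ≤ m := by exact_mod_cast hm
    rw [le_div_iff₀ (by linarith)]
    linarith [key m hm]
  norm_num at this

end WEq

end P6dsec

section P6esec
section Final

open MeasureTheory Set Filter Topology NumberField
open scoped Classical nonZeroDivisors

variable {K : Type*} [Field K] [NumberField K]

theorem PN_quad_real {ψ : AddChar (Additive (ClassGroup (𝓞 K))) ℂ} (h : ψ⁻¹ = ψ) (J : (Ideal (𝓞 K))⁰) :
    PN_chi ψ J = 1 ∨ PN_chi ψ J = -1 := by
  rw [← mul_self_eq_one_iff]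
  have h1 : (ψ * ψ⁻¹) (Additive.ofMul (ClassGroup.mk0 J)) = 1 := by rw [mul_inv_cancel]; rfl
  rw [h] at h1
  exact h1

/-- real version of a quadratic class group character -/
noncomputable def PN_qc (ψ : AddChar (Additive (ClassGroup (𝓞 K))) ℂ) (J : (Ideal (𝓞 K))⁰) : ℝ := (PN_chi ψ J).re

theorem PN_qc_coe {ψ : AddChar (Additive (ClassGroup (𝓞 K))) ℂ} (h : ψ⁻¹ = ψ) (J : (Ideal (𝓞 K))⁰) :
    ((PN_qc ψ J : ℝ) : ℂ) = PN_chi ψ J := by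
  unfold PN_qc
  rcases PN_quad_real h J with h | h <;> rw [h] <;> simp

theorem PN_qc_val {ψ : AddChar (Additive (ClassGroup (𝓞 K))) ℂ} (h : ψ⁻¹ = ψ) (J : (Ideal (𝓞 K))⁰) :
    PN_qc ψ J = 1 ∨ PN_qc ψ J = -1 := by
  unfold PN_qc
  rcases PN_quad_real h J with h | h <;> rw [h] <;> simp

theorem PN_qc_mul {ψ : AddChar (Additive (ClassGroup (𝓞 K))) ℂ} (h : ψ⁻¹ = ψ) (I J : (Ideal (𝓞 K))⁰) :
    PN_qc ψ (I * J) = PN_qc ψ I * PN_qc ψ J := by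
  have : ((PN_qc ψ (I * J) : ℝ) : ℂ) = ((PN_qc ψ I * PN_qc ψ J : ℝ) : ℂ) := by
    rw [Complex.ofReal_mul, PN_qc_coe h, PN_qc_coe h, PN_qc_coe h, map_mul]
  exact_mod_cast this

/-- extension by zero to all ideals -/
noncomputable def PN_ext (ψ : AddChar (Additive (ClassGroup (𝓞 K))) ℂ) (h : ψ⁻¹ = ψ) : Ideal (𝓞 K) →* ℝ where
  toFun I := if hI : I ∈ (Ideal (𝓞 K))⁰ then PN_qc ψ ⟨I, hI⟩ else 0
  map_one' := by
    rw [dif_pos (one_mem _)]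
    have : PN_chi ψ ⟨1, one_mem _⟩ = 1 := map_one (PN_chi ψ)
    unfold PN_qc
    rw [this]
    simp
  map_mul' I J := by
    by_cases hI : I ∈ (Ideal (𝓞 K))⁰
    · by_cases hJ : J ∈ (Ideal (𝓞 K))⁰
      · rw [dif_pos hI, dif_pos hJ, dif_pos (mul_mem hI hJ), ← PN_qc_mul h]
        rfl
      · rw [dif_neg hJ, mul_zero, dif_neg]
        exact fun hh => hJ (mem_nonZeroDivisors_of_ne_zero (right_ne_zero_of_mul (nonZeroDivisors.ne_zero hh)))
    · rw [dif_neg hI, zero_mul, dif_neg]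
      exact fun hh => hI (mem_nonZeroDivisors_of_ne_zero (left_ne_zero_of_mul (nonZeroDivisors.ne_zero hh)))

theorem PN_ext_coe (ψ : AddChar (Additive (ClassGroup (𝓞 K))) ℂ) (h : ψ⁻¹ = ψ) (J : (Ideal (𝓞 K))⁰) :
    PN_ext ψ h (J : Ideal (𝓞 K)) = PN_qc ψ J := by
  change (if hI : (J : Ideal (𝓞 K)) ∈ (Ideal (𝓞 K))⁰ then PN_qc ψ ⟨J, hI⟩ else 0) = _
  rw [dif_pos J.2]

theorem PN_dvd_iff (d : Ideal (𝓞 K)) (J : (Ideal (𝓞 K))⁰) :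
    d ∣ (J : Ideal (𝓞 K)) ↔ ∃ e : (Ideal (𝓞 K))⁰, e ∣ J ∧ (e : Ideal (𝓞 K)) = d := by
  constructor
  · rintro ⟨e, he⟩
    have hne : d * e ≠ 0 := he ▸ nonZeroDivisors.ne_zero J.2
    refine ⟨⟨d, mem_nonZeroDivisors_of_ne_zero (left_ne_zero_of_mul hne)⟩,
      ⟨⟨e, mem_nonZeroDivisors_of_ne_zero (right_ne_zero_of_mul hne)⟩, Subtype.ext he⟩, rfl⟩
  · rintro ⟨e, ⟨f, rfl⟩, rfl⟩
    exact ⟨f, rfl⟩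

theorem PN_qc_sum (ψ : AddChar (Additive (ClassGroup (𝓞 K))) ℂ) (h : ψ⁻¹ = ψ) (J : (Ideal (𝓞 K))⁰)
    (T : Finset (Ideal (𝓞 K))⁰) (hT : ∀ d, d ∈ T ↔ d ∣ J) :
    ∃ S : Finset (Ideal (𝓞 K)), (∀ d, d ∈ S ↔ d ∣ (J : Ideal (𝓞 K))) ∧ ∑ d ∈ S, PN_ext ψ h d = ∑ d ∈ T, PN_qc ψ d := by
  refine ⟨T.map ⟨Subtype.val, Subtype.val_injective⟩, fun d => ?_, ?_⟩
  · rw [PN_dvd_iff, Finset.mem_map]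
    constructor
    · rintro ⟨e, he, rfl⟩
      exact ⟨e, (hT e).1 he, rfl⟩
    · rintro ⟨e, he, rfl⟩
      exact ⟨e, (hT e).2 he, rfl⟩
  · rw [Finset.sum_map]
    exact Finset.sum_congr rfl fun d _ => PN_ext_coe ψ h d

theorem PN_ext_val (ψ : AddChar (Additive (ClassGroup (𝓞 K))) ℂ) (h : ψ⁻¹ = ψ) (I : Ideal (𝓞 K)) (hI : I ≠ 0) :
    PN_ext ψ h I = 1 ∨ PN_ext ψ h I = -1 := by
  have := PN_ext_coe ψ h ⟨I, mem_nonZeroDivisors_of_ne_zero hI⟩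
  dsimp only at this
  rw [this]
  exact PN_qc_val h _

theorem PN_qc_nonneg (ψ : AddChar (Additive (ClassGroup (𝓞 K))) ℂ) (h : ψ⁻¹ = ψ) (J : (Ideal (𝓞 K))⁰)
    (T : Finset (Ideal (𝓞 K))⁰) (hT : ∀ d, d ∈ T ↔ d ∣ J) : 0 ≤ ∑ d ∈ T, PN_qc ψ d := by
  obtain ⟨S, hS, hs⟩ := PN_qc_sum ψ h J T hT
  rw [← hs]
  exact (PN_div_nonneg (PN_ext ψ h) (PN_ext_val ψ h) J (nonZeroDivisors.ne_zero J.2)).1 S hS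

theorem PN_qc_one_le (ψ : AddChar (Additive (ClassGroup (𝓞 K))) ℂ) (h : ψ⁻¹ = ψ) (J : (Ideal (𝓞 K))⁰)
    (T : Finset (Ideal (𝓞 K))⁰) (hT : ∀ d, d ∈ T ↔ d ∣ J ^ 2) : 1 ≤ ∑ d ∈ T, PN_qc ψ d := by
  obtain ⟨S, hS, hs⟩ := PN_qc_sum ψ h (J ^ 2) T hT
  rw [← hs]
  exact (PN_div_nonneg (PN_ext ψ h) (PN_ext_val ψ h) J (nonZeroDivisors.ne_zero J.2)).2 S
    (by simpa using hS)

/-- the principal ideal `(m)` -/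
noncomputable def PN_m (K : Type*) [Field K] [NumberField K] (m : ℕ) : (Ideal (𝓞 K))⁰ :=
  if h : m ≠ 0 then ⟨Ideal.span {(m : 𝓞 K)}, mem_nonZeroDivisors_of_ne_zero (by
    rw [Ne, Ideal.zero_eq_bot, Ideal.span_singleton_eq_bot]
    exact_mod_cast h)⟩ else 1

theorem PN_m_norm (m : ℕ) (hm : 1 ≤ m) : PN_N (PN_m K m ^ 2) = m ^ (2 * Module.finrank ℚ K) := by
  rw [PN_N_pow, PN_m, dif_pos (by omega), PN_N, PN_norm_nat, ← pow_mul, mul_comm]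

theorem PN_hquad {g : ℝ → ℝ} {B : ℝ} (hB : 1 ≤ B) (hg : ContDiff ℝ (⊤ : ℕ∞) g) (g0 : ∀ v ≤ 1 / 4, g v = 0)
    (gB : ∀ v, B ≤ v → g v = 0) (gnn : ∀ v, 0 ≤ g v) (g1 : g 1 ≠ 0)
    (hYB : (4:ℝ) ^ (Module.finrank ℚ K) ≤ B) (gone : ∀ v ∈ Icc (1 / 2 : ℝ) (4 ^ (Module.finrank ℚ K)), g v = 1)
    (ψ : AddChar (Additive (ClassGroup (𝓞 K))) ℂ) (hψ0 : ψ ≠ 0) (hψ : ψ⁻¹ = ψ) :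
    mellin (PN_T PN_N g (PN_chi ψ)) 1 ≠ 0 := by
  obtain ⟨c, hc, hcount⟩ := PN_class_count (K := K) hg g0 gB gnn g1
  have hB0 : 0 < B := by linarith
  obtain ⟨E, hE⟩ := PN_chi_bound hB0 gB hcount (0 : AddChar (Additive (ClassGroup (𝓞 K))) ℂ)
  obtain ⟨E', hE'⟩ := PN_chi_bound hB0 gB hcount ψ
  have hfun : (fun J : (Ideal (𝓞 K))⁰ => ((PN_qc ψ J : ℝ) : ℂ)) = PN_chi ψ := funext (PN_qc_coe hψ)
  have hone : (PN_chi (0 : AddChar (Additive (ClassGroup (𝓞 K))) ℂ) : (Ideal (𝓞 K))⁰ → ℂ) = fun _ => 1 := by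
    funext J
    rw [PN_chi_apply, AddChar.zero_apply]
  rw [AddChar.sum_eq_zero_iff_ne_zero.2 hψ0] at hE'
  have hcard : (∑ C, (0 : AddChar (Additive (ClassGroup (𝓞 K))) ℂ) C) = ((Fintype.card (Additive (ClassGroup (𝓞 K))) : ℝ) : ℂ) := by
    simp
  rw [hone, hcard] at hE
  have key := PN_quad_abs (M := (Ideal (𝓞 K))⁰) (N := PN_N) hB hg.continuous g0 gB gnn
    (n := Module.finrank ℚ K) Module.finrank_pos hYB gone PN_N_ge PN_N_mul PN_hfin (PN_qc ψ)
    (fun J T hT => PN_qc_nonneg ψ hψ J T hT) (fun m => PN_m K m ^ 2) (fun m hm => PN_m_norm m hm)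
    (fun m _ T hT => PN_qc_one_le ψ hψ (PN_m K m) T hT)
    (c := c * (Fintype.card (Additive (ClassGroup (𝓞 K))) : ℝ)) (E := E) (E' := E') (by positivity)
    (fun t ht => by
      have := hE t ht
      push_cast at this ⊢
      exact this)
    (fun t ht => by
      have := hE' t ht
      rw [hfun]
      simpa using this)
  rw [hfun] at key
  exact key

theorem PN_main (C : ClassGroup (𝓞 K)) :
    {J : (Ideal (𝓞 K))⁰ | ClassGroup.mk0 J = C ∧ (PN_N J).Prime}.Infinite := by
  set Y : ℝ := (4:ℝ) ^ (Module.finrank ℚ K) with hY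
  have hY1 : (1:ℝ) ≤ Y := one_le_pow₀ (by norm_num)
  let g : ℝ → ℝ := fun v => Real.smoothTransition (4 * v - 1) * Real.smoothTransition (Y + 1 - v)
  have hB : (1:ℝ) ≤ Y + 1 := by linarith
  have hg : ContDiff ℝ (⊤ : ℕ∞) g :=
    (Real.smoothTransition.contDiff.comp (by fun_prop)).mul (Real.smoothTransition.contDiff.comp (by fun_prop))
  have g0 : ∀ v ≤ 1 / 4, g v = 0 := by
    intro v hv
    simp only [g]
    rw [Real.smoothTransition.zero_of_nonpos (by linarith), zero_mul]
  have gB : ∀ v, Y + 1 ≤ v → g v = 0 := by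
    intro v hv
    simp only [g]
    rw [Real.smoothTransition.zero_of_nonpos (x := Y + 1 - v) (by linarith), mul_zero]
  have gnn : ∀ v, 0 ≤ g v := fun v =>
    mul_nonneg (Real.smoothTransition.nonneg _) (Real.smoothTransition.nonneg _)
  have gone : ∀ v ∈ Icc (1 / 2 : ℝ) Y, g v = 1 := by
    intro v hv
    simp only [g]
    rw [Real.smoothTransition.one_of_one_le (by linarith [hv.1]), Real.smoothTransition.one_of_one_le (by linarith [hv.2]), one_mul]
  have g1 : g 1 ≠ 0 := by
    rw [gone 1 ⟨by norm_num, hY1⟩]; exact one_ne_zero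
  exact PN_infinite_of_density C (PN_class_density hB hg g0 gB gnn g1
    (fun ψ h0 h => PN_hquad hB hg g0 gB gnn g1 (by linarith) gone ψ h0 h) C)

end Final

end P6esec


open scoped nonZeroDivisors

/-- In a number field that is Galois over ℚ, every ideal class contains infinitely
many integral ideals of prime absolute norm. -/
theorem infinite_prime_norm_ideals_in_class
    (K : Type*) [Field K] [NumberField K] [IsGalois ℚ K]
    (I : (Ideal (NumberField.RingOfIntegers K))⁰) :
    {J : (Ideal (NumberField.RingOfIntegers K))⁰ |
      ClassGroup.mk0 J = ClassGroup.mk0 I ∧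
        (Ideal.absNorm (J : Ideal (NumberField.RingOfIntegers K))).Prime}.Infinite := by
  exact PN_main (K := K) (ClassGroup.mk0 I)
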